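/- arXiv:2508.03479 — 5 statements merged into one kernel-verified Lean document; each statement's English description precedes it below -/
import Mathlib

section
/- Let G be a finite group and let H be a subgroup of G. Then |{x ∈ G : H ∩ H^x ≠ 1}| / |G| ≤ Σ_C |C ∩ H|² / |C|, where the sum (of rational numbers) is over all conjugacy classes C of G whose elements have prime order. -/
lemma fib_aux {G : Type*} [Group G] [Fintype G] [DecidableEq G] (S : Finset G) (a b : G)
    (hb : IsConj a b) (hS : ∀ g, g ∈ S ↔ IsConj a g) :
    (Finset.univ.filter (fun x : G => x * a * x⁻¹ = b)).card * S.card = Fintype.card G := by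
  have h1 : (Finset.univ : Finset G).card =
      ∑ c ∈ S, (Finset.univ.filter (fun x : G => x * a * x⁻¹ = c)).card := by
    apply Finset.card_eq_sum_card_fiberwise
    intro x _
    exact (hS _).2 (isConj_iff.2 ⟨x, rfl⟩)
  rw [← Finset.card_univ, h1, mul_comm]
  symm
  apply Finset.sum_const_nat
  intro c hc
  obtain ⟨d, hd⟩ := isConj_iff.1 (hb.symm.trans ((hS c).1 hc))
  refine Finset.card_bij' (fun x _ => d⁻¹ * x) (fun x _ => d * x) ?_ ?_ ?_ ?_
  · intro x hx
    simp only [Finset.mem_filter, Finset.mem_univ, true_and] at hx ⊢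
    have : b = d⁻¹ * c * d := by rw [← hd]; group
    rw [this, ← hx]; group
  · intro x hx
    simp only [Finset.mem_filter, Finset.mem_univ, true_and] at hx ⊢
    rw [← hd, ← hx]; group
  · intro x _; group
  · intro x _; group

/-- For a finite group `G` and a subgroup `H`, the probability that a uniformly random
`x ∈ G` has `H ⊓ H^x ≠ 1` is at most `∑_C |C ∩ H|² / |C|`, the sum running over the
conjugacy classes `C` of `G` all of whose elements have prime order. -/
theorem stmt5 {G : Type*} [Group G] [Finite G] (H : Subgroup G) :
    (Nat.card {x : G | H ⊓ Subgroup.map (MulAut.conj x⁻¹).toMonoidHom H ≠ ⊥} : ℚ)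
        / (Nat.card G : ℚ)
      ≤ ∑ᶠ (C : ConjClasses G) (_ : ∀ g ∈ C.carrier, (orderOf g).Prime),
          (Nat.card (C.carrier ∩ (H : Set G) : Set G) : ℚ) ^ 2
            / (Nat.card C.carrier : ℚ) := by
  classical
  have := Fintype.ofFinite G
  have := Fintype.ofFinite (ConjClasses G)
  set P : Finset (ConjClasses G) :=
    Finset.univ.filter (fun C => ∀ g ∈ C.carrier, (orderOf g).Prime) with hP
  let K : ConjClasses G → Finset G := fun C => Finset.univ.filter (fun g => g ∈ C.carrier)
  let L : ConjClasses G → Finset G :=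
    fun C => Finset.univ.filter (fun g => g ∈ C.carrier ∩ (H : Set G))
  let F : G → G → Finset G := fun a b => Finset.univ.filter (fun x : G => x * a * x⁻¹ = b)
  have hK : ∀ C : ConjClasses G, Nat.card C.carrier = (K C).card := by
    intro C
    rw [Nat.subtype_card (K C)]
    intro x; simp [K]
  have hL : ∀ C : ConjClasses G, Nat.card (C.carrier ∩ (H : Set G) : Set G) = (L C).card := by
    intro C
    rw [Nat.subtype_card (L C)]
    intro x; simp [L]
  have hG : (0 : ℚ) < Nat.card G := by exact_mod_cast Nat.card_pos
  have hsum : ∑ᶠ (C : ConjClasses G) (_ : ∀ g ∈ C.carrier, (orderOf g).Prime),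
          (Nat.card (C.carrier ∩ (H : Set G) : Set G) : ℚ) ^ 2
            / (Nat.card C.carrier : ℚ) = ∑ C ∈ P, ((L C).card : ℚ) ^ 2 / ((K C).card : ℚ) := by
    rw [← finsum_mem_finset_eq_sum]
    simp only [hK, hL, hP, Finset.mem_filter, Finset.mem_univ, true_and]
  rw [hsum, div_le_iff₀ hG]
  set B : Finset G := Finset.univ.filter
    (fun x => H ⊓ Subgroup.map (MulAut.conj x⁻¹).toMonoidHom H ≠ ⊥) with hB
  have hBc : Nat.card {x : G | H ⊓ Subgroup.map (MulAut.conj x⁻¹).toMonoidHom H ≠ ⊥}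
      = B.card := by
    apply Nat.subtype_card
    intro x; simp [hB]
  rw [hBc]
  have hsub : B ⊆ P.biUnion fun C => (L C).biUnion fun a => (L C).biUnion fun b => F a b := by
    intro x hx
    simp only [hB, Finset.mem_filter, Finset.mem_univ, true_and] at hx
    set I := H ⊓ Subgroup.map (MulAut.conj x⁻¹).toMonoidHom H with hI
    have hne : Nat.card I ≠ 1 := fun h => hx (Subgroup.card_eq_one.1 h)
    obtain ⟨p, hp, hpd⟩ := Nat.exists_prime_and_dvd hne
    haveI := Fact.mk hp
    obtain ⟨⟨a, ha⟩, hao⟩ := exists_prime_orderOf_dvd_card' p hpd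
    rw [Subgroup.orderOf_mk] at hao
    obtain ⟨ha1, b, hb, hab⟩ := Subgroup.mem_inf.1 ha
    have hab' : x * a * x⁻¹ = b := by
      rw [← hab]; simp [MulAut.conj_apply]; group
    simp only [Finset.mem_biUnion]
    have hconj : IsConj a b := isConj_iff.2 ⟨x, hab'⟩
    refine ⟨ConjClasses.mk a, ?_, a, ?_, b, ?_, ?_⟩
    · simp only [hP, Finset.mem_filter, Finset.mem_univ, true_and]
      intro g hg
      rw [ConjClasses.mem_carrier_iff_mk_eq, ConjClasses.mk_eq_mk_iff_isConj] at hg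
      obtain ⟨c, hc⟩ := isConj_iff.1 hg
      have : orderOf g = orderOf a := by
        rw [← hc]
        exact (MulAut.conj c).orderOf_eq g ▸ rfl
      rw [this, hao]; exact hp
    · simp only [L, Finset.mem_filter, Finset.mem_univ, true_and]
      exact ⟨ConjClasses.mem_carrier_mk, ha1⟩
    · simp only [L, Finset.mem_filter, Finset.mem_univ, true_and]
      refine ⟨?_, hb⟩
      rw [ConjClasses.mem_carrier_iff_mk_eq, ConjClasses.mk_eq_mk_iff_isConj]
      exact hconj.symm
    · simp [F, hab']
  have h1 : B.card ≤ ∑ C ∈ P, ∑ a ∈ L C, ∑ b ∈ L C, (F a b).card := by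
    refine (Finset.card_le_card hsub).trans (Finset.card_biUnion_le.trans ?_)
    refine Finset.sum_le_sum fun C _ => Finset.card_biUnion_le.trans ?_
    exact Finset.sum_le_sum fun a _ => Finset.card_biUnion_le
  have h1' : (B.card : ℚ) ≤ ∑ C ∈ P, ∑ a ∈ L C, ∑ b ∈ L C, ((F a b).card : ℚ) := by
    exact_mod_cast h1
  refine h1'.trans (le_of_eq ?_)
  rw [Finset.sum_mul]
  refine Finset.sum_congr rfl fun C _ => ?_
  have h2 : ∀ a ∈ L C, ∀ b ∈ L C, ((F a b).card : ℚ) = (Nat.card G : ℚ) / (K C).card := by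
    intro a ha b hb
    simp only [L, Finset.mem_filter, Finset.mem_univ, true_and] at ha hb
    have ha' := ConjClasses.mem_carrier_iff_mk_eq.1 ha.1
    have hb' := ConjClasses.mem_carrier_iff_mk_eq.1 hb.1
    have hk : 0 < (K C).card := Finset.card_pos.2 ⟨a, by simpa [K] using ha.1⟩
    have hk' : ((K C).card : ℚ) ≠ 0 := by exact_mod_cast hk.ne'
    rw [eq_div_iff hk', Nat.card_eq_fintype_card]
    have := fib_aux (K C) a b (ConjClasses.mk_eq_mk_iff_isConj.1 (ha'.trans hb'.symm)) (by
      intro g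
      simp only [K, Finset.mem_filter, Finset.mem_univ, true_and]
      rw [ConjClasses.mem_carrier_iff_mk_eq, ← ha', eq_comm, ConjClasses.mk_eq_mk_iff_isConj])
    exact_mod_cast this
  rw [Finset.sum_congr rfl fun a ha => Finset.sum_congr rfl fun b hb => h2 a ha b hb]
  simp only [Finset.sum_const, nsmul_eq_mul]
  ring
end

section
/- Let G be a finite group, let p be a prime and let H be a Sylow p-subgroup of G. If there exists some x₀ ∈ G with H ∩ H^{x₀} = 1, then |{x ∈ G : H ∩ H^x ≠ 1}| ≤ |G| − |H| · |N_G(H)|, where N_G(H) is the normalizer of H in G. -/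
theorem stmt6_triv_iff {G : Type*} [Group G] (H : Subgroup G) (x : G) :
    H ⊓ Subgroup.map (MulAut.conj x⁻¹).toMonoidHom H = ⊥ ↔
      ∀ k ∈ H, x * k * x⁻¹ ∈ H → k = 1 := by
  rw [Subgroup.eq_bot_iff_forall]
  constructor
  · intro h k hk hx
    apply h k
    refine ⟨hk, x * k * x⁻¹, hx, ?_⟩
    simp [mul_assoc]
  · rintro h k ⟨hk, m, hm, rfl⟩
    apply h _ hk
    have : x * (MulAut.conj x⁻¹).toMonoidHom m * x⁻¹ = m := by simp [mul_assoc]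
    rw [this]
    exact hm

/-- Let `G` be a finite group, `p` a prime and `H` a Sylow `p`-subgroup of `G`. If
`H ⊓ H^{x₀} = 1` for some `x₀ ∈ G`, then
`|{x ∈ G : H ⊓ H^x ≠ 1}| ≤ |G| - |H|·|N_G(H)|`. -/
theorem stmt6 {G : Type*} [Group G] [Finite G]
    (p : ℕ) (hp : p.Prime) (H : Sylow p G)
    (h0 : ∃ x₀ : G, (H : Subgroup G) ⊓
      Subgroup.map (MulAut.conj x₀⁻¹).toMonoidHom (H : Subgroup G) = ⊥) :
    (Nat.card {x : G | (H : Subgroup G) ⊓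
        Subgroup.map (MulAut.conj x⁻¹).toMonoidHom (H : Subgroup G) ≠ ⊥} : ℤ)
      ≤ (Nat.card G : ℤ) -
          (Nat.card (H : Subgroup G) : ℤ) *
            (Nat.card (Subgroup.normalizer ((H : Subgroup G) : Set G)) : ℤ) := by
  classical
  have : Fact p.Prime := ⟨hp⟩
  obtain ⟨x, hx⟩ := h0
  rw [stmt6_triv_iff] at hx
  set S : Set G := {x : G | (H : Subgroup G) ⊓
        Subgroup.map (MulAut.conj x⁻¹).toMonoidHom (H : Subgroup G) ≠ ⊥} with hS
  let N := Subgroup.normalizer ((H : Subgroup G) : Set G)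
  have hN : ∀ n ∈ N, ∀ k, k ∈ (H : Subgroup G) ↔ n * k * n⁻¹ ∈ (H : Subgroup G) :=
    fun n hn k => Subgroup.mem_normalizer_iff.1 hn k
  let f : Prod (H : Subgroup G) N → (Sᶜ : Set G) := fun a => ⟨a.1 * x * a.2, by
    simp only [hS, Set.mem_compl_iff, Set.mem_ofPred_eq, not_not, ne_eq]
    rw [stmt6_triv_iff]
    intro k hk hk2
    have h1 := (hN a.2 a.2.2 k).1 hk
    have h2 : x * ((a.2 : G) * k * (a.2 : G)⁻¹) * x⁻¹ ∈ (H : Subgroup G) := by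
      have := mul_mem (mul_mem (inv_mem a.1.2) hk2) a.1.2
      convert this using 1
      group
    have h3 := hx _ h1 h2
    simpa using h3⟩
  have hf : Function.Injective f := by
    rintro ⟨⟨h, hh⟩, ⟨n, hn⟩⟩ ⟨⟨h', hh'⟩, ⟨n', hn'⟩⟩ he
    have he : h * x * n = h' * x * n' := congrArg Subtype.val he
    have hg : x * (n' * n⁻¹) * x⁻¹ = h'⁻¹ * h := by
      have : n' = x⁻¹ * h'⁻¹ * (h * x * n) := by rw [he]; group
      rw [this]; group
    have hgH : x * (n' * n⁻¹) * x⁻¹ ∈ (H : Subgroup G) := by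
      rw [hg]; exact mul_mem (inv_mem hh') hh
    have hm : n' * n⁻¹ ∈ N := mul_mem hn' (inv_mem hn)
    have key := (H.isPGroup'.map (MulAut.conj x⁻¹).toMonoidHom).inf_normalizer_sylow H
    have hm2 : n' * n⁻¹ ∈ (H : Subgroup G).map (MulAut.conj x⁻¹).toMonoidHom :=
      ⟨_, hgH, by simp [mul_assoc]⟩
    have hm3 := key.le ⟨hm2, hm⟩
    have h1 := hx _ hm3.2 hgH
    have hnn : n' = n := mul_inv_eq_one.1 h1
    subst hnn
    have : h = h' := by simpa using he
    subst this
    rfl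
  have hc := Nat.card_le_card_of_injective f hf
  rw [Nat.card_prod] at hc
  have ht : Nat.card S + Nat.card (Sᶜ : Set G) = Nat.card G := by
    rw [Nat.card_coe_set_eq, Nat.card_coe_set_eq]
    exact Set.ncard_add_ncard_compl S
  zify at hc ht
  linarith
end

section
/- Let r be a prime, let q = r^f be a power of r, let n ≥ 2, let G = PSL_n(q), and let H be a Sylow r-subgroup of G. Then there exists an element x ∈ G such that H ∩ H^x = 1. -/
open Matrix

namespace Stmt15Aux

variable {n : ℕ} {F : Type*} [Field F]

lemma diag_mul {M N : Matrix (Fin n) (Fin n) F} (hM : ∀ i j, j < i → M i j = 0)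
    (hN : ∀ i j, j < i → N i j = 0) (i : Fin n) : (M * N) i i = M i i * N i i := by
  rw [Matrix.mul_apply]
  refine Finset.sum_eq_single i ?_ (by simp)
  intro k _ hk
  rcases lt_or_gt_of_ne hk with h | h
  · rw [hM i k h, zero_mul]
  · rw [hN k i h, mul_zero]

/-- upper unitriangular matrices -/
def U (n : ℕ) (F : Type*) [Field F] : Subgroup (SpecialLinearGroup (Fin n) F) where
  carrier := {g | (∀ i j, j < i → g.1 i j = 0) ∧ ∀ i, g.1 i i = 1}
  one_mem' := by
    refine ⟨fun i j h => ?_, fun i => ?_⟩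
    · simp [Matrix.one_apply, h.ne']
    · simp
  mul_mem' := by
    rintro a b ⟨ha, ha'⟩ ⟨hb, hb'⟩
    refine ⟨fun i j h => ?_, fun i => ?_⟩
    · exact Matrix.BlockTriangular.mul (b := id) (M := a.1) (N := b.1)
        (fun i j h => ha i j h) (fun i j h => hb i j h) h
    · have := diag_mul ha hb i
      rw [ha', hb', mul_one] at this
      exact this
  inv_mem' := by
    rintro a ⟨ha, ha'⟩
    have h1 : (a.1) * (a⁻¹).1 = 1 := by
      exact congrArg Subtype.val (mul_inv_cancel a)
    have e : (a⁻¹).1 = (a.1)⁻¹ := (Matrix.inv_eq_right_inv h1).symm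
    letI : Invertible a.1 := ⟨(a⁻¹).1, congrArg Subtype.val (inv_mul_cancel a), h1⟩
    have hb : ∀ i j, j < i → (a⁻¹).1 i j = 0 := by
      intro i j h
      rw [e]
      exact Matrix.blockTriangular_inv_of_blockTriangular (b := id) (M := a.1)
        (fun i j h => ha i j h) h
    refine ⟨hb, fun i => ?_⟩
    have := diag_mul ha hb i
    rw [ha', one_mul, h1] at this
    rw [← this]; simp

/-- lower unitriangular matrices -/
def L (n : ℕ) (F : Type*) [Field F] : Subgroup (SpecialLinearGroup (Fin n) F) where
  carrier := {g | g.transpose ∈ U n F}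
  one_mem' := by
    have : (1 : SpecialLinearGroup (Fin n) F).transpose = 1 := by
      apply Subtype.ext; simp [SpecialLinearGroup.transpose]
    simp [this, one_mem]
  mul_mem' := by
    intro a b ha hb
    have : (a * b).transpose = b.transpose * a.transpose :=
      Subtype.ext (Matrix.transpose_mul a.1 b.1)
    simp only [Set.mem_ofPred_eq] at *
    rw [this]
    exact mul_mem hb ha
  inv_mem' := by
    intro a ha
    have : (a⁻¹).transpose = (a.transpose)⁻¹ := by
      apply eq_inv_of_mul_eq_one_left
      have h : (a⁻¹).transpose * a.transpose = (a * a⁻¹).transpose := by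
        apply Subtype.ext
        change (a⁻¹).1ᵀ * a.1ᵀ = (a.1 * (a⁻¹).1)ᵀ
        rw [Matrix.transpose_mul]
      rw [h, mul_inv_cancel]
      apply Subtype.ext; simp [SpecialLinearGroup.transpose]
    simp only [Set.mem_ofPred_eq] at *
    rw [this]
    exact inv_mem ha

/-- the matrix with given entries above the diagonal -/
def mat (v : (j : Fin n) → Fin j → F) : Matrix (Fin n) (Fin n) F :=
  fun i j => if h : i < j then v j ⟨i, h⟩ else if i = j then 1 else 0

lemma mat_low (v : (j : Fin n) → Fin j → F) (i j : Fin n) (h : j < i) : mat v i j = 0 := by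
  simp [mat, h.le, h.ne', not_lt.2 h.le]

lemma mat_diag (v : (j : Fin n) → Fin j → F) (i : Fin n) : mat v i i = 1 := by
  simp [mat]

lemma mat_det (v : (j : Fin n) → Fin j → F) : (mat v).det = 1 := by
  rw [Matrix.det_of_isUpperTriangular (fun i j h => mat_low v i j h)]
  simp [mat_diag]

def eqv (n : ℕ) (F : Type*) [Field F] : U n F ≃ ((j : Fin n) → Fin j → F) where
  toFun g j i := g.1.1 ⟨i, i.2.trans j.2⟩ j
  invFun v := ⟨⟨mat v, mat_det v⟩, mat_low v, mat_diag v⟩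
  left_inv := by
    rintro ⟨g, hg, hg'⟩
    apply Subtype.ext; apply Subtype.ext
    ext i j
    change mat (fun j i => g.1 ⟨i, i.2.trans j.2⟩ j) i j = g.1 i j
    rcases lt_trichotomy i j with h | h | h
    · simp [mat, h]
    · subst h; rw [mat_diag, hg']
    · rw [mat_low _ _ _ h, hg _ _ h]
  right_inv := by
    intro v
    ext j i
    have : (⟨i, i.2.trans j.2⟩ : Fin n) < j := i.2
    change mat v _ _ = _
    simp [mat, this]

def eqvL (n : ℕ) (F : Type*) [Field F] : L n F ≃ U n F where
  toFun g := ⟨g.1.transpose, g.2⟩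
  invFun g := ⟨g.1.transpose, g.2⟩
  left_inv _ := rfl
  right_inv _ := rfl

lemma card_U [Fintype F] : Nat.card (U n F) = ∏ i : Fin n, Fintype.card F ^ (i : ℕ) := by
  rw [Nat.card_congr (eqv n F), Nat.card_pi]
  simp

lemma isSylow [Fintype F] (r f : ℕ) [hr : Fact r.Prime] (hf : 0 < f)
    (hF : Fintype.card F = r ^ f)
    (K : Subgroup (SpecialLinearGroup (Fin n) F))
    (hK : Nat.card K = ∏ i : Fin n, Fintype.card F ^ (i : ℕ)) :
    ∃ P : Sylow r (ProjectiveSpecialLinearGroup (Fin n) F),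
      (P : Subgroup (ProjectiveSpecialLinearGroup (Fin n) F)) =
        K.map (QuotientGroup.mk' (Subgroup.center (SpecialLinearGroup (Fin n) F))) := by
  have hp : IsPGroup r K := by
    apply IsPGroup.of_card (n := f * ∑ i : Fin n, (i : ℕ))
    rw [hK, hF, Finset.prod_pow_eq_pow_sum, pow_mul]
  have hGL : Nat.card (GL (Fin n) F) =
      Nat.card K * ∏ i : Fin n, (Fintype.card F ^ (n - i) - 1) := by
    rw [Matrix.card_GL_field, hK, ← Finset.prod_mul_distrib]
    refine Finset.prod_congr rfl fun i _ => ?_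
    rw [Nat.mul_sub, ← pow_add, mul_one, Nat.add_sub_cancel' i.2.le]
  have hd : Nat.card (SpecialLinearGroup (Fin n) F) ∣ Nat.card (GL (Fin n) F) :=
    Subgroup.card_dvd_of_injective SpecialLinearGroup.toGL SpecialLinearGroup.toGL_injective
  rw [hGL, ← K.card_mul_index] at hd
  have hd' := Nat.dvd_of_mul_dvd_mul_left Nat.card_pos hd
  have hi : ¬ r ∣ K.index := by
    intro h
    obtain ⟨i, -, hi⟩ := (Prime.dvd_finsetProd_iff hr.out.prime _).1 (h.trans hd')
    have h2 : r ∣ Fintype.card F ^ (n - i : ℕ) := by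
      rw [hF, ← pow_mul]
      exact dvd_pow_self _ (Nat.mul_pos hf (Nat.sub_pos_of_lt i.2)).ne'
    have h3 : 1 ≤ Fintype.card F ^ (n - i : ℕ) := Nat.one_le_pow _ _ Fintype.card_pos
    have h4 := (Nat.dvd_sub h2 hi)
    rw [Nat.sub_sub_self h3] at h4
    exact hr.out.one_lt.ne' (Nat.dvd_one.1 h4)
  exact ⟨(hp.toSylow hi).mapSurjective (QuotientGroup.mk'_surjective _), rfl⟩

lemma inter : (U n F).map (QuotientGroup.mk' (Subgroup.center (SpecialLinearGroup (Fin n) F))) ⊓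
    (L n F).map (QuotientGroup.mk' (Subgroup.center (SpecialLinearGroup (Fin n) F))) = ⊥ := by
  rw [eq_bot_iff]
  rintro _ ⟨⟨u, hu, rfl⟩, ⟨l, hl, h⟩⟩
  have hz : l⁻¹ * u ∈ Subgroup.center (SpecialLinearGroup (Fin n) F) := QuotientGroup.eq.1 h
  obtain ⟨c, -, hc⟩ := Matrix.SpecialLinearGroup.mem_center_iff.1 hz
  have hul : u.1 = l.1 * scalar (Fin n) c := by
    rw [hc]
    have : u = l * (l⁻¹ * u) := by group
    exact congrArg Subtype.val this
  have : u = 1 := by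
    apply Subtype.ext
    ext i j
    rcases lt_trichotomy i j with h | h | h
    · have h0 : l.1 i j = 0 := hl.1 j i h
      rw [hul]
      simp [Matrix.scalar_apply, Matrix.mul_diagonal, h0, h.ne]
    · subst h; rw [hu.2]; simp
    · rw [hu.1 _ _ h]; simp [h.ne']
  rw [this, map_one]
  exact one_mem _

end Stmt15Aux

/-- If `q = r^f` for a prime `r`, `G = PSLₙ(q)` with `n ≥ 2`, and `H` is a Sylow
`r`-subgroup of `G`, then `H ⊓ H^x = 1` for some `x ∈ G`. -/
theorem stmt15 (r f n q : ℕ) (hr : r.Prime) (hf : 0 < f) (hq : q = r ^ f) (hn : 2 ≤ n)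
    (F : Type*) [Field F] [Fintype F] (hF : Fintype.card F = q)
    (H : Sylow r (ProjectiveSpecialLinearGroup (Fin n) F)) :
    ∃ x : ProjectiveSpecialLinearGroup (Fin n) F,
      (H : Subgroup (ProjectiveSpecialLinearGroup (Fin n) F)) ⊓
        Subgroup.map (MulAut.conj x⁻¹).toMonoidHom
          (H : Subgroup (ProjectiveSpecialLinearGroup (Fin n) F)) = ⊥ := by
  haveI : Fact r.Prime := ⟨hr⟩
  subst hq
  obtain ⟨P, hP⟩ := Stmt15Aux.isSylow r f hf hF (Stmt15Aux.U n F) Stmt15Aux.card_U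
  obtain ⟨Q, hQ⟩ := Stmt15Aux.isSylow r f hf hF (Stmt15Aux.L n F)
    (by rw [Nat.card_congr (Stmt15Aux.eqvL n F), Stmt15Aux.card_U])
  have hPQ := Stmt15Aux.inter (n := n) (F := F)
  rw [← hP, ← hQ] at hPQ
  obtain ⟨g, rfl⟩ := MulAction.exists_smul_eq (ProjectiveSpecialLinearGroup (Fin n) F) H P
  obtain ⟨k, rfl⟩ := MulAction.exists_smul_eq (ProjectiveSpecialLinearGroup (Fin n) F) H Q
  refine ⟨k⁻¹ * g, ?_⟩
  rw [eq_bot_iff]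
  rintro y ⟨hy, ⟨z, hz, hzy⟩⟩
  have hzy' : (k⁻¹ * g)⁻¹ * z * (k⁻¹ * g) = y := by
    rw [← hzy]; simp [mul_assoc]
  have m1 : g * y * g⁻¹ ∈ ((g • H : Sylow r _) : Subgroup (ProjectiveSpecialLinearGroup (Fin n) F)) :=
    ⟨y, hy, by simp⟩
  have m2 : g * y * g⁻¹ ∈ ((k • H : Sylow r _) : Subgroup (ProjectiveSpecialLinearGroup (Fin n) F)) :=
    ⟨z, hz, by rw [← hzy']; simp [mul_assoc]⟩
  have m : g * y * g⁻¹ ∈ (⊥ : Subgroup (ProjectiveSpecialLinearGroup (Fin n) F)) := by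
    rw [← hPQ]; exact ⟨m1, m2⟩
  rw [Subgroup.mem_bot] at m ⊢
  simpa using m
end

section
/- Let q ≥ 7 be a Mersenne prime (i.e. q = 2^k − 1 is prime for some integer k), let G = PSL_2(q), and let H be a Sylow 2-subgroup of G. Then |{x ∈ G : H ∩ H^x ≠ 1}| / |G| = 1/2 + (q+3)/(2q(q−1)). In particular Q_2(G) > 1/2. -/
open Matrix

namespace PSLQ
open Finset

section count
set_option linter.unusedSectionVars false
variable {F : Type*} [Field F] [Fintype F] [DecidableEq F]

lemma chi_sum (h2 : ringChar F ≠ 2) (h1 : ¬ IsSquare (-1 : F)) (m : F) (hm : m ≠ 0) :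
    ∑ a : F, quadraticChar F a * quadraticChar F (m - a) = 1 := by
  have hj := jacobiSum_nontrivial_inv (quadraticChar_ne_one h2)
  rw [(quadraticChar_isQuadratic F).inv, quadraticChar_neg_one_iff_not_isSquare.2 h1] at hj
  rw [jacobiSum] at hj
  rw [← Equiv.sum_comp (Equiv.mulLeft₀ m hm)]
  rw [show (1:ℤ) = - -1 by norm_num, ← hj]
  refine Finset.sum_congr rfl fun x _ => ?_
  have : m - m * x = m * (1 - x) := by ring
  simp only [Equiv.mulLeft₀_apply]
  rw [this, map_mul, map_mul]
  have := quadraticChar_sq_one hm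
  linear_combination (quadraticChar F x * quadraticChar F (1 - x)) * this

lemma card_sq (h2 : ringChar F ≠ 2) (a : F) :
    ((univ.filter fun x : F => x ^ 2 = a).card : ℤ) = quadraticChar F a + 1 := by
  rw [← quadraticChar_card_sqrts h2]
  congr 2
  ext; simp

lemma aniso (h1 : ¬ IsSquare (-1 : F)) {x y : F} (h : x ^ 2 + y ^ 2 = 0) : x = 0 ∧ y = 0 := by
  have hy : y = 0 := by
    by_contra hy
    exact h1 ⟨x / y, by field_simp; linear_combination -h⟩
  subst hy
  simpa using h

lemma card_circle (h2 : ringChar F ≠ 2) (h1 : ¬ IsSquare (-1 : F)) (m : F) :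
    (univ.filter fun w : F × F => w.1 ^ 2 + w.2 ^ 2 = m).card =
      if m = 0 then 1 else Fintype.card F + 1 := by
  split_ifs with hm
  · subst hm
    rw [Finset.card_eq_one]
    refine ⟨(0, 0), ?_⟩
    ext ⟨x, y⟩
    simp only [mem_filter, mem_univ, true_and, mem_singleton, Prod.mk.injEq]
    exact ⟨fun h => aniso h1 h, fun h => by simp [h]⟩
  · have : ((univ.filter fun w : F × F => w.1 ^ 2 + w.2 ^ 2 = m).card : ℤ) =
        ∑ a : F, (quadraticChar F a + 1) * (quadraticChar F (m - a) + 1) := by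
      rw [Finset.card_eq_sum_card_fiberwise (f := fun w : F × F => w.1 ^ 2) (t := univ)
        (fun _ _ => by simp)]
      push_cast
      refine Finset.sum_congr rfl fun a _ => ?_
      rw [← card_sq h2, ← card_sq h2, ← Nat.cast_mul, ← Finset.card_product]
      congr 2
      ext ⟨x, y⟩
      simp only [mem_filter, mem_univ, true_and, mem_product]
      constructor
      · rintro ⟨h, h'⟩
        exact ⟨h', by linear_combination h - h'⟩
      · rintro ⟨h, h'⟩
        exact ⟨by linear_combination h + h', h⟩
    have e : ∀ a : F, (quadraticChar F a + 1) * (quadraticChar F (m - a) + 1) =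
      quadraticChar F a * quadraticChar F (m - a) + quadraticChar F a + quadraticChar F (m - a) + 1 :=
      fun a => by ring
    simp only [e, Finset.sum_add_distrib] at this
    have e2 : ∑ x : F, quadraticChar F (m - x) = ∑ x : F, quadraticChar F x :=
      Equiv.sum_comp (Equiv.subLeft m) (quadraticChar F)
    rw [chi_sum h2 h1 m hm, e2,
      quadraticChar_sum_zero h2] at this
    simp at this
    zify
    rw [this]; ring

lemma four_ne (h2 : ringChar F ≠ 2) : (4 : F) ≠ 0 := by
  have := Ring.two_ne_zero h2
  rw [show (4 : F) = 2 * 2 by norm_num]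
  exact mul_ne_zero this this

lemma card_bad (h2 : ringChar F ≠ 2) (h1 : ¬ IsSquare (-1 : F)) :
    2 * (univ.filter fun m : F => m * (m - 4) ≠ 0 ∧ IsSquare (m * (m - 4))).card + 3 =
      Fintype.card F := by
  have h4 := four_ne h2
  have hs := chi_sum h2 h1 4 h4
  have hneg : quadraticChar F (-1) = -1 := quadraticChar_neg_one_iff_not_isSquare.2 h1
  have key : ∀ m : F, (2 * (if m * (m - 4) ≠ 0 ∧ IsSquare (m * (m - 4)) then 1 else 0) : ℤ) =
      1 - (if m = 0 then 1 else 0) - (if m = 4 then 1 else 0)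
       - quadraticChar F m * quadraticChar F (4 - m) := by
    intro m
    have e1 : quadraticChar F m * quadraticChar F (4 - m) = - quadraticChar F (m * (m - 4)) := by
      rw [show 4 - m = (-1) * (m - 4) by ring, map_mul, map_mul, hneg]; ring
    rw [e1]
    by_cases h0 : m = 0
    · subst h0; simp [h4.symm]
    by_cases h40 : m = 4
    · subst h40; simp [h4]
    have hne : m * (m - 4) ≠ 0 := mul_ne_zero h0 (sub_ne_zero.2 h40)
    by_cases hsq : IsSquare (m * (m - 4))
    · rw [(quadraticChar_one_iff_isSquare hne).2 hsq]
      simp [hne, hsq, h0, h40]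
    · rw [quadraticChar_neg_one_iff_not_isSquare.2 hsq]
      simp [hsq, h0, h40]
  have := Finset.sum_congr (rfl : (univ : Finset F) = univ) fun m _ => key m
  rw [← Finset.mul_sum, Finset.sum_sub_distrib, Finset.sum_sub_distrib, Finset.sum_sub_distrib, hs,
    Finset.sum_boole] at this
  simp only [sum_const, card_univ, Finset.sum_ite_eq', mem_univ, if_true] at this
  simp at this
  zify
  simp only [ne_eq, mul_eq_zero, not_or]
  linarith

abbrev SL (F : Type*) [Field F] := Matrix.SpecialLinearGroup (Fin 2) F

lemma det_eq (x : SL F) : x 0 0 * x 1 1 - x 0 1 * x 1 0 = 1 := by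
  have := x.2
  rwa [Matrix.det_fin_two] at this

/-- The sum `(a+d)^2 + (b-c)^2`. -/
def AA (x : SL F) : F := (x 0 0 + x 1 1) ^ 2 + (x 0 1 - x 1 0) ^ 2

def co (x : SL F) : (F × F) × (F × F) :=
  ((x 0 0 + x 1 1, x 0 1 - x 1 0), (x 0 0 - x 1 1, x 0 1 + x 1 0))

lemma co_inj (h2 : ringChar F ≠ 2) : Function.Injective (co (F := F)) := by
  have := Ring.two_ne_zero h2
  intro x y h
  simp only [co, Prod.mk.injEq] at h
  obtain ⟨⟨h1, h2⟩, h3, h4⟩ := h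
  ext i j
  fin_cases i <;> fin_cases j <;> simp only [Fin.zero_eta, Fin.mk_one] <;>
    apply mul_left_cancel₀ this <;> first
    | linear_combination h1 + h3
    | linear_combination h2 + h4
    | linear_combination h4 - h2
    | linear_combination h1 - h3

lemma card_P (h2 : ringChar F ≠ 2) (h1 : ¬ IsSquare (-1 : F)) (P : F → Prop) [DecidablePred P] :
    Nat.card {x : SL F | P (AA x)} =
      ∑ m ∈ univ.filter P, (if m = 0 then 1 else Fintype.card F + 1) *
        (if m - 4 = 0 then 1 else Fintype.card F + 1) := by
  have t2 := Ring.two_ne_zero h2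
  classical
  have : Nat.card {x : SL F | P (AA x)} =
    (univ.filter fun w : (F × F) × (F × F) => P (w.1.1 ^ 2 + w.1.2 ^ 2) ∧
      w.2.1 ^ 2 + w.2.2 ^ 2 = w.1.1 ^ 2 + w.1.2 ^ 2 - 4).card := by
    rw [Nat.card_eq_card_toFinset {x : SL F | P (AA x)}]
    rw [← Finset.card_image_of_injective _ (co_inj h2)]
    congr 1
    ext ⟨⟨p, r⟩, u, v⟩
    simp only [mem_image, Set.mem_toFinset, Set.mem_ofPred_eq, mem_filter, mem_univ, true_and]
    constructor
    · rintro ⟨x, hx, h⟩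
      simp only [co, Prod.mk.injEq] at h
      obtain ⟨⟨rfl, rfl⟩, rfl, rfl⟩ := h
      refine ⟨hx, ?_⟩
      linear_combination -4 * det_eq x
    · rintro ⟨hP, h⟩
      refine ⟨⟨!![(p + u) / 2, (r + v) / 2; (v - r) / 2, (p - u) / 2], ?_⟩, ?_, ?_⟩
      · rw [Matrix.det_fin_two_of]
        field_simp
        linear_combination -h
      · convert hP using 1
        simp [AA]
        field_simp
        ring
      · simp [co]
        refine ⟨⟨?_, ?_⟩, ?_, ?_⟩ <;> field_simp <;> ring
  rw [this, Finset.card_eq_sum_card_fiberwise (f := fun w => w.1.1 ^ 2 + w.1.2 ^ 2)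
    (t := univ.filter P) (fun w hw => by simp at hw ⊢; exact hw.1)]
  refine Finset.sum_congr rfl fun m hm => ?_
  rw [← card_circle h2 h1, ← card_circle h2 h1, ← Finset.card_product]
  congr 1
  ext ⟨⟨p, r⟩, u, v⟩
  simp only [mem_filter, mem_univ, true_and, mem_product] at hm ⊢
  constructor
  · rintro ⟨⟨-, h⟩, h'⟩
    rw [h'] at h
    exact ⟨h', h⟩
  · rintro ⟨h, h'⟩
    rw [h]
    exact ⟨⟨hm, h'⟩, rfl⟩

lemma card_K (h2 : ringChar F ≠ 2) (h1 : ¬ IsSquare (-1 : F)) :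
    Nat.card {x : SL F | AA x = 0 ∨ AA x = 4} = 2 * (Fintype.card F + 1) := by
  have h4 := four_ne h2
  rw [card_P h2 h1 (fun m => m = 0 ∨ m = 4)]
  have : univ.filter (fun m : F => m = 0 ∨ m = 4) = {0, 4} := by ext; simp
  rw [this, Finset.sum_pair h4.symm]
  simp [h4]; ring

lemma card_ne (h2 : ringChar F ≠ 2) (h1 : ¬ IsSquare (-1 : F)) (P : F → Prop) [DecidablePred P]
    (hP : ∀ m, P m → m * (m - 4) ≠ 0) :
    Nat.card {x : SL F | P (AA x)} = (univ.filter P).card * (Fintype.card F + 1) ^ 2 := by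
  rw [card_P h2 h1, ← smul_eq_mul, ← Finset.sum_const]
  refine Finset.sum_congr rfl fun m hm => ?_
  have := hP m (by simpa using hm)
  rw [if_neg (left_ne_zero_of_mul this), if_neg (right_ne_zero_of_mul this)]
  ring

lemma card_B (h2 : ringChar F ≠ 2) (h1 : ¬ IsSquare (-1 : F)) :
    2 * Nat.card {x : SL F | AA x * (AA x - 4) ≠ 0 ∧ IsSquare (AA x * (AA x - 4))} =
      (Fintype.card F - 3) * (Fintype.card F + 1) ^ 2 := by
  rw [card_ne h2 h1 (fun m => m * (m - 4) ≠ 0 ∧ IsSquare (m * (m - 4))) (fun m h => h.1),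
    ← mul_assoc]
  congr 1
  have := card_bad h2 h1
  omega

lemma card_SL (h2 : ringChar F ≠ 2) (h1 : ¬ IsSquare (-1 : F)) :
    Nat.card (SL F) = Fintype.card F * (Fintype.card F - 1) * (Fintype.card F + 1) := by
  have h4 := four_ne h2
  have hc := Finset.card_filter_add_card_filter_not (s := (univ : Finset F))
    (fun m => m = 0 ∨ m = 4)
  have : univ.filter (fun m : F => m = 0 ∨ m = 4) = {0, 4} := by ext; simp
  rw [this, Finset.card_pair h4.symm, card_univ] at hc
  have e := card_ne h2 h1 (fun m => ¬ (m = 0 ∨ m = 4))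
    (fun m h => by push Not at h; exact mul_ne_zero h.1 (sub_ne_zero.2 h.2))
  have k := card_K h2 h1
  have t : Nat.card (SL F) = Nat.card {x : SL F | AA x = 0 ∨ AA x = 4} +
      Nat.card {x : SL F | ¬ (AA x = 0 ∨ AA x = 4)} := by
    rw [← Set.compl_ofPred, Nat.card_coe_set_eq, Nat.card_coe_set_eq, Set.ncard_add_ncard_compl]
  rw [t, k, e]
  generalize (Finset.filter (fun m : F => ¬ (m = 0 ∨ m = 4)) univ).card = n at hc
  rw [← hc, show 2 + n - 1 = n + 1 by omega]
  ring

end count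

section grp
set_option linter.unusedSectionVars false
variable {F : Type*} [Field F]

lemma mul_entries (x y : SL F) :
    (x * y) 0 0 = x 0 0 * y 0 0 + x 0 1 * y 1 0 ∧ (x * y) 0 1 = x 0 0 * y 0 1 + x 0 1 * y 1 1 ∧
    (x * y) 1 0 = x 1 0 * y 0 0 + x 1 1 * y 1 0 ∧ (x * y) 1 1 = x 1 0 * y 0 1 + x 1 1 * y 1 1 := by
  simp [Matrix.SpecialLinearGroup.coe_mul, Matrix.mul_apply, Fin.sum_univ_two]

lemma inv_entries (x : SL F) :
    (x⁻¹) 0 0 = x 1 1 ∧ (x⁻¹) 0 1 = - x 0 1 ∧ (x⁻¹) 1 0 = - x 1 0 ∧ (x⁻¹) 1 1 = x 0 0 := by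
  simp [Matrix.SpecialLinearGroup.coe_inv, Matrix.adjugate_fin_two]

/-- The preimage in `SL₂` of the centralizer of the standard involution. -/
def Kp (F : Type*) [Field F] : Subgroup (SL F) where
  carrier := {U | (U 0 0 = U 1 1 ∧ U 0 1 = - U 1 0) ∨ (U 0 0 = - U 1 1 ∧ U 0 1 = U 1 0)}
  one_mem' := by left; simp
  mul_mem' := by
    intro x y hx hy
    obtain ⟨e1, e2, e3, e4⟩ := mul_entries x y
    simp only [Set.mem_ofPred_eq] at *
    rw [e1, e2, e3, e4]
    rcases hx with ⟨h1, h2⟩ | ⟨h1, h2⟩ <;> rcases hy with ⟨h3, h4⟩ | ⟨h3, h4⟩ <;>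
      rw [h1, h2, h3, h4]
    · left; constructor <;> ring
    · right; constructor <;> ring
    · right; constructor <;> ring
    · left; constructor <;> ring
  inv_mem' := by
    intro x hx
    obtain ⟨e1, e2, e3, e4⟩ := inv_entries x
    simp only [Set.mem_ofPred_eq] at *
    rw [e1, e2, e3, e4]
    rcases hx with ⟨h1, h2⟩ | ⟨h1, h2⟩ <;> rw [h1, h2]
    · left; constructor <;> ring
    · right; constructor <;> ring

variable [Fintype F] [DecidableEq F]

lemma mem_Kp (U : SL F) : U ∈ Kp F ↔
    (U 0 0 = U 1 1 ∧ U 0 1 = - U 1 0) ∨ (U 0 0 = - U 1 1 ∧ U 0 1 = U 1 0) := Iff.rfl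

lemma AA_sub (x : SL F) : AA x - 4 = (x 0 0 - x 1 1) ^ 2 + (x 0 1 + x 1 0) ^ 2 := by
  unfold AA; linear_combination 4 * det_eq x

lemma mem_Kp_iff (h1 : ¬ IsSquare (-1 : F)) (U : SL F) :
    U ∈ Kp F ↔ AA U = 0 ∨ AA U = 4 := by
  rw [mem_Kp]
  constructor
  · rintro (⟨h, h'⟩ | ⟨h, h'⟩)
    · right; rw [← sub_eq_zero, AA_sub, h, h']; ring
    · left; rw [AA, h, h']; ring
  · rintro (h | h)
    · right
      obtain ⟨h, h'⟩ := aniso h1 h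
      exact ⟨by linear_combination h, by linear_combination h'⟩
    · left
      rw [← sub_eq_zero, AA_sub] at h
      obtain ⟨h, h'⟩ := aniso h1 h
      exact ⟨by linear_combination h, by linear_combination h'⟩

lemma mem_center (U : SL F) : U ∈ Subgroup.center (SL F) ↔
    U 0 0 = U 1 1 ∧ U 0 1 = 0 ∧ U 1 0 = 0 := by
  rw [Matrix.SpecialLinearGroup.mem_center_iff]
  constructor
  · rintro ⟨r, -, h⟩
    rw [← h]; simp
  · rintro ⟨h, h', h''⟩
    refine ⟨U 0 0, ?_, ?_⟩
    · have := det_eq U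
      rw [h'] at this
      rw [Fintype.card_fin]; linear_combination this + U 0 0 * h
    · ext i j
      fin_cases i <;> fin_cases j <;> simp [h, h', h'']

lemma conj_entries (x u : SL F) :
    (x * u * x⁻¹) 0 0 = (x 0 0 * u 0 0 + x 0 1 * u 1 0) * x 1 1
      - (x 0 0 * u 0 1 + x 0 1 * u 1 1) * x 1 0 ∧
    (x * u * x⁻¹) 0 1 = - (x 0 0 * u 0 0 + x 0 1 * u 1 0) * x 0 1
      + (x 0 0 * u 0 1 + x 0 1 * u 1 1) * x 0 0 ∧
    (x * u * x⁻¹) 1 0 = (x 1 0 * u 0 0 + x 1 1 * u 1 0) * x 1 1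
      - (x 1 0 * u 0 1 + x 1 1 * u 1 1) * x 1 0 ∧
    (x * u * x⁻¹) 1 1 = - (x 1 0 * u 0 0 + x 1 1 * u 1 0) * x 0 1
      + (x 1 0 * u 0 1 + x 1 1 * u 1 1) * x 0 0 := by
  obtain ⟨e1, e2, e3, e4⟩ := mul_entries (x * u) x⁻¹
  obtain ⟨f1, f2, f3, f4⟩ := mul_entries x u
  obtain ⟨g1, g2, g3, g4⟩ := inv_entries x
  rw [e1, e2, e3, e4, f1, f2, f3, f4, g1, g2, g3, g4]
  refine ⟨?_, ?_, ?_, ?_⟩ <;> ring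

lemma crit1 (h2 : (2 : F) ≠ 0) (h1 : ¬ IsSquare (-1 : F)) (x u : SL F) (hu : u ∈ Kp F)
    (hx : x * u * x⁻¹ ∈ Kp F) (hc : u ∉ Subgroup.center (SL F)) :
    ¬ (AA x * (AA x - 4) ≠ 0 ∧ IsSquare (AA x * (AA x - 4))) := by
  rintro ⟨hne, hsq⟩
  have nsq : ∀ w : F, AA x * (AA x - 4) ≠ - w ^ 2 := by
    rintro w hw
    obtain ⟨z, hz⟩ := hsq
    have hz0 : z ≠ 0 := by rintro rfl; exact hne (by rw [hz]; ring)
    exact h1 ⟨w / z, by field_simp; linear_combination hz - hw⟩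
  rw [mem_center] at hc
  obtain ⟨e1, e2, e3, e4⟩ := conj_entries x u
  rw [mem_Kp, e1, e2, e3, e4] at hx
  rw [mem_Kp] at hu
  have du := det_eq u
  have dx := det_eq x
  rw [AA_sub, AA] at hne nsq
  generalize x 0 0 = a at *
  generalize x 0 1 = b at *
  generalize x 1 0 = c at *
  generalize x 1 1 = d at *
  rcases hu with ⟨hu1, hu2⟩ | ⟨hu1, hu2⟩ 
  · have hb : u 1 0 ≠ 0 := fun h => hc ⟨hu1, by rw [hu2, h, neg_zero], h⟩
    rw [hu1, hu2] at hx
    generalize u 1 0 = β at *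
    generalize u 1 1 = α at *
    rcases hx with ⟨h3, h4⟩ | ⟨h3, h4⟩
    · have q1 : a * c + b * d = 0 := by
        apply mul_left_cancel₀ h2; apply mul_left_cancel₀ hb; linear_combination h3
      have q2 : a ^ 2 + b ^ 2 - c ^ 2 - d ^ 2 = 0 := by
        apply mul_left_cancel₀ hb; linear_combination -h4
      apply hne
      linear_combination (a ^ 2 + b ^ 2 - c ^ 2 - d ^ 2) * q2 + 4 * (a * c + b * d) * q1
    · have q : a ^ 2 + b ^ 2 + c ^ 2 + d ^ 2 = 0 := by
        apply mul_left_cancel₀ hb; linear_combination -h4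
      apply nsq 2
      linear_combination (a ^ 2 + b ^ 2 + c ^ 2 + d ^ 2) * q - 4 * (a * d - b * c + 1) * dx
  · rw [hu1, hu2] at hx du
    generalize u 1 0 = β at *
    generalize u 1 1 = α at *
    rcases hx with ⟨h3, h4⟩ | ⟨h3, h4⟩
    · have t0 : (a * -α + b * β) * d - (a * β + b * α) * c = 0 := by
        apply mul_left_cancel₀ h2; linear_combination h3
      have t1 : -(c * -α + d * β) * b + (c * β + d * α) * a = 0 := by
        linear_combination t0 - h3
      have hv : ∃ v, v = -(a * -α + b * β) * b + (a * β + b * α) * a := ⟨_, rfl⟩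
      obtain ⟨v, hv⟩ := hv
      have r1 : a * -α + b * β = v * c := by
        linear_combination -(a * -α + b * β) * dx + a * t0 - c * hv
      have r2 : a * β + b * α = v * d := by
        linear_combination -(a * β + b * α) * dx + b * t0 - d * hv
      have r3 : c * -α + d * β = - v * a := by
        linear_combination -(c * -α + d * β) * dx + a * (hv + h4) + c * t1
      have r4 : c * β + d * α = - v * b := by
        linear_combination -(c * β + d * α) * dx + b * (hv + h4) + d * t1
      have hvv : v ≠ 0 := by
        rintro rfl
        have : (0 : F) = 1 := by
          linear_combination dx + (a * d - b * c) * du - r1 * (c * β + d * α)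
            + r3 * (a * β + b * α)
        exact zero_ne_one this
      have q : a ^ 2 + b ^ 2 + c ^ 2 + d ^ 2 = 0 := by
        apply mul_left_cancel₀ hvv
        linear_combination a * r3 + b * r4 - c * r1 - d * r2
      apply nsq 2
      linear_combination (a ^ 2 + b ^ 2 + c ^ 2 + d ^ 2) * q - 4 * (a * d - b * c + 1) * dx
    · have q : β * (a ^ 2 + c ^ 2 - b ^ 2 - d ^ 2) + α * (2 * (a * b + c * d)) = 0 := by
        linear_combination h4
      apply nsq (α * (a ^ 2 + c ^ 2 - b ^ 2 - d ^ 2) - β * (2 * (a * b + c * d)))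
      linear_combination -(β * (a ^ 2 + c ^ 2 - b ^ 2 - d ^ 2) + α * (2 * (a * b + c * d))) * q
        - ((a ^ 2 + c ^ 2 - b ^ 2 - d ^ 2) ^ 2 + (2 * (a * b + c * d)) ^ 2) * du

lemma crit2 (h2 : (2 : F) ≠ 0) (h1 : ¬ IsSquare (-1 : F))
    (hn : ∀ z : F, ¬ IsSquare z → IsSquare (-z)) (hs : ∃ α β : F, α ^ 2 + β ^ 2 = -1) (x : SL F)
    (h : ¬ (AA x * (AA x - 4) ≠ 0 ∧ IsSquare (AA x * (AA x - 4)))) :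
    ∃ u ∈ Kp F, x * u * x⁻¹ ∈ Kp F ∧ u ∉ Subgroup.center (SL F) := by
  have : ∃ α β : F, α ^ 2 + β ^ 2 = -1 ∧ β * (x 0 0 ^ 2 + x 1 0 ^ 2 - x 0 1 ^ 2 - x 1 1 ^ 2)
      = α * (2 * (x 0 0 * x 0 1 + x 1 0 * x 1 1)) := by
    have dx := det_eq x
    have hPQ : AA x * (AA x - 4) = (x 0 0 ^ 2 + x 1 0 ^ 2 - x 0 1 ^ 2 - x 1 1 ^ 2) ^ 2 +
        (2 * (x 0 0 * x 0 1 + x 1 0 * x 1 1)) ^ 2 := by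
      rw [AA_sub, AA]; ring
    rw [hPQ] at h
    generalize x 0 0 ^ 2 + x 1 0 ^ 2 - x 0 1 ^ 2 - x 1 1 ^ 2 = P at *
    generalize 2 * (x 0 0 * x 0 1 + x 1 0 * x 1 1) = Q at *
    by_cases h0 : P ^ 2 + Q ^ 2 = 0
    · obtain ⟨rfl, rfl⟩ := aniso h1 h0
      obtain ⟨α, β, h⟩ := hs
      exact ⟨α, β, h, by simp⟩
    · obtain ⟨μ, hμ⟩ := hn _ (fun hh => h ⟨h0, hh⟩)
      have hμ0 : μ ≠ 0 := by rintro rfl; exact h0 (by linear_combination -hμ)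
      exact ⟨P / μ, Q / μ, by field_simp; linear_combination -hμ, by ring⟩
  obtain ⟨α, β, hab, hPQ⟩ := this
  obtain ⟨u, u1, u2, u3, u4⟩ : ∃ u : SL F, u 0 0 = α ∧ u 0 1 = β ∧ u 1 0 = β ∧ u 1 1 = -α :=
    ⟨⟨!![α, β; β, -α], by rw [Matrix.det_fin_two_of]; linear_combination -hab⟩, by simp⟩
  refine ⟨u, ?_, ?_, ?_⟩
  · rw [mem_Kp]; right; simp [u1, u2, u3, u4]
  · obtain ⟨e1, e2, e3, e4⟩ := conj_entries x u
    rw [mem_Kp, e1, e2, e3, e4, u1, u2, u3, u4]; right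
    constructor
    · ring
    · linear_combination hPQ
  · rw [mem_center, u1, u2, u3, u4]
    rintro ⟨h, h', -⟩
    subst h'
    have : α = 0 := by apply mul_left_cancel₀ h2; linear_combination h
    subst this
    simp at hab

end grp

section fin
open scoped Pointwise
set_option linter.unusedSectionVars false
variable {F : Type*} [Field F] [Fintype F] [DecidableEq F]

abbrev PSL (F : Type*) [Field F] := Matrix.ProjectiveSpecialLinearGroup (Fin 2) F

def K (F : Type*) [Field F] : Subgroup (PSL F) :=
  (Kp F).map (QuotientGroup.mk' (Subgroup.center (SL F)))

lemma comap_K : (K F).comap (QuotientGroup.mk' (Subgroup.center (SL F))) = Kp F := by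
  rw [K, Subgroup.comap_map_eq, QuotientGroup.ker_mk', sup_eq_left]
  intro u hu
  rw [mem_center] at hu
  rw [mem_Kp]
  left
  simp [hu.1, hu.2.1, hu.2.2]

lemma mk_mem (u : SL F) : (QuotientGroup.mk u : PSL F) ∈ K F ↔ u ∈ Kp F := by
  conv_rhs => rw [← comap_K]
  rfl

lemma bad_iff {G : Type*} [Group G] (H : Subgroup G) (x : G) :
    H ⊓ Subgroup.map (MulAut.conj x⁻¹).toMonoidHom H ≠ ⊥ ↔
      ∃ u ∈ H, x * u * x⁻¹ ∈ H ∧ u ≠ 1 := by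
  rw [Subgroup.ne_bot_iff_exists_ne_one]
  constructor
  · rintro ⟨⟨u, hu, v, hv, e⟩, h1⟩
    refine ⟨u, hu, ?_, fun h => h1 (Subtype.ext h)⟩
    rw [← e]
    have : x * (MulAut.conj x⁻¹).toMonoidHom v * x⁻¹ = v := by simp [mul_assoc]
    rw [this]; exact hv
  · rintro ⟨u, hu, hv, h1⟩
    exact ⟨⟨u, hu, _, hv, by simp [mul_assoc]⟩, fun h => h1 (congrArg Subtype.val h)⟩

lemma card_conj {G : Type*} [Group G] (H L : Subgroup G) (g : G) (h : MulAut.conj g • L = H) :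
    Nat.card {x : G | H ⊓ Subgroup.map (MulAut.conj x⁻¹).toMonoidHom H ≠ ⊥} =
    Nat.card {x : G | ∃ u ∈ L, x * u * x⁻¹ ∈ L ∧ u ≠ 1} := by
  refine Nat.card_congr ((MulAut.conj g).symm.toEquiv.subtypeEquiv fun x => ?_)
  change _ ≠ _ ↔ ∃ u ∈ L, _ ∧ _
  rw [bad_iff]
  have hm : ∀ y, y ∈ H ↔ g⁻¹ * y * g ∈ L := by
    intro y
    rw [← h, Subgroup.mem_pointwise_smul_iff_inv_smul_mem]
    simp [← map_inv, MulAut.smul_def]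
  simp only [hm, MulEquiv.toEquiv_eq_coe, EquivLike.coe_coe, MulAut.conj_symm_apply]
  constructor
  · rintro ⟨u, h1, h2, h3⟩
    refine ⟨_, h1, ?_, ?_⟩
    · convert h2 using 1; group
    · intro h
      apply h3
      have : u = g * (g⁻¹ * u * g) * g⁻¹ := by group
      rw [this, h]; group
  · rintro ⟨u, h1, h2, h3⟩
    refine ⟨g * u * g⁻¹, ?_, ?_, ?_⟩
    · convert h1 using 1; group
    · convert h2 using 1; group
    · intro h
      apply h3
      have : u = g⁻¹ * (g * u * g⁻¹) * g := by group
      rw [this, h]; group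

lemma card_pre (t : Set (PSL F)) :
    Nat.card {x : SL F | (QuotientGroup.mk x : PSL F) ∈ t} =
      Nat.card (Subgroup.center (SL F)) * Nat.card t := by
  rw [← Nat.card_prod]
  exact Nat.card_congr (QuotientGroup.preimageMkEquivSubgroupProdSet _ t)

lemma crit (h2 : ringChar F ≠ 2) (h1 : ¬ IsSquare (-1 : F)) (x : SL F) :
    (∃ u ∈ K F, (x : PSL F) * u * (x : PSL F)⁻¹ ∈ K F ∧ u ≠ 1) ↔
    ¬ (AA x * (AA x - 4) ≠ 0 ∧ IsSquare (AA x * (AA x - 4))) := by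
  constructor
  · rintro ⟨u, hu, hx, hne⟩
    induction u using QuotientGroup.induction_on with | H u => ?_
    refine crit1 (Ring.two_ne_zero h2) h1 x u ((mk_mem u).1 hu) ((mk_mem _).1 hx) fun h => ?_
    exact hne ((QuotientGroup.eq_one_iff u).2 h)
  · intro h
    have hn : ∀ z : F, ¬ IsSquare z → IsSquare (-z) := by
      intro z hz
      have hz0 : z ≠ 0 := by rintro rfl; exact hz (by simp)
      rw [← quadraticChar_one_iff_isSquare (neg_ne_zero.2 hz0), ← neg_one_mul, map_mul,
        quadraticChar_neg_one_iff_not_isSquare.2 hz, quadraticChar_neg_one_iff_not_isSquare.2 h1]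
      norm_num
    have hs : ∃ α β : F, α ^ 2 + β ^ 2 = -1 := by
      have := card_circle h2 h1 (-1)
      rw [if_neg (by simp)] at this
      obtain ⟨w, hw⟩ := Finset.card_pos.1 (by rw [this]; omega)
      exact ⟨w.1, w.2, by simpa using hw⟩
    obtain ⟨u, hu, hx, hc⟩ := crit2 (Ring.two_ne_zero h2) h1 hn hs x h
    exact ⟨u, (mk_mem u).2 hu, (mk_mem _).2 hx, fun h => hc ((QuotientGroup.eq_one_iff u).1 h)⟩

lemma main (q : ℕ) (hq7 : 7 ≤ q) 
    (hmersenne : ∃ k : ℕ, q = 2 ^ k - 1)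
    (hF : Fintype.card F = q)
    (H : Sylow 2 (PSL F)) :
    (Nat.card {x : PSL F | (H : Subgroup (PSL F)) ⊓
            Subgroup.map (MulAut.conj x⁻¹).toMonoidHom (H : Subgroup (PSL F)) ≠ ⊥} : ℚ)
          / (Nat.card (PSL F) : ℚ)
        = 1 / 2 + ((q : ℚ) + 3) / (2 * (q : ℚ) * ((q : ℚ) - 1)) := by
  obtain ⟨k, hk⟩ := hmersenne
  have hk3 : 3 ≤ k := by
    by_contra hh
    have : k ≤ 2 := by omega
    have := Nat.pow_le_pow_right (show 0 < 2 by norm_num) this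
    omega
  obtain ⟨j, rfl⟩ := Nat.exists_eq_add_of_le hk3
  have hq1 : q + 1 = 2 ^ (3 + j) := by omega
  have hq8 : q + 1 = 8 * 2 ^ j := by rw [hq1, pow_add]; norm_num
  have h2 : ringChar F ≠ 2 := by
    rw [Ne, FiniteField.even_card_iff_char_two, hF]; omega
  have h1 : ¬ IsSquare (-1 : F) := by
    rw [FiniteField.isSquare_neg_one_iff, hF]; omega
  have cSL := card_SL h2 h1
  have cK : Nat.card (Kp F) = 2 * (q + 1) := by
    rw [← hF, ← card_K h2 h1]
    refine Nat.card_congr (Equiv.subtypeEquivRight fun x => mem_Kp_iff h1 x)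
  have cB := card_B h2 h1
  rw [hF] at cSL cB
  have hp : IsPGroup 2 (K F) := by
    refine IsPGroup.map ?_ _
    refine IsPGroup.of_card (n := 3 + j + 1) ?_
    rw [cK, hq1, pow_succ]; ring
  have hi : ¬ 2 ∣ (K F).index := by
    rw [← Subgroup.index_comap_of_surjective (K F) (QuotientGroup.mk'_surjective _), comap_K]
    have := (Kp F).card_mul_index
    rw [cK, cSL] at this
    obtain ⟨r, hr⟩ : ∃ r, q = 4 * r + 3 := ⟨2 * 2 ^ j - 1, by have := Nat.one_le_two_pow (n := j); omega⟩
    have e : (Kp F).index = (4 * r + 3) * (2 * r + 1) := by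
      apply Nat.eq_of_mul_eq_mul_left (show 0 < 2 * (q + 1) by omega)
      rw [this, hr, show 4 * r + 3 - 1 = 4 * r + 2 by omega]; ring
    rw [e, Nat.Prime.dvd_mul Nat.prime_two]
    omega
  obtain ⟨g, hg⟩ := MulAction.exists_smul_eq (PSL F) (hp.toSylow hi) H
  have hg' : MulAut.conj g • K F = (H : Subgroup (PSL F)) := by rw [← hg]; rfl
  rw [card_conj _ _ g hg']
  set S : Set (PSL F) := {x : PSL F | ∃ u ∈ K F, x * u * x⁻¹ ∈ K F ∧ u ≠ 1} with hS
  have c1 := card_pre (F := F) Sᶜ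
  have c2 := card_pre (F := F) Set.univ
  have c3 : Nat.card S + Nat.card (Sᶜ : Set (PSL F)) = Nat.card (PSL F) := by
    rw [Nat.card_coe_set_eq, Nat.card_coe_set_eq, Set.ncard_add_ncard_compl]
  have e1 : {x : SL F | (QuotientGroup.mk x : PSL F) ∈ Sᶜ} =
      {x : SL F | AA x * (AA x - 4) ≠ 0 ∧ IsSquare (AA x * (AA x - 4))} := by
    ext x
    have := crit h2 h1 x
    change ¬ (∃ u ∈ K F, (x : PSL F) * u * (x : PSL F)⁻¹ ∈ K F ∧ u ≠ 1) ↔ (_ ∧ _)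
    rw [this, not_not]
  rw [e1] at c1
  have c2' : Nat.card (SL F) = Nat.card (Subgroup.center (SL F)) * Nat.card (PSL F) := by
    simpa using c2
  rw [c1] at cB
  rw [cSL] at c2'
  generalize Nat.card (Subgroup.center (SL F)) = z at *
  generalize Nat.card S = s at *
  generalize Nat.card (Sᶜ : Set (PSL F)) = t at *
  generalize Nat.card (PSL F) = n at *
  obtain ⟨r, rfl⟩ := Nat.exists_eq_add_of_le hq7
  rw [show 7 + r - 1 = 6 + r by omega] at c2'
  rw [show 7 + r - 3 = 4 + r by omega] at cB
  have hpos : 0 < z * n := by rw [← c2']; positivity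
  have hz : (z : ℚ) ≠ 0 := by
    rintro h; norm_cast at h; subst h; simp at hpos
  have hn : (n : ℚ) ≠ 0 := by
    rintro h; norm_cast at h; subst h; simp at hpos
  have c2q : (7 + r : ℚ) * (6 + r) * (7 + r + 1) = z * n := by exact_mod_cast c2'
  have cBq : 2 * (z * t : ℚ) = (4 + r) * (7 + r + 1) ^ 2 := by exact_mod_cast cB
  have c3q : (s : ℚ) = n - t := by
    rw [eq_sub_iff_add_eq]; exact_mod_cast c3
  have hr1 : (7 + r : ℚ) ≠ 0 := by positivity
  have hr2 : (6 + r : ℚ) ≠ 0 := by positivity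
  have hr3 : (8 + r : ℚ) ≠ 0 := by positivity
  push_cast
  rw [c3q, show (7 + r - 1 : ℚ) = 6 + r by ring, ← mul_div_mul_left _ _ hz, mul_sub, ← c2q,
    show (z * t : ℚ) = (4 + r) * (7 + r + 1) ^ 2 / 2 by linarith,
    show (7 + r + 1 : ℚ) = 8 + r by ring]
  field_simp
  ring

end fin
end PSLQ

/-- If `q ≥ 7` is a Mersenne prime, `G = PSL₂(q)` and `H` is a Sylow `2`-subgroup of
`G`, then `Q₂(G) = |{x ∈ G : H ⊓ H^x ≠ 1}|/|G| = 1/2 + (q+3)/(2q(q-1))`; in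
particular `Q₂(G) > 1/2`. -/
theorem stmt16 (q : ℕ) (hq7 : 7 ≤ q) (hqprime : q.Prime)
    (hmersenne : ∃ k : ℕ, q = 2 ^ k - 1)
    (F : Type*) [Field F] [Fintype F] (hF : Fintype.card F = q)
    (H : Sylow 2 (ProjectiveSpecialLinearGroup (Fin 2) F)) :
    (Nat.card {x : ProjectiveSpecialLinearGroup (Fin 2) F |
          (H : Subgroup (ProjectiveSpecialLinearGroup (Fin 2) F)) ⊓
            Subgroup.map (MulAut.conj x⁻¹).toMonoidHom
              (H : Subgroup (ProjectiveSpecialLinearGroup (Fin 2) F)) ≠ ⊥} : ℚ)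
          / (Nat.card (ProjectiveSpecialLinearGroup (Fin 2) F) : ℚ)
        = 1 / 2 + ((q : ℚ) + 3) / (2 * (q : ℚ) * ((q : ℚ) - 1)) ∧
    1 / 2 < (Nat.card {x : ProjectiveSpecialLinearGroup (Fin 2) F |
          (H : Subgroup (ProjectiveSpecialLinearGroup (Fin 2) F)) ⊓
            Subgroup.map (MulAut.conj x⁻¹).toMonoidHom
              (H : Subgroup (ProjectiveSpecialLinearGroup (Fin 2) F)) ≠ ⊥} : ℚ)
          / (Nat.card (ProjectiveSpecialLinearGroup (Fin 2) F) : ℚ) := by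
  classical
  have h := PSLQ.main q hq7 hmersenne hF H
  refine ⟨h, ?_⟩
  rw [h]
  have h7 : (7 : ℚ) ≤ q := by exact_mod_cast hq7
  have : 0 < ((q : ℚ) + 3) / (2 * (q : ℚ) * ((q : ℚ) - 1)) := by
    apply div_pos
    · linarith
    · apply mul_pos <;> linarith
  linarith
end

section
/- For every real ε > 0 there exists N such that the following holds: for every prime r, every power q = r^f of r, and every n ≥ 3, if G = PSL_n(q) satisfies |G| ≥ N, then Σ_p Q_p(G) < ε, where the sum is over all prime divisors p of |G| with p ≠ r. -/
open Matrix

lemma vsum_odd (p q d : ℕ) (hp : p.Prime) (hodd : Odd p) (hpq : ¬ p ∣ q) (hq : 2 ≤ q) (hd : 0 < d)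
    (h : ∀ i, p ∣ q ^ i - 1 ↔ d ∣ i) (n : ℕ) :
    ∑ i ∈ Finset.range (n+1), padicValNat p (q^i-1)
      = (n/d) * padicValNat p (q^d-1) + padicValNat p (n/d).factorial := by
  have := Fact.mk hp
  induction n with
  | zero => simp
  | succ n ih =>
    rw [Finset.sum_range_succ, ih, Nat.succ_div]
    split_ifs with hdv
    · obtain ⟨j, hj⟩ := hdv
      have hj0 : j ≠ 0 := by rintro rfl; simp at hj
      have hnd : n / d + 1 = j := by
        have := Nat.succ_div (a := n) (b := d)
        rw [if_pos ⟨j, hj⟩] at this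
        rw [← this, hj, Nat.mul_div_cancel_left _ hd]
      have h1 : 1 < q^d := Nat.one_lt_pow hd.ne' (by omega)
      have := padicValNat.pow_sub_pow (p := p) hodd (x := q^d) (y := 1) h1 ((h d).2 dvd_rfl)
        (fun hh => hpq (hp.dvd_of_dvd_pow hh)) hj0
      rw [one_pow, ← pow_mul, ← hj] at this
      rw [this, Nat.factorial_succ, padicValNat.mul (by omega) (Nat.factorial_ne_zero _), hnd]
      rw [← hnd]; ring
    · have : padicValNat p (q^(n+1)-1) = 0 := padicValNat.eq_zero_of_not_dvd (by rwa [h])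
      simp [this]

lemma v2_odd (q i : ℕ) (hq : Odd q) (hq3 : 3 ≤ q) (hi : Odd i) :
    padicValNat 2 (q^i-1) = padicValNat 2 (q-1) := by
  have hi0 : i ≠ 0 := by rintro rfl; simp at hi
  obtain ⟨k, hk⟩ := hq
  have hq1 : 2 ∣ q - 1 := ⟨k, by omega⟩
  have hnq : ¬ 2 ∣ q := by omega
  have e1 := padicValNat.pow_two_sub_pow (x := q) (y := 1) (by omega) hq1 hnq (n := 2*i) (by omega) ⟨i, by ring⟩
  have hv : padicValNat 2 (2*i) = 1 := by
    rw [padicValNat.mul (by norm_num) hi0, padicValNat.eq_zero_of_not_dvd (n := i)]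
    · simp
    · rwa [← even_iff_two_dvd, Nat.not_even_iff_odd]
  have hge : 1 < q^i := Nat.one_lt_pow hi0 (by omega)
  have e2 : q^(2*i) - 1^(2*i) = (q^i-1)*(q^i+1) := by
    rw [one_pow, mul_comm 2, pow_mul]
    obtain ⟨t, ht⟩ := Nat.exists_eq_add_of_lt hge
    rw [ht]; zify [show 1 ≤ (1+t+1)^2 from Nat.one_le_pow _ _ (by omega), show 1 ≤ 1+t+1 by omega]; ring
  rw [e2, padicValNat.mul (by omega) (by omega), hv] at e1
  have l1 : padicValNat 2 (q-1) ≤ padicValNat 2 (q^i-1) := by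
    apply (padicValNat_dvd_iff_le (by omega)).1
    refine pow_padicValNat_dvd.trans ?_
    simpa using Nat.sub_dvd_pow_sub_pow q 1 i
  have l2 : padicValNat 2 (q+1) ≤ padicValNat 2 (q^i+1) := by
    apply (padicValNat_dvd_iff_le (by omega)).1
    refine pow_padicValNat_dvd.trans ?_
    simpa using hi.nat_add_dvd_pow_add_pow q 1
  omega

lemma vsum_two (q : ℕ) (hq : Odd q) (hq3 : 3 ≤ q) (n : ℕ) :
    ∑ i ∈ Finset.range (n+1), padicValNat 2 (q^i-1)
      = n * padicValNat 2 (q-1) + (n/2) * padicValNat 2 (q+1) + padicValNat 2 (n/2).factorial := by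
  induction n with
  | zero => simp
  | succ n ih =>
    rw [Finset.sum_range_succ, ih, Nat.succ_div]
    split_ifs with hdv
    · obtain ⟨j, hj⟩ := hdv
      have hnd : n / 2 + 1 = j := by omega
      obtain ⟨k, hk⟩ := hq
      have e1 := padicValNat.pow_two_sub_pow (x := q) (y := 1) (by omega) ⟨k, by omega⟩ (by omega) (n := n+1) (by omega) ⟨j, by omega⟩
      rw [one_pow] at e1
      have hv : padicValNat 2 (n+1) = 1 + padicValNat 2 j := by
        rw [hj, padicValNat.mul (by norm_num) (by omega)]; simp
      rw [Nat.factorial_succ, padicValNat.mul (by omega) (Nat.factorial_ne_zero _), hnd, ← hnd]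
      rw [← hnd] at hv
      have : padicValNat 2 (q^(n+1)-1) = padicValNat 2 (q+1) + padicValNat 2 (q-1) + padicValNat 2 (n/2+1) := by omega
      rw [this]; ring
    · rw [v2_odd q (n+1) hq hq3 (by rw [← Nat.not_even_iff_odd, even_iff_two_dvd]; exact hdv)]
      ring_nf

lemma fact_two (m : ℕ) : 2 ^ padicValNat 2 m.factorial ≤ 2 ^ m := by
  apply Nat.pow_le_pow_right (by norm_num)
  have := sub_one_mul_padicValNat_factorial (p := 2) m
  omega

lemma fact_odd (p m : ℕ) (hp : p.Prime) (hodd : Odd p) : (p ^ padicValNat p m.factorial)^2 ≤ 3 ^ m := by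
  have := Fact.mk hp
  have h3 : 3 ≤ p := by
    have := hp.two_le
    rcases hodd with ⟨k, hk⟩; omega
  have key : ∀ k, (k+3)^2 ≤ 3^(k+2) := by
    intro k
    induction k with
    | zero => norm_num
    | succ k ih => rw [show k+1+2 = (k+2)+1 by ring, pow_succ 3]; nlinarith [Nat.zero_le (k*k)]
  have hk := key (p-3)
  rw [show p - 3 + 3 = p by omega, show p - 3 + 2 = p - 1 by omega] at hk
  have := sub_one_mul_padicValNat_factorial (p := p) m
  calc (p ^ padicValNat p m.factorial)^2 = (p^2)^padicValNat p m.factorial := by rw [← pow_mul, ← pow_mul, mul_comm]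
    _ ≤ (3^(p-1))^padicValNat p m.factorial := Nat.pow_le_pow_left hk _
    _ = 3^((p-1)*padicValNat p m.factorial) := by rw [← pow_mul]
    _ ≤ 3^m := Nat.pow_le_pow_right (by norm_num) (by omega)

noncomputable def Aq (q : ℕ) : ℝ := if q = 2 then 9/4 else 4

lemma N1 (p q n : ℕ) (hp : p.Prime) (hpq : ¬ p ∣ q) (hq : 2 ≤ q) (hn : 1 ≤ n) (X : ℕ)
    (hX : X * p ^ padicValNat p (q-1) = p ^ (∑ i ∈ Finset.range (n+1), padicValNat p (q^i-1))) :
    (X : ℝ)^2 ≤ 4 * Aq q ^ n * (q:ℝ)^(2*n-2) := by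
  have := Fact.mk hp
  have hpp := hp.pos
  have hA : (9/4 : ℝ) ≤ Aq q := by unfold Aq; split_ifs <;> norm_num
  obtain ⟨n, rfl⟩ : ∃ k, n = k + 1 := ⟨n-1, by omega⟩
  rw [show 2*(n+1)-2 = 2*n by omega]
  have hfin : ∀ B : ℕ, X^2 ≤ 4 * B * q^(2*n) → (B:ℝ) ≤ Aq q^(n+1) →
      (X : ℝ)^2 ≤ 4 * Aq q ^ (n+1) * (q:ℝ)^(2*n) := by
    intro B h1 h2
    calc (X : ℝ)^2 ≤ 4 * B * (q:ℝ)^(2*n) := by exact_mod_cast h1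
      _ ≤ _ := by gcongr
  have hdq : p ^ padicValNat p (q-1) ≤ q - 1 := Nat.le_of_dvd (by omega) pow_padicValNat_dvd
  rcases hp.eq_two_or_odd' with h2 | hodd
  · subst h2
    have hqo : Odd q := by rw [← Nat.not_even_iff_odd, even_iff_two_dvd]; exact hpq
    have hq3 : 3 ≤ q := by rcases hqo with ⟨k, hk⟩; omega
    have hA4 : Aq q = 4 := by unfold Aq; rw [if_neg (by omega)]
    rw [vsum_two q hqo hq3, pow_add, pow_add] at hX
    set α := 2 ^ padicValNat 2 (q-1) with hα
    set β := 2 ^ padicValNat 2 (q+1) with hβ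
    have hα0 : 0 < α := by positivity
    have hβ0 : 0 < β := by positivity
    have hβq : β ≤ q + 1 := Nat.le_of_dvd (by omega) pow_padicValNat_dvd
    have hX2 : X = α^n * β^((n+1)/2) * 2^padicValNat 2 ((n+1)/2).factorial := by
      apply Nat.eq_of_mul_eq_mul_right hα0
      rw [hX, mul_comm (n+1), pow_mul, mul_comm ((n+1)/2), pow_mul]
      rw [← hα, ← hβ]; ring
    have hαβ : α = 2 ∨ β = 2 := by
      obtain ⟨k, hk⟩ := hqo
      rcases Nat.even_or_odd k with ⟨t, ht⟩ | ⟨t, ht⟩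
      · right
        have : q + 1 = 2 * (2*t+1) := by omega
        rw [hβ, this, padicValNat.mul (by norm_num) (by omega), padicValNat.eq_zero_of_not_dvd (n := 2*t+1) (by omega)]
        simp
      · left
        have : q - 1 = 2 * (2*t+1) := by omega
        rw [hα, this, padicValNat.mul (by norm_num) (by omega), padicValNat.eq_zero_of_not_dvd (n := 2*t+1) (by omega)]
        simp
    have h1 : α^2*β ≤ 2*q^2 := by
      rcases hαβ with h | h
      · rw [h]; nlinarith
      · rw [h]; have : α ≤ q := by omega
        nlinarith
    have h2 : α*β ≤ 2*(q+1) := by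
      rcases hαβ with h | h
      · rw [h]; omega
      · rw [h]; omega
    have hf := fact_two ((n+1)/2)
    have hXle : X ≤ 2 * 2^(n+1) * q^n := by
      rcases Nat.even_or_odd' n with ⟨h, hh | hh⟩
      · have e : (n+1)/2 = h := by omega
        rw [e] at hX2 hf
        calc X = (α^2*β)^h * 2^padicValNat 2 h.factorial := by rw [hX2, hh]; ring
          _ ≤ (2*q^2)^h * 2^h := by gcongr
          _ = 2^n * q^n := by rw [hh, pow_mul, pow_mul, mul_pow]; rw [show (2:ℕ)^2 = 2*2 by norm_num, mul_pow]; ring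
          _ ≤ 2 * 2^(n+1) * q^n := by gcongr; rw [pow_succ]; omega
      · have e : (n+1)/2 = h+1 := by omega
        rw [e] at hX2 hf
        calc X = (α^2*β)^h * (α * β) * 2^padicValNat 2 (h+1).factorial := by rw [hX2, hh]; ring
          _ ≤ (2*q^2)^h * (2*(q+1)) * 2^(h+1) := by gcongr
          _ = 2^(n+1) * (q^(2*h) * (q+1)) := by
            rw [hh, show 2*h+1+1 = (h+1)+(h+1) by ring, pow_add, mul_pow, ← pow_mul]; ring
          _ ≤ 2^(n+1) * (q^(2*h) * (2*q)) := by gcongr; omega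
          _ = 2 * 2^(n+1) * q^n := by rw [hh]; ring
    apply hfin (4^(n+1))
    · calc X^2 ≤ (2 * 2^(n+1) * q^n)^2 := by gcongr
        _ = _ := by rw [show (4:ℕ) = 2^2 by norm_num, ← pow_mul]; ring
    · rw [hA4]; push_cast; rfl
  · obtain ⟨d, hd, hdi⟩ : ∃ d, 0 < d ∧ ∀ i, p ∣ q^i - 1 ↔ d ∣ i := by
      have hc : q.Coprime p := ((Nat.Prime.coprime_iff_not_dvd hp).2 hpq).symm
      have hu : IsUnit (q : ZMod p) := (ZMod.isUnit_iff_coprime q p).2 hc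
      refine ⟨orderOf (q : ZMod p), ?_, fun i => ?_⟩
      · obtain ⟨u, hu⟩ := hu
        rw [← hu, orderOf_units]
        exact orderOf_pos u
      · rw [orderOf_dvd_iff_pow_eq_one, ← ZMod.natCast_eq_zero_iff, Nat.cast_sub (Nat.one_le_pow _ _ (by omega))]
        simp [sub_eq_zero]
    rw [vsum_odd p q d hp hodd hpq hq hd hdi, pow_add] at hX
    rcases Nat.lt_or_ge 1 d with hd2 | hd1
    · have ha1 : padicValNat p (q-1) = 0 := by
        apply padicValNat.eq_zero_of_not_dvd
        have := hdi 1
        rw [pow_one] at this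
        rw [this]
        intro h; have := Nat.le_of_dvd one_pos h; omega
      have hnd : ¬ p ∣ q - 1 := by
        have := hdi 1
        rw [pow_one] at this
        rw [this]
        intro h; have := Nat.le_of_dvd one_pos h; omega
      rw [ha1, pow_zero, mul_one] at hX
      set m := (n+1)/d with hm
      set Y := p ^ padicValNat p (q^d-1) with hY
      have hqd : 1 < q^d := Nat.one_lt_pow hd.ne' (by omega)
      have hYd : Y * (q-1) ∣ q^d - 1 := by
        apply Nat.Coprime.mul_dvd_of_dvd_of_dvd
        · apply Nat.Coprime.pow_left
          exact (Nat.Prime.coprime_iff_not_dvd hp).2 hnd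
        · exact pow_padicValNat_dvd
        · simpa using Nat.sub_dvd_pow_sub_pow q 1 d
      have hY1 : Y * (q-1) ≤ q^d - 1 := Nat.le_of_dvd (by omega) hYd
      have hY2 : Y ≤ q^d := by
        have : Y * 1 ≤ Y * (q-1) := by gcongr; omega
        omega
      have hY3 : Y * q ≤ 2 * q^d := by
        have : Y * q ≤ Y * (2*(q-1)) := by gcongr; omega
        have e : Y * (2*(q-1)) = 2 * (Y * (q-1)) := by ring
        omega
      have hdm : d * m ≤ n+1 := Nat.mul_div_le _ _
      have hYm : Y^m ≤ 2 * q^n := by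
        rcases Nat.eq_zero_or_pos m with h0 | h0
        · rw [h0, pow_zero]; have : 0 < q^n := by positivity
          omega
        · obtain ⟨k, hk⟩ : ∃ k, m = k+1 := ⟨m-1, by omega⟩
          have : Y^m * q ≤ (2 * q^n) * q := by
            calc Y^m * q = Y^k * (Y * q) := by rw [hk]; ring
              _ ≤ (q^d)^k * (2 * q^d) := by gcongr
              _ = 2 * q^(d*m) := by rw [hk, pow_mul]; ring
              _ ≤ 2 * q^(n+1) := by gcongr; omega
              _ = _ := by ring
          exact Nat.le_of_mul_le_mul_right this (by omega)
      have hf := fact_odd p m hp hodd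
      apply hfin (3^m)
      · rw [hX, mul_comm m, pow_mul, ← hY]
        calc (Y^m * p^padicValNat p m.factorial)^2 = (Y^m)^2 * (p^padicValNat p m.factorial)^2 := by ring
          _ ≤ (2*q^n)^2 * 3^m := by gcongr
          _ = _ := by ring
      · have h2m : 2*m ≤ n+1 := by nlinarith
        push_cast
        calc (3:ℝ)^m ≤ ((9/4)^2)^m := by gcongr; norm_num
          _ = (9/4)^(2*m) := by rw [pow_mul]
          _ ≤ (9/4)^(n+1) := by gcongr; norm_num
          _ ≤ _ := by gcongr
    · have hd1 : d = 1 := by omega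
      subst hd1
      have hpd : p ∣ q - 1 := by simpa using (hdi 1)
      have hA4 : Aq q = 4 := by
        unfold Aq; rw [if_neg]; rintro rfl
        have := Nat.le_of_dvd one_pos hpd
        have := hp.two_le; omega
      rw [Nat.div_one, pow_one] at hX
      set Y := p ^ padicValNat p (q-1) with hY
      have hX2 : X = Y^n * p^padicValNat p (n+1).factorial := by
        apply Nat.eq_of_mul_eq_mul_right (show 0 < Y by positivity)
        rw [hX, mul_comm (n+1), pow_mul, ← hY]; ring
      have hf := fact_odd p (n+1) hp hodd
      apply hfin (3^(n+1))
      · rw [hX2]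
        calc (Y^n * p^padicValNat p (n+1).factorial)^2 = (Y^n)^2 * (p^padicValNat p (n+1).factorial)^2 := by ring
          _ ≤ (q^n)^2 * 3^(n+1) := by gcongr; omega
          _ = 3^(n+1) * q^(2*n) := by ring
          _ ≤ _ := by nlinarith [Nat.zero_le (3^(n+1) * q^(2*n))]
      · rw [hA4]; push_cast; gcongr; norm_num

lemma vprod (p : ℕ) (hp : p.Prime) {ι : Type*} (s : Finset ι) (f : ι → ℕ) (hf : ∀ i ∈ s, f i ≠ 0) :
    padicValNat p (∏ i ∈ s, f i) = ∑ i ∈ s, padicValNat p (f i) := by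
  classical
  have := Fact.mk hp
  induction s using Finset.induction_on with
  | empty => simp
  | insert a s ha ih =>
    rw [Finset.prod_insert ha, Finset.sum_insert ha, padicValNat.mul (hf a (by simp)) (Finset.prod_ne_zero_iff.2 (fun i hi => hf i (by simp [hi]))), ih (fun i hi => hf i (by simp [hi]))]

lemma vGL (p q n : ℕ) (hp : p.Prime) (hpq : ¬ p ∣ q) (hq : 2 ≤ q) :
    padicValNat p (∏ i : Fin n, (q^n - q^(i:ℕ))) = ∑ i ∈ Finset.range (n+1), padicValNat p (q^i-1) := by
  have := Fact.mk hp
  rw [Fin.prod_univ_eq_prod_range (fun i => q^n - q^i) n]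
  have h1 : ∀ i ∈ Finset.range n, q^n - q^i = q^i * (q^(n-i)-1) := by
    intro i hi
    rw [Finset.mem_range] at hi
    rw [Nat.mul_sub, ← pow_add, mul_one, show i + (n-i) = n by omega]
  rw [Finset.prod_congr rfl h1, vprod p hp]
  · have h2 : ∀ i ∈ Finset.range n, padicValNat p (q^i * (q^(n-i)-1)) = padicValNat p (q^(n-i)-1) := by
      intro i hi
      rw [Finset.mem_range] at hi
      have : 1 < q^(n-i) := Nat.one_lt_pow (by omega) (by omega)
      rw [padicValNat.mul (by positivity) (by omega), padicValNat.eq_zero_of_not_dvd (n := q^i), zero_add]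
      exact fun hh => hpq (hp.dvd_of_dvd_pow hh)
    rw [Finset.sum_congr rfl h2, Finset.sum_range_succ', ← Finset.sum_range_reflect]
    simp only [pow_zero, Nat.sub_self, padicValNat_zero_right, add_zero]
    apply Finset.sum_congr rfl
    intro i hi
    rw [Finset.mem_range] at hi
    congr 3; omega
  · intro i hi
    rw [Finset.mem_range] at hi
    have : 1 < q^(n-i) := Nat.one_lt_pow (by omega) (by omega)
    exact mul_ne_zero (by positivity) (by omega)

/-- cardinality of the general linear group -/
def cGL (q n : ℕ) : ℕ := ∏ i : Fin n, (q^n - q^(i:ℕ))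

lemma cGL_pos (q n : ℕ) (hq : 2 ≤ q) : 0 < cGL q n := by
  apply Finset.prod_pos
  intro i _
  have : q^(i:ℕ) < q^n := Nat.pow_lt_pow_right (by omega) i.2
  omega

lemma cGL_le (q n : ℕ) : cGL q n ≤ q^(n^2) := by
  calc cGL q n ≤ ∏ i : Fin n, q^n := Finset.prod_le_prod' (fun i _ => Nat.sub_le _ _)
    _ = _ := by simp [← pow_mul, sq]

lemma N2 (p q b m : ℕ) (hp : p.Prime) (hq : 2 ≤ q) (hpq : p ∣ q - 1)
    (hb : (Odd p ∧ b = 1) ∨ (p = 2 ∧ b = 2)) :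
    padicValNat p (cGL q (b*m)) = padicValNat p (m.factorial * cGL q b ^ m) := by
  have := Fact.mk hp
  have hpq' : ¬ p ∣ q := by
    intro h
    have h1 := Nat.dvd_sub h hpq
    rw [show q - (q-1) = 1 by omega] at h1
    have := Nat.le_of_dvd one_pos h1
    have := hp.two_le; omega
  rw [padicValNat.mul (Nat.factorial_ne_zero _) (pow_ne_zero _ (cGL_pos q b hq).ne'), padicValNat.pow]
  unfold cGL
  rw [vGL p q _ hp hpq' hq, vGL p q _ hp hpq' hq]
  rcases hb with ⟨hodd, rfl⟩ | ⟨rfl, rfl⟩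
  · rw [vsum_odd p q 1 hp hodd hpq' hq one_pos, vsum_odd p q 1 hp hodd hpq' hq one_pos]
    · simp; ring
    all_goals
      intro i
      simp only [one_dvd, iff_true]
      exact hpq.trans (by simpa using Nat.sub_dvd_pow_sub_pow q 1 i)
  · have hq3 : 3 ≤ q := by
      by_contra h
      have : q = 2 := by omega
      subst this; norm_num at hpq
    have hqo : Odd q := by rw [← Nat.not_even_iff_odd, even_iff_two_dvd]; exact hpq'
    rw [vsum_two q hqo hq3, vsum_two q hqo hq3]
    simp; ring

lemma cGL_ge (q n : ℕ) (hq : 2 ≤ q) : q^(n^2) ≤ 4 * cGL q n := by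
  -- stronger: cGL q n * 4 ≥ q^(n^2) * (1 + 2^(-n+1)...)
  have key : ∀ n, 1 ≤ n → ((q:ℝ)^(n^2)) * (1/4 + 1/2 * (1/2)^n) ≤ (cGL q n : ℝ) := by
    intro n hn
    have hrec : ∀ n, (cGL q (n+1)) = cGL q n * q^n * (q^(n+1) - 1) := by
      intro n
      unfold cGL
      rw [Fin.prod_univ_succ]
      simp only [Fin.val_zero, pow_zero, Fin.val_succ]
      have : ∀ i : Fin n, q^(n+1) - q^((i:ℕ)+1) = (q^n - q^(i:ℕ)) * q := by
        intro i; rw [Nat.sub_mul]; ring_nf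
      simp_rw [this, Finset.prod_mul_distrib]
      simp; ring
    have hq' : (2:ℝ) ≤ q := by exact_mod_cast hq
    induction n, hn using Nat.le_induction with
    | base => simp [cGL]; rw [Nat.cast_sub (by omega)]; push_cast; nlinarith
    | succ n hn ih =>
      rw [hrec]
      push_cast [Nat.one_le_pow (n+1) q (by omega)]
      have h1 : (2:ℝ)^(n+1) ≤ (q:ℝ)^(n+1) := by gcongr
      have h2 : (q:ℝ)^(n+1) * (1 - (1/2)^(n+1)) ≤ (q:ℝ)^(n+1) - 1 := by
        have : (1:ℝ) = 2^(n+1) * (1/2)^(n+1) := by rw [← mul_pow]; norm_num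
        have h3 : (0:ℝ) < (1/2)^(n+1) := by positivity
        nlinarith
      have h4 : (1/2:ℝ)^n ≤ 1/2 := by
        calc (1/2:ℝ)^n ≤ (1/2)^1 := pow_le_pow_of_le_one (by norm_num) (by norm_num) hn
          _ = _ := by norm_num
      have h5 : (0:ℝ) < (1/2)^n := by positivity
      have h6 : 0 ≤ (1 - (1/2:ℝ)^(n+1)) := by rw [pow_succ]; linarith
      calc (q:ℝ)^((n+1)^2) * (1/4 + 1/2*(1/2)^(n+1))
          ≤ (q:ℝ)^((n+1)^2) * ((1/4 + 1/2*(1/2)^n) * (1 - (1/2)^(n+1))) := by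
            gcongr; rw [pow_succ]; nlinarith
        _ = ((q:ℝ)^(n^2) * (1/4 + 1/2*(1/2)^n)) * (q:ℝ)^n * ((q:ℝ)^(n+1) * (1 - (1/2)^(n+1))) := by ring
        _ ≤ (cGL q n : ℝ) * (q:ℝ)^n * ((q:ℝ)^(n+1) - 1) := by gcongr
  rcases Nat.eq_zero_or_pos n with rfl | hn
  · simp [cGL]
  · have := key n hn
    have h3 : (0:ℝ) ≤ (q:ℝ)^(n^2) * (1/2 * (1/2)^n) := by positivity
    have : ((q^(n^2) : ℕ):ℝ) ≤ ((4 * cGL q n : ℕ) : ℝ) := by push_cast; nlinarith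
    exact_mod_cast this

section commutant
open Module
variable {F : Type*} [Field F] {V : Type*} [AddCommGroup V] [Module F V]

/-- the commutant of `z` -/
def Cm (z : Module.End F V) : Submodule F (Module.End F V) :=
  LinearMap.ker (LinearMap.mulLeft F z - LinearMap.mulRight F z)

lemma mem_Cm {z f : Module.End F V} : f ∈ Cm z ↔ ∀ x, z (f x) = f (z x) := by
  unfold Cm
  rw [LinearMap.mem_ker, LinearMap.sub_apply, sub_eq_zero, LinearMap.ext_iff]
  rfl

/-- common kernel -/
def Uk (D : Submodule F (Module.End F V)) : Submodule F V where
  carrier := {u | ∀ f ∈ D, f u = 0}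
  add_mem' := by intro a b ha hb f hf; simp [ha f hf, hb f hf]
  zero_mem' := by intro f _; simp
  smul_mem' := by intro c x hx f hf; simp [hx f hf]

lemma Uk_inv {z : Module.End F V} {D : Submodule F (Module.End F V)} (hD : D ≤ Cm z) {u : V} (hu : u ∈ Uk D) :
    z u ∈ Uk D := by
  intro f hf
  rw [← mem_Cm.1 (hD hf), hu f hf, map_zero]

variable [FiniteDimensional F V]

lemma gen (z : Module.End F V) (c : ℕ) (hc : c ≤ 1)
    (hstep : ∀ U : Submodule F V, (∀ u ∈ U, z u ∈ U) → finrank F U + c < finrank F V →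
      ∃ v, v ∉ U ∧ ∀ a : F, z v - a • v ∉ U) :
    ∀ k, ∀ D : Submodule F (Module.End F V), D ≤ Cm z → finrank F V ≤ finrank F (Uk D) + k →
      finrank F D ≤ finrank F V * ((k + c)/2) := by
  intro k
  induction k using Nat.strong_induction_on with
  | _ k ih =>
  intro D hD hk
  by_cases htop : Uk D = ⊤
  · have : D = ⊥ := by
      rw [eq_bot_iff]
      intro f hf
      rw [Submodule.mem_bot]
      ext x
      have : x ∈ Uk D := by rw [htop]; trivial
      exact this f hf
    rw [this]; simp
  have hlt : finrank F (Uk D) < finrank F V := Submodule.finrank_lt htop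
  -- the restriction argument
  have key : ∀ v, finrank F D ≤ finrank F V + finrank F (D ⊓ LinearMap.ker (LinearMap.applyₗ (R := F) (M₂ := V) v) : Submodule F (Module.End F V)) := by
    intro v
    have h1 : finrank F (LinearMap.range ((LinearMap.applyₗ (R := F) (M₂ := V) v).domRestrict D)) + finrank F (LinearMap.ker ((LinearMap.applyₗ (R := F) (M₂ := V) v).domRestrict D)) = finrank F D := LinearMap.finrank_range_add_finrank_ker ((LinearMap.applyₗ (R := F) (M₂ := V) v).domRestrict D)
    have h2 : finrank F (LinearMap.range ((LinearMap.applyₗ (R := F) (M₂ := V) v).domRestrict D)) ≤ finrank F V := Submodule.finrank_le _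
    have h3 : finrank F (LinearMap.ker ((LinearMap.applyₗ (R := F) (M₂ := V) v).domRestrict D)) ≤ finrank F (D ⊓ LinearMap.ker (LinearMap.applyₗ (R := F) (M₂ := V) v) : Submodule F (Module.End F V)) := by
      rw [LinearMap.ker_domRestrict]
      rw [← Submodule.map_comap_subtype]
      exact (Submodule.finrank_map_subtype_eq _ _).ge
    omega
  have hU' : ∀ v, Uk D ≤ Uk (D ⊓ LinearMap.ker (LinearMap.applyₗ (R := F) (M₂ := V) v)) := by
    intro v u hu f hf
    exact hu f hf.1
  have hv' : ∀ v, v ∈ Uk (D ⊓ LinearMap.ker (LinearMap.applyₗ (R := F) (M₂ := V) v)) := by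
    intro v f hf
    exact hf.2
  have hD' : ∀ v, D ⊓ LinearMap.ker (LinearMap.applyₗ (R := F) (M₂ := V) v) ≤ Cm z := fun v => inf_le_left.trans hD
  by_cases hcod : finrank F (Uk D) + c < finrank F V
  · obtain ⟨v, hv, hvz⟩ := hstep (Uk D) (fun u hu => Uk_inv hD hu) hcod
    have l1 : Uk D < Uk D ⊔ F ∙ v := by
      refine lt_of_le_of_ne le_sup_left fun h => hv ?_
      rw [h]; exact Submodule.mem_sup_right (Submodule.mem_span_singleton_self v)
    have hle : Uk D ⊔ F ∙ v ≤ Uk (D ⊓ LinearMap.ker (LinearMap.applyₗ (R := F) (M₂ := V) v)) := by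
      refine sup_le (hU' v) ?_
      rw [Submodule.span_singleton_le_iff_mem]; exact hv' v
    have l2 : Uk D ⊔ F ∙ v < Uk (D ⊓ LinearMap.ker (LinearMap.applyₗ (R := F) (M₂ := V) v)) := by
      refine lt_of_le_of_ne hle fun h => ?_
      have hz : z v ∈ Uk D ⊔ F ∙ v := by rw [h]; exact Uk_inv (hD' v) (hv' v)
      obtain ⟨u, hu, w, hw, huw⟩ := Submodule.mem_sup.1 hz
      obtain ⟨a, rfl⟩ := Submodule.mem_span_singleton.1 hw
      apply hvz a
      rw [← huw]; simpa using hu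
    have f1 := Submodule.finrank_lt_finrank_of_lt l1
    have f2 := Submodule.finrank_lt_finrank_of_lt l2
    have f3 := Submodule.finrank_le (Uk (D ⊓ LinearMap.ker (LinearMap.applyₗ (R := F) (M₂ := V) v)))
    have hk2 : 2 ≤ k := by omega
    have := ih (k-2) (by omega) _ (hD' v) (by omega)
    have hk3 : (k + c)/2 = (k - 2 + c)/2 + 1 := by omega
    rw [hk3, mul_add, mul_one]
    have := key v
    omega
  · obtain ⟨v, hv⟩ : ∃ v, v ∉ Uk D := by
      by_contra h; push Not at h
      exact htop (eq_top_iff.2 fun x _ => h x)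
    have hc1 : c = 1 := by omega
    have l1 : Uk D < Uk (D ⊓ LinearMap.ker (LinearMap.applyₗ (R := F) (M₂ := V) v)) := by
      refine lt_of_le_of_ne (hU' v) fun h => hv ?_
      rw [h]; exact hv' v
    have f1 := Submodule.finrank_lt_finrank_of_lt l1
    have := ih 0 (by omega) _ (hD' v) (by omega)
    rw [hc1] at this ⊢
    simp only [zero_add, Nat.reduceDiv, mul_zero] at this
    have := key v
    have : finrank F V * 1 ≤ finrank F V * ((k+1)/2) := by gcongr; omega
    omega

lemma gen_noeig (z : Module.End F V) (h : ∀ (a : F) (v : V), z v = a • v → v = 0) :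
    finrank F (Cm z) ≤ finrank F V * (finrank F V / 2) := by
  refine gen z 0 (by omega) ?_ (finrank F V) (Cm z) le_rfl (by omega)
  intro U hU hlt
  obtain ⟨v, hv⟩ : ∃ v, v ∉ U := by
    by_contra h; push Not at h
    have : U = ⊤ := eq_top_iff.2 fun x _ => h x
    rw [this] at hlt; simp at hlt
  refine ⟨v, hv, fun a ha => ?_⟩
  have hm : ∀ u ∈ U, (z - a • (1 : Module.End F V)) u ∈ U := by
    intro u hu
    simpa using U.sub_mem (hU u hu) (U.smul_mem a hu)
  have hinj : Function.Injective ((z - a • (1 : Module.End F V)).restrict hm) := by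
    rw [injective_iff_map_eq_zero]
    intro x hx
    have : z x = a • (x : V) := by
      have := congrArg Subtype.val hx
      simpa [sub_eq_zero] using this
    exact Subtype.ext (h a x this)
  obtain ⟨u, hu⟩ := LinearMap.injective_iff_surjective.1 hinj ⟨_, ha⟩
  have hu' : z u - a • (u : V) = z v - a • v := by simpa using congrArg Subtype.val hu
  have : v - u = 0 := h a _ (by rw [map_sub, smul_sub]; rw [sub_eq_sub_iff_sub_eq_sub]; exact hu'.symm)
  rw [sub_eq_zero] at this
  exact hv (this ▸ u.2)

lemma gen_eig (z : Module.End F V)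
    (h : ∀ (a : F) (v w : V), z v = a • v → z w = a • w → v ≠ 0 → ∃ c : F, c • v = w) :
    finrank F (Cm z) ≤ finrank F V * ((finrank F V + 1) / 2) := by
  refine gen z 1 (by omega) ?_ (finrank F V) (Cm z) le_rfl (by omega)
  intro U hU hlt
  by_contra hcon
  push Not at hcon
  have hnl : ∀ x, ¬ LinearIndependent F ![x, U.mapQ U z hU x] := by
    intro x hli
    obtain ⟨v, rfl⟩ := U.mkQ_surjective x
    by_cases hv : v ∈ U
    · have : U.mkQ v = 0 := by simpa using hv
      exact hli.ne_zero 0 (by simpa using hv)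
    · obtain ⟨a, ha⟩ := hcon v hv
      rw [LinearIndependent.pair_iff] at hli
      have := hli (-a) 1 (by
        rw [Submodule.mkQ_apply, Submodule.mapQ_apply, ← Submodule.Quotient.mk_smul, ← Submodule.Quotient.mk_smul,
          ← Submodule.Quotient.mk_add, Submodule.Quotient.mk_eq_zero]
        convert ha using 1; simp; abel)
      exact one_ne_zero this.2
  obtain ⟨a, ha⟩ := LinearMap.exists_eq_smul_id_of_forall_notLinearIndependent hnl
  have hr : LinearMap.range (z - a • (1 : Module.End F V)) ≤ U := by
    rintro _ ⟨v, rfl⟩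
    have := LinearMap.congr_fun ha (U.mkQ v)
    rw [Submodule.mkQ_apply, Submodule.mapQ_apply] at this
    simp only [LinearMap.smul_apply, Module.End.one_apply] at this
    rw [← Submodule.Quotient.mk_smul, Submodule.Quotient.eq] at this
    simpa using this
  have h1 := LinearMap.finrank_range_add_finrank_ker (z - a • (1 : Module.End F V))
  have h2 := Submodule.finrank_mono hr
  have h3 : finrank F (LinearMap.ker (z - a • (1 : Module.End F V))) ≤ 1 := by
    have hk : ∀ x : LinearMap.ker (z - a • (1 : Module.End F V)), z x = a • (x:V) := by
      intro x
      have h := LinearMap.mem_ker.1 x.2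
      rw [LinearMap.sub_apply, sub_eq_zero] at h
      exact h
    by_cases h0 : ∃ x : LinearMap.ker (z - a • (1 : Module.End F V)), x ≠ 0
    · obtain ⟨x, hx⟩ := h0
      refine finrank_le_one x fun w => ?_
      obtain ⟨c, hc⟩ := h a x w (hk x) (hk w) (by simpa using hx)
      exact ⟨c, Subtype.ext hc⟩
    · push Not at h0
      refine finrank_le_one 0 fun w => ⟨0, by rw [h0 w]; simp⟩
  omega

lemma fr_prod {F A B : Type*} [Field F] [AddCommGroup A] [Module F A] [AddCommGroup B] [Module F B]
    [FiniteDimensional F A] [FiniteDimensional F B] (C : Submodule F B) :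
    finrank F (A × C) = finrank F A + finrank F C := Module.finrank_prod

lemma Cm_decomp (z : Module.End F V) (E R : Submodule F V) (h : IsCompl E R) 
    (hfE : ∀ f ∈ Cm z, ∀ x ∈ E, f x ∈ E) (hfR : ∀ f ∈ Cm z, ∀ x ∈ R, f x ∈ R)
    (hzR : ∀ x ∈ R, z x ∈ R) :
    finrank F (Cm z) ≤ finrank F E ^ 2 + finrank F (Cm (z.restrict hzR)) := by
  let πE := E.projectionOnto R h
  let πR := R.projectionOnto E h.symm
  have hE : ∀ x (hx : x ∈ E), ((πE x : E) : V) = x := fun x hx => by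
    have := Submodule.projectionOnto_apply_left h ⟨x, hx⟩
    exact congrArg Subtype.val this
  have hR : ∀ x (hx : x ∈ R), ((πR x : R) : V) = x := fun x hx => by
    have := Submodule.projectionOnto_apply_left h.symm ⟨x, hx⟩
    exact congrArg Subtype.val this
  let Φ1 : Cm z →ₗ[F] Module.End F E :=
    { toFun := fun f => πE ∘ₗ f.1 ∘ₗ E.subtype
      map_add' := by intro f g; ext x; simp
      map_smul' := by intro f g; ext x; simp }
  let Φ2 : Cm z →ₗ[F] Module.End F R :=
    { toFun := fun f => πR ∘ₗ f.1 ∘ₗ R.subtype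
      map_add' := by intro f g; ext x; simp
      map_smul' := by intro f g; ext x; simp }
  have hΦ2 : ∀ f, Φ2 f ∈ Cm (z.restrict hzR) := by
    intro f
    rw [mem_Cm]
    intro x
    apply Subtype.ext
    have e1 : ((Φ2 f x : R) : V) = f.1 x := hR _ (hfR f.1 f.2 x x.2)
    have e2 : ((Φ2 f (z.restrict hzR x) : R) : V) = f.1 (z x) := hR _ (hfR f.1 f.2 _ (hzR x x.2))
    rw [e2, LinearMap.coe_restrict_apply, e1]
    exact mem_Cm.1 f.2 x
  let Φ : Cm z →ₗ[F] Module.End F E × Cm (z.restrict hzR) := Φ1.prod (Φ2.codRestrict _ hΦ2)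
  have hinj : Function.Injective Φ := by
    rw [injective_iff_map_eq_zero]
    intro f hf
    have f1 : Φ1 f = 0 := congrArg Prod.fst hf
    have f2 : Φ2 f = 0 := congrArg (fun t => t.2.1) hf
    apply Subtype.ext
    ext x
    obtain ⟨a, ha, b, hb, rfl⟩ := Submodule.mem_sup.1 (show x ∈ E ⊔ R by rw [h.sup_eq_top]; trivial)
    have e1 : ((Φ1 f ⟨a, ha⟩ : E) : V) = f.1 a := hE _ (hfE f.1 f.2 a ha)
    have e2 : ((Φ2 f ⟨b, hb⟩ : R) : V) = f.1 b := hR _ (hfR f.1 f.2 b hb)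
    rw [f1] at e1
    rw [f2] at e2
    rw [map_add, ← e1, ← e2]; simp
  have := LinearMap.finrank_le_finrank_of_injective hinj
  have hfree : ∀ C : Submodule F (Module.End F R), finrank F (Module.End F E × C) = finrank F (Module.End F E) + finrank F C := fun C => fr_prod C
  have hE2 : finrank F (Module.End F E) = finrank F E * finrank F E := Module.finrank_linearMap ..
  rw [hfree, hE2, ← sq] at this
  exact this

lemma Cm_le_sq (z : Module.End F V) : finrank F (Cm z) ≤ finrank F V ^ 2 := by
  have := Submodule.finrank_le (Cm z)
  rwa [Module.finrank_linearMap, ← sq] at this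

lemma compl_eig (z : Module.End F V) (p : ℕ) (s : F) (hp : (p : F) ≠ 0) (hs : s ≠ 0)
    (hz : z ^ p = s • (1 : Module.End F V)) (a : F) :
    IsCompl (LinearMap.ker (z - a • (1 : Module.End F V))) (LinearMap.range (z - a • (1 : Module.End F V))) := by
  have hd : Disjoint (LinearMap.ker (z - a • (1 : Module.End F V))) (LinearMap.range (z - a • (1 : Module.End F V))) := by
    rw [Submodule.disjoint_def]
    rintro w hw ⟨y, hy⟩
    have hzw : z w = a • w := by
      rw [LinearMap.mem_ker, LinearMap.sub_apply, sub_eq_zero] at hw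
      exact hw
    have hzy : z y = a • y + w := by
      rw [← hy]; simp
    by_contra hw0
    have k1 : ∀ k : ℕ, (z^k) w = a^k • w := by
      intro k
      induction k with
      | zero => simp
      | succ k ih => rw [pow_succ, Module.End.mul_apply, hzw, map_smul, ih, smul_smul, pow_succ']
    have k2 : ∀ k : ℕ, a • (z^k) y = a^(k+1) • y + (k * a^k) • w := by
      intro k
      induction k with
      | zero => simp
      | succ k ih =>
        rw [pow_succ, Module.End.mul_apply, hzy, map_add, map_smul, smul_add, ih, k1]
        push_cast
        module
    have has : a^p = s := by
      have := k1 p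
      rw [hz] at this
      have h2 : (a^p - s) • w = 0 := by rw [sub_smul, ← this]; simp
      rcases smul_eq_zero.1 h2 with h | h
      · exact sub_eq_zero.1 h
      · exact absurd h hw0
    have := k2 p
    rw [hz, pow_succ, has] at this
    have h3 : ((p:F) * s) • w = 0 := by
      have e : a • (s • (1 : Module.End F V)) y = (s * a) • y := by simp [smul_smul, mul_comm]
      rw [e] at this
      simpa using this.symm
    rcases smul_eq_zero.1 h3 with h | h
    · exact mul_ne_zero hp hs h
    · exact hw0 h
  refine ⟨hd, ?_⟩
  rw [codisjoint_iff]
  apply Submodule.eq_top_of_disjoint _ _ _ hd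
  rw [add_comm]
  exact (LinearMap.finrank_range_add_finrank_ker _).ge

lemma Cm_bound (z : Module.End F V) (p : ℕ) (s : F) (hp : (p : F) ≠ 0) (hs : s ≠ 0)
    (hz : z ^ p = s • (1 : Module.End F V)) (hns : ∀ a : F, z ≠ a • (1 : Module.End F V))
    (hn : 3 ≤ finrank F V) :
    ((∃ a : F, finrank F (LinearMap.range (z - a • (1 : Module.End F V))) = 1) ∧
      finrank F (Cm z) + 2 * finrank F V ≤ finrank F V ^ 2 + 2) ∨
    (finrank F (Cm z) + 2 * finrank F V ≤ finrank F V ^ 2 ∧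
      finrank F (Cm z) + 4 * finrank F V ≤ finrank F V ^ 2 + 10) := by
  set n := finrank F V with hnn
  have hdec : ∀ a : F, ∃ hzR : ∀ x ∈ LinearMap.range (z - a • (1 : Module.End F V)), z x ∈ LinearMap.range (z - a • (1 : Module.End F V)), finrank F (Cm z) ≤ finrank F (LinearMap.ker (z - a • (1 : Module.End F V))) ^ 2 + finrank F (Cm (z.restrict hzR)) := by
    intro a
    have hfR : ∀ f ∈ Cm z, ∀ x ∈ LinearMap.range (z - a • (1 : Module.End F V)), f x ∈ LinearMap.range (z - a • (1 : Module.End F V)) := by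
      rintro f hf _ ⟨y, rfl⟩
      refine ⟨f y, ?_⟩
      simp [mem_Cm.1 hf]
    have hzc : z ∈ Cm z := mem_Cm.2 fun x => rfl
    refine ⟨hfR z hzc, Cm_decomp z _ _ (compl_eig z p s hp hs hz a) ?_ hfR (hfR z hzc)⟩
    intro f hf x hx
    rw [LinearMap.mem_ker, LinearMap.sub_apply, sub_eq_zero] at hx ⊢
    rw [mem_Cm.1 hf, hx]; simp
  have hrk : ∀ a : F, finrank F (LinearMap.range (z - a • (1 : Module.End F V))) + finrank F (LinearMap.ker (z - a • (1 : Module.End F V))) = n := fun a => LinearMap.finrank_range_add_finrank_ker _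
  have hr0 : ∀ a : F, finrank F (LinearMap.range (z - a • (1 : Module.End F V))) ≠ 0 := by
    intro a h
    rw [Submodule.finrank_eq_zero, LinearMap.range_eq_bot, sub_eq_zero] at h
    exact hns a h
  by_cases hmid : ∃ a : F, 2 ≤ finrank F (LinearMap.ker (z - a • (1 : Module.End F V)))
  · obtain ⟨a, ha⟩ := hmid
    obtain ⟨hzR, hle⟩ := hdec a
    have h2 := Cm_le_sq (z.restrict hzR)
    have h3 := hrk a
    have h4 := hr0 a
    generalize finrank F (LinearMap.ker (z - a • (1 : Module.End F V))) = e at *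
    generalize hr : finrank F (LinearMap.range (z - a • (1 : Module.End F V))) = r at *
    have h5 := hle.trans (Nat.add_le_add_left h2 _)
    generalize finrank F (Cm z) = c at *
    clear_value n
    subst h3
    rcases Nat.lt_or_ge 1 r with h | h
    · right
      constructor <;> nlinarith
    · have hr1 : r = 1 := by omega
      left
      refine ⟨⟨a, by rw [hr, hr1]⟩, ?_⟩
      subst hr1
      nlinarith
  · push Not at hmid
    right
    have hC : finrank F (Cm z) ≤ n * (n/2) := by
      by_cases hne : ∃ a : F, finrank F (LinearMap.ker (z - a • (1 : Module.End F V))) = 1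
      · obtain ⟨a, ha⟩ := hne
        obtain ⟨hzR, hle⟩ := hdec a
        have h3 := hrk a
        have := gen_eig (z.restrict hzR) (by
          intro b v w hv hw hv0
          have hk : finrank F (LinearMap.ker (z - b • (1 : Module.End F V))) ≤ 1 := by have := hmid b; omega
          have hmem : ∀ x : LinearMap.range (z - a • (1 : Module.End F V)), z.restrict hzR x = b • x → (x:V) ∈ LinearMap.ker (z - b • (1 : Module.End F V)) := by
            intro x hx
            have := congrArg Subtype.val hx
            rw [LinearMap.mem_ker, LinearMap.sub_apply, sub_eq_zero]
            exact this
          obtain ⟨⟨u, hu⟩, hgen⟩ := finrank_le_one_iff.1 hk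
          obtain ⟨c1, hc1⟩ := hgen ⟨v, hmem v hv⟩
          obtain ⟨c2, hc2⟩ := hgen ⟨w, hmem w hw⟩
          have hc1' : c1 • u = v := congrArg Subtype.val hc1
          have hc2' : c2 • u = w := congrArg Subtype.val hc2
          have hc10 : c1 ≠ 0 := by
            rintro rfl
            apply hv0
            apply Subtype.ext
            rw [← hc1']; simp
          refine ⟨c2 / c1, Subtype.ext ?_⟩
          rw [Submodule.coe_smul, ← hc1', ← hc2', smul_smul, div_mul_cancel₀ _ hc10])
        rw [ha] at hle h3
        rw [show finrank F (LinearMap.range (z - a • (1 : Module.End F V))) = n - 1 by omega] at this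
        rw [show n - 1 + 1 = n by omega] at this
        have h1 : (n-1)*(n/2) + n/2 = n*(n/2) := by
          obtain ⟨k, hk⟩ : ∃ k, n = k+1 := ⟨n-1, by omega⟩
          rw [hk]; simp; ring
        omega
      · push Not at hne
        apply gen_noeig
        intro a v hv
        have h0 : finrank F (LinearMap.ker (z - a • (1 : Module.End F V))) = 0 := by
          have := hmid a; have := hne a; omega
        rw [Submodule.finrank_eq_zero] at h0
        have : v ∈ LinearMap.ker (z - a • (1 : Module.End F V)) := by
          rw [LinearMap.mem_ker, LinearMap.sub_apply, sub_eq_zero]; exact hv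
        rw [h0] at this
        simpa using this
    clear_value n
    generalize finrank F (Cm z) = c at *
    rcases Nat.even_or_odd' n with ⟨k, hk | hk⟩
    · rw [show n/2 = k by omega] at hC
      subst hk
      constructor
      · have hk2 : 2 ≤ k := by omega
        nlinarith
      · zify at *
        nlinarith [sq_nonneg ((k:ℤ) - 2)]
    · rw [show n/2 = k by omega] at hC
      subst hk
      constructor
      · nlinarith
      · zify at *
        nlinarith [sq_nonneg ((k:ℤ) - 2)]

end commutant

section refl
open Module

lemma card_aut {F V : Type*} [Field F] [Fintype F] [AddCommGroup V] [Module F V] [FiniteDimensional F V] :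
    Nat.card (V ≃ₗ[F] V) = cGL (Fintype.card F) (finrank F V) := by
  classical
  let b := Module.finBasis F V
  rw [← Nat.card_congr (LinearMap.GeneralLinearGroup.generalLinearEquiv F V).toEquiv,
    ← Nat.card_congr (Matrix.GeneralLinearGroup.toLin' b).toEquiv, Matrix.card_GL_field]
  rfl

lemma finite_aut {F V : Type*} [Field F] [Fintype F] [AddCommGroup V] [Module F V] [FiniteDimensional F V] :
    Finite (V ≃ₗ[F] V) := by
  apply Nat.finite_of_card_ne_zero
  rw [card_aut]
  exact (cGL_pos _ _ (Fintype.one_lt_card)).ne'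

variable {F : Type*} [Field F]

/-- block monomial group -/
def Kmon (F : Type*) [Field F] (κ W : Type*) [AddCommGroup W] [Module F W] :
    Subgroup ((κ → W) ≃ₗ[F] (κ → W)) where
  carrier := {g | ∃ σ : Equiv.Perm κ, ∃ d : κ → (W ≃ₗ[F] W), ∀ x i, g x (σ i) = d i (x i)}
  one_mem' := ⟨1, fun _ => 1, fun x i => rfl⟩
  mul_mem' := by
    rintro g h ⟨σ, d, hg⟩ ⟨τ, e, hh⟩
    refine ⟨σ * τ, fun i => d (τ i) * e i, fun x i => ?_⟩
    rw [Equiv.Perm.mul_apply, LinearEquiv.mul_apply, hg, hh]; rfl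
  inv_mem' := by
    rintro g ⟨σ, d, hg⟩
    refine ⟨(σ.symm : Equiv.Perm κ), fun i => (d (σ.symm i))⁻¹, fun x i => ?_⟩
    have h := hg (g⁻¹ x) (σ.symm i)
    have h1 : g (g⁻¹ x) = x := by rw [← LinearEquiv.mul_apply, mul_inv_cancel]; rfl
    rw [h1, Equiv.apply_symm_apply] at h
    rw [h, ← LinearEquiv.mul_apply, inv_mul_cancel]; rfl

/-- monomial map -/
def monMap {κ W : Type*} [AddCommGroup W] [Module F W] (a : Equiv.Perm κ × (κ → (W ≃ₗ[F] W))) :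
    (κ → W) ≃ₗ[F] (κ → W) :=
  (LinearEquiv.piCongrRight a.2).trans (LinearEquiv.funCongrLeft F W a.1.symm)

lemma monMap_apply {κ W : Type*} [AddCommGroup W] [Module F W] (a : Equiv.Perm κ × (κ → (W ≃ₗ[F] W)))
    (x : κ → W) (i : κ) : monMap a x (a.1 i) = a.2 i (x i) := by
  have : monMap a x (a.1 i) = a.2 (a.1.symm (a.1 i)) (x (a.1.symm (a.1 i))) := rfl
  rw [this, Equiv.symm_apply_apply]

lemma card_K {κ W : Type*} [Finite κ] [AddCommGroup W] [Module F W] [Nontrivial W] :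
    Nat.card (Kmon F κ W) = (Nat.card κ).factorial * Nat.card (W ≃ₗ[F] W) ^ Nat.card κ := by
  classical
  have hb : Function.Bijective (fun a : Equiv.Perm κ × (κ → (W ≃ₗ[F] W)) =>
      (⟨monMap a, a.1, a.2, monMap_apply a⟩ : Kmon F κ W)) := by
    constructor
    · rintro ⟨σ, d⟩ ⟨τ, e⟩ h
      have h : monMap (σ, d) = monMap (τ, e) := congrArg Subtype.val h
      have hd : ∀ x i, monMap (σ, d) x (σ i) = d i (x i) := monMap_apply (σ, d)
      have he : ∀ x i, monMap (σ, d) x (τ i) = e i (x i) := by rw [h]; exact monMap_apply (τ, e)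
      obtain ⟨w, hw⟩ := exists_ne (0 : W)
      have hσ : σ = τ := by
        ext i
        by_contra hne
        have h1 := hd (Pi.single i w) i
        have h2 := he (Pi.single i w) (τ.symm (σ i))
        rw [Equiv.apply_symm_apply, h1, Pi.single_eq_same, Pi.single_eq_of_ne, map_zero] at h2
        · exact hw (by simpa using h2)
        · intro h3
          apply hne
          rw [← h3, Equiv.apply_symm_apply, h3]
      subst hσ
      congr 1
      funext i
      ext a
      have h1 := hd (Pi.single i a) i
      rw [he, Pi.single_eq_same] at h1
      exact h1.symm
    · rintro ⟨g, σ, d, hg⟩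
      refine ⟨(σ, d), Subtype.ext ?_⟩
      ext x j
      have h1 : monMap (σ, d) x (σ (σ.symm j)) = d (σ.symm j) (x (σ.symm j)) := monMap_apply (σ, d) x _
      rw [← hg, Equiv.apply_symm_apply] at h1
      exact h1
  rw [← Nat.card_congr (Equiv.ofBijective _ hb), Nat.card_prod, Nat.card_perm, Nat.card_fun]

lemma conj_in {G S : Type*} [Group G] [Finite G] [Group S] (p : ℕ) (hp : p.Prime) (hS : IsPGroup p S)
    (ρ : S →* G) (K : Subgroup G) (hK : padicValNat p (Nat.card K) = padicValNat p (Nat.card G)) :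
    ∃ g : G, ∀ s, g⁻¹ * ρ s * g ∈ K := by
  have : Fact p.Prime := ⟨hp⟩
  have hidx : ¬ p ∣ Nat.card (G ⧸ K) := by
    intro hd
    have h1 := K.card_eq_card_quotient_mul_card_subgroup
    have h2 : padicValNat p (Nat.card G) = padicValNat p (Nat.card (G ⧸ K)) + padicValNat p (Nat.card K) := by
      rw [h1, padicValNat.mul Nat.card_pos.ne' Nat.card_pos.ne']
    have h3 : 1 ≤ padicValNat p (Nat.card (G ⧸ K)) :=
      one_le_padicValNat_of_dvd Nat.card_pos.ne' hd
    omega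
  let act : MulAction S (G ⧸ K) := MulAction.compHom _ ρ
  obtain ⟨x, hx⟩ := hS.nonempty_fixed_point_of_prime_not_dvd_card (G ⧸ K) hidx
  obtain ⟨g, rfl⟩ := QuotientGroup.mk_surjective x
  refine ⟨g, fun s => ?_⟩
  have h1 : ((ρ s * g : G) : G ⧸ K) = (g : G ⧸ K) := hx s
  have h2 := QuotientGroup.eq.1 h1.symm
  rwa [← mul_assoc] at h2
end refl

section refl2
open Module
variable {F : Type*} [Field F]

/-- reflections -/
def IsRef {V : Type*} [AddCommGroup V] [Module F V] (u : V ≃ₗ[F] V) : Prop :=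
  u ≠ 1 ∧ ∃ w : V, ∀ x, ∃ c : F, u x = x + c • w

lemma mon_perm {κ W : Type*} [AddCommGroup W] [Module F W] {p b : ℕ}
    (hb : (Odd p ∧ b = 1) ∨ (p = 2 ∧ b = 2)) (hW : finrank F W = b)
    (u : (κ → W) ≃ₗ[F] (κ → W)) (σ : Equiv.Perm κ) (d : κ → (W ≃ₗ[F] W))
    (hu : ∀ x i, u x (σ i) = d i (x i)) (hup : u ^ p = 1)
    (w : κ → W) (hw : ∀ x, ∃ c : F, u x = x + c • w) (i : κ) : σ i = i := by
  classical
  by_contra hi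
  have hWn : Nontrivial W := by
    apply Module.nontrivial_of_finrank_pos (R := F)
    rw [hW]; rcases hb with h | h <;> omega
  rcases hb with ⟨hodd, rfl⟩ | ⟨rfl, rfl⟩
  · obtain ⟨a, ha⟩ := exists_ne (0 : W)
    have hk : ∀ k : ℕ, ∃ D : W ≃ₗ[F] W, ∀ x, (u ^ k) x ((σ ^ k) i) = D (x i) := by
      intro k
      induction k with
      | zero => exact ⟨1, fun x => rfl⟩
      | succ k ih =>
        obtain ⟨D, hD⟩ := ih
        refine ⟨d ((σ ^ k) i) * D, fun x => ?_⟩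
        rw [pow_succ', pow_succ', LinearEquiv.mul_apply, Equiv.Perm.mul_apply, hu, hD]; rfl
    have hσp : (σ ^ p) i = i := by
      by_contra hne
      obtain ⟨D, hD⟩ := hk p
      have := hD (Pi.single i a)
      rw [hup, Pi.single_eq_same] at this
      have h2 : (1 : (κ → W) ≃ₗ[F] (κ → W)) (Pi.single i a) ((σ^p) i) = 0 := Pi.single_eq_of_ne hne _
      rw [h2] at this
      exact ha (D.map_eq_zero_iff.1 this.symm)
    set j := σ i with hj
    have hji : σ j ≠ i := by
      intro h
      obtain ⟨k, hk⟩ := hodd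
      have h2 : ∀ k : ℕ, (σ ^ (2*k)) i = i := by
        intro k
        induction k with
        | zero => rfl
        | succ k ih =>
          rw [show 2*(k+1) = 2 + 2*k by ring, pow_add, Equiv.Perm.mul_apply, ih]
          exact h
      rw [hk, pow_succ', Equiv.Perm.mul_apply, h2] at hσp
      exact hi hσp
    have hjj : σ j ≠ j := fun h => hi (σ.injective h)
    obtain ⟨c, hc⟩ := hw (Pi.single i a)
    have e1 := congrFun hc i
    have e1' : u (Pi.single i a) i = 0 := by
      have := hu (Pi.single i a) (σ.symm i)
      rw [Equiv.apply_symm_apply, Pi.single_eq_of_ne, map_zero] at this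
      · exact this
      · intro h; apply hi; rw [hj]; nth_rewrite 1 [← h]; simp
    rw [e1', Pi.add_apply, Pi.single_eq_same, Pi.smul_apply] at e1
    have hwi : w i ≠ 0 := by
      intro h; rw [h, smul_zero, add_zero] at e1; exact ha e1.symm
    obtain ⟨c', hc'⟩ := hw (Pi.single j a)
    have e2 := congrFun hc' i
    have e2' : u (Pi.single j a) i = 0 := by
      have := hu (Pi.single j a) (σ.symm i)
      rw [Equiv.apply_symm_apply, Pi.single_eq_of_ne, map_zero] at this
      · exact this
      · intro h; apply hji; rw [← h]; simp
    rw [e2', Pi.add_apply, Pi.single_eq_of_ne (Ne.symm hi), Pi.smul_apply, zero_add] at e2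
    have hc0 : c' = 0 := (smul_eq_zero.1 e2.symm).resolve_right hwi
    have e3 := congrFun hc' (σ j)
    rw [hu, hc0, zero_smul, add_zero, Pi.single_eq_same, Pi.single_eq_of_ne hjj] at e3
    exact ha ((d j).map_eq_zero_iff.1 e3)
  · have h1 : finrank F W ≤ 1 := by
      apply finrank_le_one (w (σ i))
      intro v
      obtain ⟨c, hc⟩ := hw (Pi.single i ((d i).symm v))
      refine ⟨c, ?_⟩
      have := congrFun hc (σ i)
      rw [hu, Pi.single_eq_same, Pi.add_apply, Pi.single_eq_of_ne hi, zero_add,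
        LinearEquiv.apply_symm_apply] at this
      exact this.symm
    omega

lemma mon_block {κ W : Type*} [DecidableEq κ] [AddCommGroup W] [Module F W] {p b : ℕ}
    (hb : (Odd p ∧ b = 1) ∨ (p = 2 ∧ b = 2)) (hW : finrank F W = b)
    (u : (κ → W) ≃ₗ[F] (κ → W)) (hK : u ∈ Kmon F κ W) (hup : u ^ p = 1) (hr : IsRef u) :
    ∃ (i : κ) (t : W) (l : F), t ≠ 0 ∧ l ^ p = 1 ∧ u (Pi.single i t) = l • Pi.single i t ∧
      ∀ x, ∃ c : F, u x = x + c • (Pi.single i t : κ → W) := by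
  obtain ⟨hu1, w, hw⟩ := hr
  obtain ⟨σ, d, hu⟩ := hK
  have hσ := mon_perm hb hW u σ d hu hup w hw
  have hu' : ∀ x i, u x i = d i (x i) := fun x i => by have := hu x i; rwa [hσ] at this
  have : ∃ i a, d i a ≠ a := by
    by_contra h
    push Not at h
    apply hu1
    ext x i
    rw [hu', h]; rfl
  obtain ⟨i, a, hia⟩ := this
  set t := d i a - a with ht
  have ht0 : t ≠ 0 := sub_ne_zero.2 hia
  have hsing : ∀ s, u (Pi.single i s) = Pi.single i (d i s) := by
    intro s
    ext j
    rw [hu']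
    by_cases hj : j = i
    · subst hj; simp
    · simp [Pi.single_eq_of_ne hj]
  obtain ⟨c, hc⟩ := hw (Pi.single i a)
  have hcw : c • w = Pi.single i t := by
    rw [ht, Pi.single_sub, ← hsing, hc]; abel
  have hc0 : c ≠ 0 := by
    rintro rfl
    rw [zero_smul] at hcw
    exact ht0 (by simpa using hcw.symm)
  have hww : w = c⁻¹ • (Pi.single i t : κ → W) := by
    rw [← hcw, smul_smul, inv_mul_cancel₀ hc0, one_smul]
  have hx : ∀ x, ∃ c : F, u x = x + c • (Pi.single i t : κ → W) := by
    intro x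
    obtain ⟨e, he⟩ := hw x
    exact ⟨e * c⁻¹, by rw [he, hww, smul_smul]⟩
  obtain ⟨e, he⟩ := hx (Pi.single i t)
  have hl : u (Pi.single i t) = (1 + e) • (Pi.single i t : κ → W) := by
    rw [he, add_smul, one_smul]
  refine ⟨i, t, 1 + e, ht0, ?_, hl, hx⟩
  have hk : ∀ k : ℕ, (u ^ k) (Pi.single i t) = (1+e)^k • (Pi.single i t : κ → W) := by
    intro k
    induction k with
    | zero => simp
    | succ k ih => rw [pow_succ', LinearEquiv.mul_apply, ih, map_smul, hl, smul_smul, pow_succ]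
  have := hk p
  rw [hup] at this
  have h1 := congrFun this i
  have h2 : t = (1+e)^p • t := by simpa using h1
  have h3 : ((1+e)^p - 1) • t = 0 := by rw [sub_smul, one_smul, ← h2, sub_self]
  exact sub_eq_zero.1 ((smul_eq_zero.1 h3).resolve_right ht0)

lemma refl_unique {V S : Type*} [AddCommGroup V] [Module F V] [Group S] {p : ℕ}
    (hpF : (p : F) ≠ 0) (hS : IsPGroup p S) (ρ : S →* (V ≃ₗ[F] V)) (hinj : Function.Injective ρ)
    (s s' : S) (w : V) (l : F) (hl : l ≠ 0) (hw0 : w ≠ 0)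
    (h1 : ρ s w = l • w) (h2 : ρ s' w = l • w)
    (h3 : ∀ x, ∃ c : F, ρ s x = x + c • w) (h4 : ∀ x, ∃ c : F, ρ s' x = x + c • w) : s = s' := by
  have hy : ∀ x, ∃ c : F, ρ (s * s'⁻¹) x = x + c • w := by
    intro x
    obtain ⟨y, rfl⟩ : ∃ y, ρ s' y = x := ⟨(ρ s').symm x, by simp⟩
    obtain ⟨c, hc⟩ := h3 y
    obtain ⟨e, he⟩ := h4 y
    refine ⟨c - e, ?_⟩
    rw [← LinearEquiv.mul_apply, ← map_mul, inv_mul_cancel_right, hc, he, sub_smul]; abel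
  have hyw : ρ (s * s'⁻¹) w = w := by
    have : w = ρ s' (l⁻¹ • w) := by rw [map_smul, h2, smul_smul, inv_mul_cancel₀ hl, one_smul]
    conv_lhs => rw [this]
    rw [← LinearEquiv.mul_apply, ← map_mul, inv_mul_cancel_right, map_smul, h1, smul_smul, inv_mul_cancel₀ hl, one_smul]
  obtain ⟨k, hk⟩ := hS (s * s'⁻¹)
  have h5 : s * s'⁻¹ = 1 := by
    apply hinj
    rw [map_one]
    ext x
    obtain ⟨c, hc⟩ := hy x
    have hm : ∀ m : ℕ, ((ρ (s * s'⁻¹)) ^ m) x = x + ((m:F) * c) • w := by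
      intro m
      induction m with
      | zero => simp
      | succ m ih =>
        rw [pow_succ', LinearEquiv.mul_apply, ih, map_add, map_smul, hyw, hc]
        push_cast
        rw [add_mul, one_mul, add_smul]; abel
    have h6 := hm (p^k)
    rw [← map_pow, hk, map_one] at h6
    have h7 : ((p^k : ℕ) * c) • w = 0 := by
      have : x = x + (((p^k : ℕ) : F) * c) • w := h6
      simpa using this.symm
    have h8 : c = 0 := by
      rcases smul_eq_zero.1 h7 with h | h
      · rcases mul_eq_zero.1 h with h | h
        · exfalso; push_cast at h; exact pow_ne_zero k hpF h
        · exact h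
      · exact absurd h hw0
    rw [hc, h8, zero_smul, add_zero]; rfl
  rw [mul_inv_eq_one] at h5
  exact h5

lemma card_roots_le [Finite F] (p : ℕ) (hp : 0 < p) : Nat.card {l : F // l ^ p = 1} ≤ p := by
  classical
  have h : Nat.card {l : F // l ^ p = 1} = (Polynomial.nthRoots p (1:F)).toFinset.card := by
    apply Nat.subtype_card
    intro x
    rw [Multiset.mem_toFinset, Polynomial.mem_nthRoots hp]
  rw [h]
  exact (Multiset.toFinset_card_le _).trans (Polynomial.card_nthRoots p 1)

lemma count_mon [Fintype F] {κ W S : Type*} [Finite κ] [AddCommGroup W] [Module F W] [FiniteDimensional F W]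
    [Group S] [Finite S] {p b : ℕ} (hp : p.Prime) (hpF : (p : F) ≠ 0)
    (hb : (Odd p ∧ b = 1) ∨ (p = 2 ∧ b = 2)) (hW : finrank F W = b)
    (hS : IsPGroup p S) (ρ : S →* ((κ → W) ≃ₗ[F] (κ → W))) (hinj : Function.Injective ρ)
    (hK : ∀ s, ρ s ∈ Kmon F κ W) :
    Nat.card {s : S // s ^ p = 1 ∧ IsRef (ρ s)} * (Fintype.card F - 1) ≤
      Nat.card κ * ((Fintype.card F ^ b - 1) * p) := by
  classical
  have hWf : Finite W := Module.finite_of_finite F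
  have key : ∀ s : {s : S // s ^ p = 1 ∧ IsRef (ρ s)}, ∃ (i : κ) (t : W) (l : F), t ≠ 0 ∧ l ^ p = 1 ∧
      ρ s (Pi.single i t) = l • Pi.single i t ∧
      ∀ x, ∃ c : F, ρ s x = x + c • (Pi.single i t : κ → W) := by
    intro s
    exact mon_block hb hW (ρ s) (hK s) (by rw [← map_pow, s.2.1, map_one]) s.2.2
  choose i t l ht hl hρ hx using key
  let Φ : {s : S // s ^ p = 1 ∧ IsRef (ρ s)} × Fˣ → κ × ({t : W // t ≠ 0} × {l : F // l ^ p = 1}) :=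
    fun a => (i a.1, ⟨(a.2 : F) • t a.1, smul_ne_zero a.2.ne_zero (ht a.1)⟩, ⟨l a.1, hl a.1⟩)
  have hΦ : Function.Injective Φ := by
    rintro ⟨s, c⟩ ⟨s', c'⟩ h
    have h1 : i s = i s' := congrArg Prod.fst h
    have h2 : (c : F) • t s = (c' : F) • t s' := congrArg (fun a => (a.2.1 : W)) h
    have h3 : l s = l s' := congrArg (fun a => (a.2.2 : F)) h
    have hts : t s' = ((c':F)⁻¹ * c) • t s := by
      rw [mul_smul, h2, smul_smul, inv_mul_cancel₀ c'.ne_zero, one_smul]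
    have hsing : (Pi.single (i s') (t s') : κ → W) = ((c':F)⁻¹ * c) • (Pi.single (i s) (t s) : κ → W) := by
      rw [← h1, hts, Pi.single_smul]
    have hne : ((c':F)⁻¹ * c) ≠ 0 := mul_ne_zero (inv_ne_zero c'.ne_zero) c.ne_zero
    have hl0 : l s ≠ 0 := by
      intro h0
      have := hl s
      rw [h0, zero_pow hp.ne_zero] at this
      exact zero_ne_one this
    have hss : s = s' := by
      apply Subtype.ext
      apply refl_unique hpF hS ρ hinj s.1 s'.1 (Pi.single (i s) (t s)) (l s) hl0
      · intro h0; exact ht s (by simpa using h0)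
      · exact hρ s
      · have := hρ s'
        rw [hsing, map_smul, smul_comm] at this
        rw [h3]
        exact smul_right_injective _ hne this
      · exact hx s
      · intro x
        obtain ⟨e, he⟩ := hx s' x
        exact ⟨e * ((c':F)⁻¹ * c), by rw [he, hsing, smul_smul]⟩
    subst hss
    congr 1
    apply Units.ext
    exact smul_left_injective F (ht s) h2
  have hcard := Nat.card_le_card_of_injective Φ hΦ
  rw [Nat.card_prod, Nat.card_prod, Nat.card_prod, Nat.card_units, Nat.card_eq_fintype_card (α := F)] at hcard
  have hWc : Nat.card {t : W // t ≠ 0} = Fintype.card F ^ b - 1 := by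
    have := Fintype.ofFinite W
    rw [Nat.card_eq_fintype_card, Fintype.card_subtype_compl, Fintype.card_subtype_eq, Module.card_eq_pow_finrank (K := F), hW]
  rw [hWc] at hcard
  refine hcard.trans ?_
  gcongr
  exact card_roots_le p hp.pos

/-- extension hom -/
def extHom {V U V' : Type*} [AddCommGroup V] [Module F V] [AddCommGroup U] [Module F U]
    [AddCommGroup V'] [Module F V'] (θ : (V × U) ≃ₗ[F] V') : (V ≃ₗ[F] V) →* (V' ≃ₗ[F] V') where
  toFun g := (θ.symm.trans (g.prodCongr (LinearEquiv.refl F U))).trans θ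
  map_one' := by
    ext x
    show θ ((θ.symm x).1, (θ.symm x).2) = x
    simp
  map_mul' g h := by
    ext x
    show θ (g (h (θ.symm x).1), (θ.symm x).2) = θ (g (θ.symm (θ (h (θ.symm x).1, (θ.symm x).2))).1, (θ.symm (θ (h (θ.symm x).1, (θ.symm x).2))).2)
    simp

lemma extHom_apply {V U V' : Type*} [AddCommGroup V] [Module F V] [AddCommGroup U] [Module F U]
    [AddCommGroup V'] [Module F V'] (θ : (V × U) ≃ₗ[F] V') (g : V ≃ₗ[F] V) (x : V') :
    extHom θ g x = θ (g (θ.symm x).1, (θ.symm x).2) := rfl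

lemma extHom_inj {V U V' : Type*} [AddCommGroup V] [Module F V] [AddCommGroup U] [Module F U]
    [AddCommGroup V'] [Module F V'] (θ : (V × U) ≃ₗ[F] V') : Function.Injective (extHom θ) := by
  intro g h e
  ext x
  have := congrArg (fun u => u (θ (x, 0))) e
  simp only [extHom_apply, LinearEquiv.symm_apply_apply] at this
  exact congrArg Prod.fst (θ.injective this)

lemma extHom_ref {V U V' : Type*} [AddCommGroup V] [Module F V] [AddCommGroup U] [Module F U]
    [AddCommGroup V'] [Module F V'] (θ : (V × U) ≃ₗ[F] V') (g : V ≃ₗ[F] V) (hg : IsRef g) :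
    IsRef (extHom θ g) := by
  obtain ⟨h1, w, hw⟩ := hg
  refine ⟨fun h => h1 (extHom_inj θ (by rw [h, map_one])), θ (w, 0), fun x => ?_⟩
  obtain ⟨c, hc⟩ := hw (θ.symm x).1
  refine ⟨c, ?_⟩
  have h2 : ((θ.symm x).1 + c • w, (θ.symm x).2) = θ.symm x + c • ((w, 0) : V × U) := by
    ext <;> simp
  rw [extHom_apply, hc, h2, map_add, map_smul, LinearEquiv.apply_symm_apply]

lemma count_refl [Fintype F] {V S : Type*} [AddCommGroup V] [Module F V] [FiniteDimensional F V]
    [Group S] [Finite S] {p : ℕ} (hp : p.Prime) (hpq : p ∣ Fintype.card F - 1)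
    (hS : IsPGroup p S) (ρ : S →* (V ≃ₗ[F] V)) (hinj : Function.Injective ρ) :
    Nat.card {s : S // s ^ p = 1 ∧ IsRef (ρ s)} ≤ (finrank F V + 1) * (Fintype.card F + 1) := by
  set q := Fintype.card F with hq
  have hq2 : 2 ≤ q := Fintype.one_lt_card
  have hpF : (p : F) ≠ 0 := by
    intro h
    obtain ⟨k, hk⟩ := hpq
    have h1 : ((q - 1 : ℕ) : F) = 0 := by rw [hk]; push_cast; rw [h, zero_mul]
    rw [Nat.cast_sub (by omega), FiniteField.cast_card_eq_zero] at h1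
    simp at h1
  set n := finrank F V with hn
  obtain ⟨b, m, e, hb, hbm, he⟩ : ∃ b m e : ℕ, ((Odd p ∧ b = 1) ∨ (p = 2 ∧ b = 2)) ∧ n + e = b * m ∧ e + 1 ≤ b := by
    rcases hp.eq_two_or_odd' with h | h
    · refine ⟨2, (n+1)/2, n%2, Or.inr ⟨h, rfl⟩, by omega, by omega⟩
    · exact ⟨1, n, 0, Or.inl ⟨h, rfl⟩, by omega, by omega⟩
  have hb0 : 0 < b := by omega
  let U := Fin e → F
  let W := Fin b → F
  have hWr : finrank F W = b := by simp [W]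
  have hWn : Nontrivial W := Module.nontrivial_of_finrank_pos (R := F) (by omega)
  have hV' : finrank F (Fin m → W) = b * m := by
    rw [Module.finrank_pi_fintype]; simp [W, mul_comm]
  have θ0 : Nonempty ((V × U) ≃ₗ[F] (Fin m → W)) := by
    apply FiniteDimensional.nonempty_linearEquiv_of_finrank_eq
    rw [hV', Module.finrank_prod, ← hbm]; simp [U, hn]
  obtain ⟨θ⟩ := θ0
  have hfin : Finite ((Fin m → W) ≃ₗ[F] (Fin m → W)) := finite_aut
  have hKc : padicValNat p (Nat.card (Kmon F (Fin m) W)) = padicValNat p (Nat.card ((Fin m → W) ≃ₗ[F] (Fin m → W))) := by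
    rw [card_K, card_aut, card_aut, hV', hWr, Nat.card_fin, ← N2 p q b m hp hq2 hpq hb]
  obtain ⟨g, hg⟩ := conj_in p hp hS ((extHom θ).comp ρ) (Kmon F (Fin m) W) hKc
  let θ' : (V × U) ≃ₗ[F] (Fin m → W) := θ.trans g.symm
  have hθ' : ∀ s, extHom θ' (ρ s) ∈ Kmon F (Fin m) W := fun s => hg s
  have hc := count_mon (b := b) hp hpF hb hWr hS ((extHom θ').comp ρ) ((extHom_inj θ').comp hinj) hθ'
  have hle : Nat.card {s : S // s ^ p = 1 ∧ IsRef (ρ s)} ≤ Nat.card {s : S // s ^ p = 1 ∧ IsRef (((extHom θ').comp ρ) s)} := by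
    apply Nat.card_le_card_of_injective (fun s => ⟨s.1, s.2.1, extHom_ref θ' _ s.2.2⟩)
    intro s s' h
    exact Subtype.ext (congrArg (fun a => a.1) h)
  refine hle.trans ?_
  generalize Nat.card {s : S // s ^ p = 1 ∧ IsRef (((extHom θ').comp ρ) s)} = T at hc
  rw [Nat.card_fin] at hc
  have hq1 : 0 < q - 1 := by omega
  rcases hb with ⟨-, rfl⟩ | ⟨rfl, rfl⟩
  · have hpl : p ≤ q - 1 := Nat.le_of_dvd hq1 hpq
    have h1 : T * (q-1) ≤ (m * p) * (q-1) := by rw [← hq, pow_one] at hc; linarith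
    have h2 := Nat.le_of_mul_le_mul_right h1 hq1
    have : m * p ≤ (n+1)*(q+1) := Nat.mul_le_mul (by omega) (by omega)
    omega
  · have hsq : q^2 - 1 = (q+1)*(q-1) := by
      have := Nat.sq_sub_sq q 1; simpa using this
    rw [← hq, hsq] at hc
    have h1 : T * (q-1) ≤ (2*m*(q+1)) * (q-1) := by linarith
    have h2 := Nat.le_of_mul_le_mul_right h1 hq1
    have : 2*m*(q+1) ≤ (n+1)*(q+1) := Nat.mul_le_mul (by omega) le_rfl
    omega
end refl2

section psl
open Module

lemma nil_sylow {A G Q : Type*} [Group A] [Finite A] [Group G] [Group Q] [Finite Q] {p : ℕ} (hp : p.Prime)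
    (hQ : IsPGroup p Q) (f : A →* Q) (hf : f.ker ≤ Subgroup.center A) (ρ : A →* G) :
    ∃ S : Subgroup G, Finite S ∧ IsPGroup p S ∧ ∀ a, (ρ a) ^ p = 1 → ρ a ∈ S := by
  have : Fact p.Prime := ⟨hp⟩
  have h1 : Group.IsNilpotent Q := hQ.isNilpotent
  have h2 : Group.IsNilpotent A := Subgroup.isNilpotent_of_ker_le_center f hf
  have h3 : Group.IsNilpotent ρ.range := Group.nilpotent_of_surjective ρ.rangeRestrict ρ.rangeRestrict_surjective
  have hfin : Finite ρ.range := Finite.of_surjective ρ.rangeRestrict ρ.rangeRestrict_surjective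
  have h34 : Group.IsNilpotent ρ.range ↔ ∀ (p : ℕ), Fact (Nat.Prime p) → ∀ (P : Sylow p ρ.range), (P : Subgroup ρ.range).Normal :=
    (Group.isNilpotent_of_finite_tfae (G := ρ.range)).out 0 3
  have h4 : ∀ P : Sylow p ρ.range, (P : Subgroup ρ.range).Normal :=
    h34.1 h3 p ⟨hp⟩
  let P : Sylow p ρ.range := default
  refine ⟨(P : Subgroup ρ.range).map ρ.range.subtype, ?_, P.isPGroup'.map _, ?_⟩
  · have : Finite (P : Subgroup ρ.range) := inferInstance
    exact Set.Finite.image _ (Set.toFinite _)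
  · intro a ha
    have hu : IsPGroup p (Subgroup.zpowers (ρ.rangeRestrict a)) := by
      have h0 : (ρ.rangeRestrict a) ^ p = 1 := Subtype.ext ha
      rintro ⟨x, k, rfl⟩
      refine ⟨1, Subtype.ext ?_⟩
      show ((ρ.rangeRestrict a) ^ k) ^ (p ^ 1) = 1
      rw [pow_one, ← zpow_natCast, ← _root_.zpow_mul, mul_comm, _root_.zpow_mul, zpow_natCast, h0, _root_.one_zpow]
    obtain ⟨R, hR⟩ := hu.exists_le_sylow
    have hRP : R = P := by
      have := Sylow.unique_of_normal P (h4 P)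
      exact Subsingleton.elim _ _
    refine ⟨ρ.rangeRestrict a, ?_, rfl⟩
    rw [← hRP]
    exact hR (Subgroup.mem_zpowers _)

variable {F : Type*} [Field F] {n : ℕ}

/-- scalar -/
def sc (n : ℕ) : Fˣ →* ((Fin n → F) ≃ₗ[F] (Fin n → F)) := DistribMulAction.toModuleAut F (Fin n → F)

lemma sc_apply (c : Fˣ) (x : Fin n → F) : sc n c x = (c : F) • x := rfl

/-- linear action -/
def lin : Matrix.SpecialLinearGroup (Fin n) F →* ((Fin n → F) ≃ₗ[F] (Fin n → F)) :=
  Matrix.SpecialLinearGroup.toLin'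

lemma lin_inj : Function.Injective (lin (F := F) (n := n)) := Matrix.SpecialLinearGroup.toLin'_injective

lemma ctr (z : Matrix.SpecialLinearGroup (Fin n) F) :
    z ∈ Subgroup.center (Matrix.SpecialLinearGroup (Fin n) F) ↔ ∃ c : F, ∀ x, lin z x = c • x := by
  constructor
  · intro h
    obtain ⟨r, -, hr⟩ := Matrix.SpecialLinearGroup.mem_center_iff.1 h
    refine ⟨r, fun x => ?_⟩
    rw [lin, Matrix.SpecialLinearGroup.toLin'_apply, ← hr, Matrix.toLin'_apply, Matrix.scalar_apply]
    ext i
    simp [Matrix.mulVec_diagonal]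
  · rintro ⟨c, hc⟩
    rw [Subgroup.mem_center_iff]
    intro g
    apply lin_inj
    ext1 x
    rw [map_mul, map_mul, LinearEquiv.mul_apply, LinearEquiv.mul_apply, hc, hc, map_smul]

/-- combined hom -/
def comb (P : Subgroup (Matrix.SpecialLinearGroup (Fin n) F)) :
    Fˣ × P →* ((Fin n → F) ≃ₗ[F] (Fin n → F)) where
  toFun a := sc n a.1 * lin a.2.1
  map_one' := by simp
  map_mul' a b := by
    ext1 x
    simp only [Prod.fst_mul, Prod.snd_mul, Subgroup.coe_mul, map_mul, LinearEquiv.mul_apply, sc_apply, map_smul]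

/-- reflection type -/
def RT (p : ℕ) (z : ProjectiveSpecialLinearGroup (Fin n) F) : Prop :=
  ∃ (g : Matrix.SpecialLinearGroup (Fin n) F) (c : Fˣ), (QuotientGroup.mk g : ProjectiveSpecialLinearGroup (Fin n) F) = z ∧
    (sc n c * lin g) ^ p = 1 ∧ IsRef (sc n c * lin g)

lemma sc_comm (c : Fˣ) (u : (Fin n → F) ≃ₗ[F] (Fin n → F)) : sc n c * u = u * sc n c := by
  ext1 x
  simp only [LinearEquiv.mul_apply, sc_apply, map_smul]

lemma RT_conj {p : ℕ} {z : ProjectiveSpecialLinearGroup (Fin n) F} (x : ProjectiveSpecialLinearGroup (Fin n) F)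
    (h : RT p z) : RT p (x * z * x⁻¹) := by
  obtain ⟨g, c, rfl, hp, hr⟩ := h
  obtain ⟨y, rfl⟩ := QuotientGroup.mk_surjective x
  have e : sc n c * lin (y * g * y⁻¹) = lin y * (sc n c * lin g) * (lin y)⁻¹ := by
    rw [map_mul, map_mul, map_inv, ← mul_assoc, ← mul_assoc, sc_comm, mul_assoc (lin y)]
  refine ⟨y * g * y⁻¹, c, rfl, ?_, ?_⟩
  · rw [e, conj_pow, hp]; simp
  · rw [e]
    obtain ⟨h1, w, hw⟩ := hr
    refine ⟨fun h => h1 ?_, lin y w, fun v => ?_⟩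
    · rw [mul_inv_eq_one] at h
      simpa using h
    · obtain ⟨d, hd⟩ := hw ((lin y)⁻¹ v)
      refine ⟨d, ?_⟩
      rw [LinearEquiv.mul_apply, LinearEquiv.mul_apply, hd, map_add, map_smul, ← LinearEquiv.mul_apply, mul_inv_cancel]; rfl

lemma ref_dvd [Fintype F] {V : Type*} [AddCommGroup V] [Module F V] {p : ℕ} (hp : p.Prime) (hpF : (p : F) ≠ 0)
    (u : V ≃ₗ[F] V) (hup : u ^ p = 1) (hu : IsRef u) : p ∣ Fintype.card F - 1 := by
  have : Fact p.Prime := ⟨hp⟩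
  obtain ⟨h1, w, hw⟩ := hu
  obtain ⟨e, he⟩ := hw w
  have hl : u w = (1 + e) • w := by rw [he, add_smul, one_smul]
  have hk : ∀ k : ℕ, (u ^ k) w = (1+e)^k • w := by
    intro k
    induction k with
    | zero => simp
    | succ k ih => rw [pow_succ', LinearEquiv.mul_apply, ih, map_smul, hl, smul_smul, pow_succ]
  have hw0 : w ≠ 0 := by
    rintro rfl
    apply h1
    ext1 x
    obtain ⟨c, hc⟩ := hw x
    rw [hc, smul_zero, add_zero]; rfl
  have h2 := hk p
  rw [hup] at h2
  have h3 : ((1+e)^p - 1) • w = 0 := by rw [sub_smul, one_smul, ← h2]; exact sub_self _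
  have h4 : (1+e)^p = 1 := sub_eq_zero.1 ((smul_eq_zero.1 h3).resolve_right hw0)
  by_cases he0 : e = 0
  · exfalso
    rw [he0, add_zero, one_smul] at hl
    apply h1
    ext1 x
    obtain ⟨c, hc⟩ := hw x
    have hm : ∀ m : ℕ, (u ^ m) x = x + ((m:F) * c) • w := by
      intro m
      induction m with
      | zero => simp
      | succ m ih =>
        rw [pow_succ', LinearEquiv.mul_apply, ih, map_add, map_smul, hl, hc]
        push_cast
        rw [add_mul, one_mul, add_smul]; abel
    have h6 := hm p
    rw [hup] at h6
    have h7 : ((p:F) * c) • w = 0 := by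
      have : x = x + ((p : F) * c) • w := h6
      simpa using this.symm
    have h8 : c = 0 := by
      rcases smul_eq_zero.1 h7 with h | h
      · exact (mul_eq_zero.1 h).resolve_left hpF
      · exact absurd h hw0
    rw [hc, h8, zero_smul, add_zero]; rfl
  · have h5 : orderOf (1 + e) = p := orderOf_eq_prime h4 (by simpa using he0)
    have h6 : (1+e) ≠ 0 := by
      intro h
      rw [h, zero_pow hp.ne_zero] at h4
      exact zero_ne_one h4
    rw [← h5]
    exact orderOf_dvd_of_pow_eq_one (FiniteField.pow_card_sub_one_eq_one _ h6)

lemma RT_count [Fintype F] {p : ℕ} (hp : p.Prime) (hpF : (p : F) ≠ 0)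
    (P : Subgroup (ProjectiveSpecialLinearGroup (Fin n) F)) (hP : IsPGroup p P) :
    Nat.card {z : P // RT p z.1} ≤ (n + 1) * (Fintype.card F + 1) := by
  classical
  by_cases hpq : p ∣ Fintype.card F - 1
  swap
  · have : IsEmpty {z : P // RT p z.1} := by
      constructor
      rintro ⟨z, g, c, -, h1, h2⟩
      exact hpq (ref_dvd hp hpF _ h1 h2)
    rw [Nat.card_of_isEmpty]; positivity
  let Ph : Subgroup (Matrix.SpecialLinearGroup (Fin n) F) := P.comap (QuotientGroup.mk' _)
  let f : Fˣ × Ph →* P := ((QuotientGroup.mk' (Subgroup.center (Matrix.SpecialLinearGroup (Fin n) F))).subgroupComap P).comp (MonoidHom.snd _ _)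
  have hf : f.ker ≤ Subgroup.center _ := by
    rintro ⟨c, g⟩ h
    have h1 : (QuotientGroup.mk g.1 : ProjectiveSpecialLinearGroup (Fin n) F) = 1 := congrArg Subtype.val h
    rw [QuotientGroup.eq_one_iff, Subgroup.mem_center_iff] at h1
    rw [Subgroup.mem_center_iff]
    rintro ⟨d, k⟩
    refine Prod.ext (mul_comm _ _) (Subtype.ext (h1 k.1))
  obtain ⟨S, hSf, hS, hmem⟩ := nil_sylow hp hP f hf (comb Ph)
  have hc := count_refl hp hpq hS S.subtype S.subtype_injective
  rw [Module.finrank_fin_fun] at hc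
  refine le_trans ?_ hc
  choose g c hg hup hr using fun z : {z : P // RT p z.1} => z.2
  have hgm : ∀ z, g z ∈ Ph := fun z => by
    show QuotientGroup.mk (g z) ∈ P
    rw [hg]; exact z.1.2
  apply Nat.card_le_card_of_injective
    (fun z => (⟨⟨sc n (c z) * lin (g z), hmem (c z, ⟨g z, hgm z⟩) (hup z)⟩, Subtype.ext (hup z), hr z⟩ : 
      {s : S // s ^ p = 1 ∧ IsRef (S.subtype s)}))
  intro z z' h
  have h1 : sc n (c z) * lin (g z) = sc n (c z') * lin (g z') := congrArg (fun a => a.1.1) h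
  have h2 : (g z)⁻¹ * g z' ∈ Subgroup.center _ := by
    rw [ctr]
    refine ⟨((c z')⁻¹ * c z : Fˣ), fun x => ?_⟩
    have h3 : lin ((g z)⁻¹ * g z') = sc n ((c z')⁻¹ * c z) := by
      rw [map_mul, map_inv, inv_mul_eq_iff_eq_mul, ← sc_comm, map_mul, map_inv, mul_assoc, h1, inv_mul_cancel_left]
    rw [h3, sc_apply]
  apply Subtype.ext
  apply Subtype.ext
  rw [← hg z, ← hg z']
  exact QuotientGroup.eq.2 h2
end psl

section psl2
open Module
variable {F : Type*} [Field F] {n : ℕ}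

lemma center_card [Fintype F] (hn : 1 ≤ n) :
    Nat.card (Subgroup.center (Matrix.SpecialLinearGroup (Fin n) F)) ≤ n := by
  rw [Nat.card_congr (Matrix.SpecialLinearGroup.center_equiv_rootsOfUnity).toEquiv]
  have h : max (Fintype.card (Fin n)) 1 = n := by simp [hn]
  rw [h]
  have : NeZero n := ⟨by omega⟩
  exact card_rootsOfUnity F n

lemma cent_count [Fintype F] (hn : 1 ≤ n) (z w : ProjectiveSpecialLinearGroup (Fin n) F)
    (g : Matrix.SpecialLinearGroup (Fin n) F) (hg : (QuotientGroup.mk g : ProjectiveSpecialLinearGroup (Fin n) F) = z) :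
    Nat.card {x : ProjectiveSpecialLinearGroup (Fin n) F // x * z = w * x} ≤
      n * Fintype.card F ^ finrank F (Cm ((lin g : (Fin n → F) ≃ₗ[F] (Fin n → F)) : Module.End F (Fin n → F))) := by
  classical
  subst hg
  obtain ⟨k, rfl⟩ := QuotientGroup.mk_surjective w
  set X := {x : ProjectiveSpecialLinearGroup (Fin n) F // x * QuotientGroup.mk g = QuotientGroup.mk k * x} with hX
  let o : X → Matrix.SpecialLinearGroup (Fin n) F := fun x => x.1.out
  have ho : ∀ x : X, (QuotientGroup.mk (o x) : ProjectiveSpecialLinearGroup (Fin n) F) = x.1 := fun x => QuotientGroup.out_eq' _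
  have hζ : ∀ x : X, ∃ ζ : Subgroup.center (Matrix.SpecialLinearGroup (Fin n) F), o x * g = ζ.1 * (k * o x) := by
    intro x
    have h1 := x.2
    rw [← ho x] at h1
    have h2 : (QuotientGroup.mk (k * o x) : ProjectiveSpecialLinearGroup (Fin n) F) = QuotientGroup.mk (o x * g) := h1.symm
    have h3 := QuotientGroup.eq.1 h2
    refine ⟨⟨_, h3⟩, ?_⟩
    have h4 := Subgroup.mem_center_iff.1 h3 (k * o x)
    rw [← h4]; group
  choose ζ hζ using hζ
  have hg0 : ∀ ζ : Subgroup.center (Matrix.SpecialLinearGroup (Fin n) F), ∃ g0 : Matrix.SpecialLinearGroup (Fin n) F,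
      (∃ y : Matrix.SpecialLinearGroup (Fin n) F, y * g = ζ.1 * (k * y)) → g0 * g = ζ.1 * (k * g0) := by
    intro ζ
    by_cases h : ∃ y : Matrix.SpecialLinearGroup (Fin n) F, y * g = ζ.1 * (k * y)
    · exact ⟨h.choose, fun _ => h.choose_spec⟩
    · exact ⟨1, fun h' => absurd h' h⟩
  choose g0 hg0 using hg0
  have hcm : ∀ x : X, g * ((g0 (ζ x))⁻¹ * o x) = ((g0 (ζ x))⁻¹ * o x) * g := by
    intro x
    have h1 := hg0 (ζ x) ⟨o x, hζ x⟩
    have h2 := hζ x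
    rw [mul_assoc, h2]
    have h3 : g * (g0 (ζ x))⁻¹ = (g0 (ζ x))⁻¹ * ((ζ x).1 * k) := by
      rw [eq_inv_mul_iff_mul_eq, ← mul_assoc, h1]; group
    rw [← mul_assoc, h3]; group
  let Φ : X → Subgroup.center (Matrix.SpecialLinearGroup (Fin n) F) ×
      Cm ((lin g : (Fin n → F) ≃ₗ[F] (Fin n → F)) : Module.End F (Fin n → F)) := fun x =>
    (ζ x, ⟨((lin ((g0 (ζ x))⁻¹ * o x) : (Fin n → F) ≃ₗ[F] (Fin n → F)) : Module.End F (Fin n → F)), by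
      rw [mem_Cm]
      intro v
      have h : lin (g * ((g0 (ζ x))⁻¹ * o x)) v = lin (((g0 (ζ x))⁻¹ * o x) * g) v := congrArg (fun t => lin t v) (hcm x)
      rw [map_mul lin g, map_mul lin _ g] at h
      exact h⟩)
  have hΦ : Function.Injective Φ := by
    intro x y h
    have h1 : ζ x = ζ y := congrArg Prod.fst h
    have h2 : ((lin ((g0 (ζ x))⁻¹ * o x) : (Fin n → F) ≃ₗ[F] (Fin n → F)) : Module.End F (Fin n → F)) =
      ((lin ((g0 (ζ y))⁻¹ * o y) : (Fin n → F) ≃ₗ[F] (Fin n → F)) : Module.End F (Fin n → F)) := congrArg (fun a => a.2.1) h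
    have h3 := lin_inj (LinearEquiv.toLinearMap_injective h2)
    rw [h1] at h3
    have h4 := mul_left_cancel h3
    apply Subtype.ext
    rw [← ho x, ← ho y, h4]
  have hfin : Finite (Module.End F (Fin n → F)) := Module.finite_of_finite F
  have hc := Nat.card_le_card_of_injective Φ hΦ
  rw [Nat.card_prod] at hc
  refine hc.trans (Nat.mul_le_mul (center_card hn) ?_)
  have := Fintype.ofFinite (Cm ((lin g : (Fin n → F) ≃ₗ[F] (Fin n → F)) : Module.End F (Fin n → F)))
  rw [Nat.card_eq_fintype_card, Module.card_eq_pow_finrank (K := F)]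

lemma type_dim {p : ℕ} (hpF : (p : F) ≠ 0) (hn : 3 ≤ n)
    (z : ProjectiveSpecialLinearGroup (Fin n) F) (hz : z ^ p = 1) (hz1 : z ≠ 1) :
    ∃ g : Matrix.SpecialLinearGroup (Fin n) F, (QuotientGroup.mk g : ProjectiveSpecialLinearGroup (Fin n) F) = z ∧
      ((RT p z ∧ finrank F (Cm ((lin g : (Fin n → F) ≃ₗ[F] (Fin n → F)) : Module.End F (Fin n → F))) + 2 * n ≤ n^2 + 2) ∨
       (finrank F (Cm ((lin g : (Fin n → F) ≃ₗ[F] (Fin n → F)) : Module.End F (Fin n → F))) + 2 * n ≤ n^2 ∧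
        finrank F (Cm ((lin g : (Fin n → F) ≃ₗ[F] (Fin n → F)) : Module.End F (Fin n → F))) + 4 * n ≤ n^2 + 10)) := by
  obtain ⟨g, rfl⟩ := QuotientGroup.mk_surjective z
  refine ⟨g, rfl, ?_⟩
  have h1 : g ^ p ∈ Subgroup.center _ := by
    rw [← QuotientGroup.eq_one_iff]; exact hz
  obtain ⟨s, hs⟩ := (ctr _).1 h1
  set y : Module.End F (Fin n → F) := ((lin g : (Fin n → F) ≃ₗ[F] (Fin n → F)) : Module.End F (Fin n → F)) with hy
  have hpow : ∀ k : ℕ, ∀ x, (y ^ k) x = lin (g ^ k) x := by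
    intro k
    induction k with
    | zero => intro x; simp
    | succ k ih => intro x; rw [pow_succ, pow_succ, Module.End.mul_apply, ih, map_mul, LinearEquiv.mul_apply]; rfl
  have hyp : y ^ p = s • 1 := by
    apply LinearMap.ext
    intro x
    rw [hpow, hs]; rfl
  have hnt : Nontrivial (Fin n → F) := Module.nontrivial_of_finrank_pos (R := F) (by rw [Module.finrank_fin_fun]; omega)
  have hs0 : s ≠ 0 := by
    rintro rfl
    obtain ⟨x, hx⟩ := exists_ne (0 : Fin n → F)
    have := hs x
    rw [zero_smul] at this
    exact hx ((LinearEquiv.map_eq_zero_iff _).1 this)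
  have hns : ∀ a : F, y ≠ a • 1 := by
    intro a ha
    apply hz1
    rw [QuotientGroup.eq_one_iff, ctr]
    exact ⟨a, fun x => congrArg (fun t : Module.End F (Fin n → F) => t x) ha⟩
  have hb := Cm_bound y p s hpF hs0 hyp hns (by rw [Module.finrank_fin_fun]; exact hn)
  rw [Module.finrank_fin_fun] at hb
  rcases hb with ⟨⟨a, ha⟩, hb⟩ | hb
  swap
  · exact Or.inr hb
  refine Or.inl ⟨?_, hb⟩
  have hrk := LinearMap.finrank_range_add_finrank_ker (y - a • 1)
  rw [ha, Module.finrank_fin_fun] at hrk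
  have hker : ∃ v ∈ LinearMap.ker (y - a • 1), v ≠ 0 := by
    apply Submodule.exists_mem_ne_zero_of_ne_bot
    intro h
    rw [h, finrank_bot] at hrk
    omega
  obtain ⟨v, hv, hv0⟩ := hker
  have hv' : y v = a • v := by
    rw [LinearMap.mem_ker, LinearMap.sub_apply, sub_eq_zero] at hv; exact hv
  have ha0 : a ≠ 0 := by
    rintro rfl
    rw [zero_smul] at hv'
    exact hv0 ((lin g).map_eq_zero_iff.1 hv')
  have hvk : ∀ k : ℕ, (y ^ k) v = a ^ k • v := by
    intro k
    induction k with
    | zero => simp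
    | succ k ih => rw [pow_succ', Module.End.mul_apply, ih, map_smul, hv', smul_smul, pow_succ]
  have hap : a ^ p = s := by
    have h2 := hvk p
    rw [hyp] at h2
    have h3 : (a^p - s) • v = 0 := by rw [sub_smul, ← h2]; exact sub_self _
    exact sub_eq_zero.1 ((smul_eq_zero.1 h3).resolve_right hv0)
  let c : Fˣ := (Units.mk0 a ha0)⁻¹
  have hc : (c : F) = a⁻¹ := by simp [c]
  refine ⟨g, c, rfl, ?_, ?_, ?_⟩
  · have hcomm : Commute (sc n c) (lin g) := sc_comm _ _
    rw [hcomm.mul_pow, ← map_pow, ← map_pow]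
    ext1 x
    rw [LinearEquiv.mul_apply, hs, sc_apply, smul_smul, ← hap]
    push_cast
    rw [hc, ← mul_pow, inv_mul_cancel₀ ha0, one_pow, one_smul]; rfl
  · intro h
    apply hns a
    apply LinearMap.ext
    intro x
    have h2 : (sc n c * lin g) x = x := by rw [h]; rfl
    rw [LinearEquiv.mul_apply, sc_apply, hc] at h2
    show lin g x = a • x
    nth_rewrite 2 [← h2]
    rw [smul_smul, mul_inv_cancel₀ ha0, one_smul]
  · obtain ⟨w, -, hw⟩ := finrank_eq_one_iff'.1 ha
    refine ⟨w, fun x => ?_⟩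
    obtain ⟨d, hd⟩ := hw ⟨(y - a • 1) x, LinearMap.mem_range_self _ x⟩
    have hd' : d • (w : Fin n → F) = lin g x - a • x := congrArg Subtype.val hd
    refine ⟨a⁻¹ * d, ?_⟩
    rw [LinearEquiv.mul_apply, sc_apply, hc, mul_smul, hd', smul_sub, smul_smul, inv_mul_cancel₀ ha0, one_smul]
    abel

lemma cover {G I : Type*} [Finite G] [Finite I] (B : Set G) (R : I → G → Prop) (M : ℕ)
    (hB : ∀ x ∈ B, ∃ i, R i x) (hM : ∀ i, Nat.card {x // R i x} ≤ M) : Nat.card B ≤ Nat.card I * M := by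
  classical
  have := Fintype.ofFinite I
  choose f hf using hB
  let Φ : B → Σ i, {x // R i x} := fun x => ⟨f x.1 x.2, x.1, hf x.1 x.2⟩
  have hΦ : Function.Injective Φ := by
    intro x y h
    have : ∀ a b : Σ i, {x // R i x}, a = b → a.2.1 = b.2.1 := by rintro a b rfl; rfl
    exact Subtype.ext (this _ _ h)
  refine (Nat.card_le_card_of_injective Φ hΦ).trans ?_
  rw [Nat.card_sigma]
  refine (Finset.sum_le_card_nsmul _ _ M (fun i _ => hM i)).trans ?_
  rw [smul_eq_mul, Finset.card_univ, Nat.card_eq_fintype_card]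

lemma bad_count [Fintype F] {p : ℕ} (hp : p.Prime) (hpF : (p : F) ≠ 0) (hn : 3 ≤ n)
    (P : Subgroup (ProjectiveSpecialLinearGroup (Fin n) F)) (hP : IsPGroup p P) :
    Nat.card {x : ProjectiveSpecialLinearGroup (Fin n) F |
          P ⊓ Subgroup.map (MulAut.conj x⁻¹).toMonoidHom P ≠ ⊥} ≤
    ((n + 1) * (Fintype.card F + 1)) ^ 2 * (n * Fintype.card F ^ (n^2 + 2 - 2*n)) +
    (Nat.card P) ^ 2 * (n * Fintype.card F ^ (min (n^2 - 2*n) (n^2 + 10 - 4*n))) := by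
  classical
  have hfp : Fact p.Prime := ⟨hp⟩
  have hq1 : 1 ≤ Fintype.card F := Fintype.card_pos
  set B := {x : ProjectiveSpecialLinearGroup (Fin n) F |
          P ⊓ Subgroup.map (MulAut.conj x⁻¹).toMonoidHom P ≠ ⊥} with hBdef
  have hB : ∀ x ∈ B, ∃ z w : P, z ^ p = 1 ∧ z ≠ 1 ∧ x * z.1 = w.1 * x := by
    intro x hx
    obtain ⟨⟨y, hy⟩, hy1⟩ := Subgroup.ne_bot_iff_exists_ne_one.1 hx
    have hy1' : y ≠ 1 := fun h => hy1 (Subtype.ext h)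
    obtain ⟨k, hk⟩ := (IsPGroup.iff_orderOf.1 hP) ⟨y, hy.1⟩
    rw [Subgroup.orderOf_mk] at hk
    have hk0 : k ≠ 0 := by
      rintro rfl
      rw [pow_zero, orderOf_eq_one_iff] at hk
      exact hy1' hk
    have hyp : y ^ (p^(k-1)) ∈ P ⊓ Subgroup.map (MulAut.conj x⁻¹).toMonoidHom P := Subgroup.pow_mem _ hy _
    obtain ⟨h1, w, hw, hwz⟩ := hyp
    refine ⟨⟨_, h1⟩, ⟨w, hw⟩, ?_, ?_, ?_⟩
    · apply Subtype.ext
      show (y ^ (p^(k-1)))^p = 1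
      rw [← pow_mul, ← pow_succ, Nat.sub_add_cancel (by omega), ← hk, pow_orderOf_eq_one]
    · intro h
      have h2 : y ^ (p^(k-1)) = 1 := congrArg Subtype.val h
      have h3 := orderOf_dvd_of_pow_eq_one h2
      rw [hk, Nat.pow_dvd_pow_iff_le_right hp.one_lt] at h3
      omega
    · show x * y ^ (p^(k-1)) = w * x
      rw [← hwz]
      show x * (x⁻¹ * w * x⁻¹⁻¹) = w * x
      group
  let B1 : Set (ProjectiveSpecialLinearGroup (Fin n) F) :=
    {x | ∃ i : {z : P // RT p z.1} × {z : P // RT p z.1}, (i.1.1 ^ p = 1 ∧ i.1.1 ≠ 1) ∧ x * i.1.1.1 = i.2.1.1 * x}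
  let B2 : Set (ProjectiveSpecialLinearGroup (Fin n) F) :=
    {x | ∃ i : P × P, (i.1 ^ p = 1 ∧ i.1 ≠ 1 ∧ ¬ RT p i.1.1) ∧ x * i.1.1 = i.2.1 * x}
  have hsub : B ⊆ B1 ∪ B2 := by
    intro x hx
    obtain ⟨z, w, h1, h2, h3⟩ := hB x hx
    by_cases hr : RT p z.1
    · left
      have hw : RT p w.1 := by
        have := RT_conj x hr
        rwa [h3, mul_inv_cancel_right] at this
      exact ⟨(⟨z, hr⟩, ⟨w, hw⟩), ⟨h1, h2⟩, h3⟩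
    · right
      exact ⟨(z, w), ⟨h1, h2, hr⟩, h3⟩
  have hc : Nat.card B ≤ Nat.card B1 + Nat.card B2 := by
    rw [Nat.card_coe_set_eq, Nat.card_coe_set_eq, Nat.card_coe_set_eq]
    exact (Set.ncard_le_ncard hsub (Set.toFinite _)).trans (Set.ncard_union_le _ _)
  have c1 : Nat.card B1 ≤ Nat.card ({z : P // RT p z.1} × {z : P // RT p z.1}) * (n * Fintype.card F ^ (n^2 + 2 - 2*n)) := by
    apply cover (I := {z : P // RT p z.1} × {z : P // RT p z.1}) B1 (fun i x => (i.1.1 ^ p = 1 ∧ i.1.1 ≠ 1) ∧ x * i.1.1.1 = i.2.1.1 * x) _ (fun x hx => hx)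
    rintro ⟨z, w⟩
    by_cases h : z.1 ^ p = 1 ∧ z.1 ≠ 1
    · simp only [h, and_self, true_and, ne_eq, not_false_eq_true]
      obtain ⟨g, hg, hd⟩ := type_dim hpF hn z.1.1 (congrArg Subtype.val h.1) (fun h' => h.2 (Subtype.ext h'))
      refine (cent_count (by omega) _ _ g hg).trans ?_
      gcongr
      omega
    · simp [h]
  have c2 : Nat.card B2 ≤ Nat.card (P × P) * (n * Fintype.card F ^ (min (n^2 - 2*n) (n^2 + 10 - 4*n))) := by
    apply cover (I := P × P) B2 (fun i x => (i.1 ^ p = 1 ∧ i.1 ≠ 1 ∧ ¬ RT p i.1.1) ∧ x * i.1.1 = i.2.1 * x) _ (fun x hx => hx)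
    rintro ⟨z, w⟩
    by_cases h : z ^ p = 1 ∧ z ≠ 1 ∧ ¬ RT p z.1
    · simp only [h, and_self, true_and, ne_eq, not_false_eq_true]
      obtain ⟨g, hg, hd⟩ := type_dim hpF hn z.1 (congrArg Subtype.val h.1) (fun h' => h.2.1 (Subtype.ext h'))
      refine (cent_count (by omega) _ _ g hg).trans ?_
      have hd2 := hd.resolve_left (fun h' => h.2.2 h'.1)
      gcongr
      omega
    · simp [h]
  have hR := RT_count hp hpF P hP
  rw [Nat.card_prod, ← sq] at c1 c2
  refine hc.trans (Nat.add_le_add (c1.trans ?_) c2)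
  gcongr
end psl2

section fin
variable {F : Type*} [Field F] [Fintype F] {n : ℕ}

lemma card_SL (hn : 1 ≤ n) : Nat.card (Matrix.SpecialLinearGroup (Fin n) F) * (Fintype.card F - 1) = cGL (Fintype.card F) n := by
  classical
  have h0 : Nat.card (GL (Fin n) F) = cGL (Fintype.card F) n := Matrix.card_GL_field n
  let d : GL (Fin n) F →* Fˣ := Matrix.GeneralLinearGroup.det
  have hsurj : Function.Surjective d := by
    intro c
    let v : Fin n → F := Pi.mulSingle ⟨0, hn⟩ (c : F)
    have hv : (Matrix.diagonal v).det = c := by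
      rw [Matrix.det_diagonal]
      rw [Finset.prod_eq_single (⟨0, hn⟩ : Fin n)]
      · exact Pi.mulSingle_eq_same _ _
      · intro b _ hb
        exact Pi.mulSingle_eq_of_ne hb _
      · intro h; exact absurd (Finset.mem_univ _) h
    refine ⟨Matrix.GeneralLinearGroup.mkOfDetNeZero (Matrix.diagonal v) (by rw [hv]; exact c.ne_zero), ?_⟩
    apply Units.ext
    exact hv
  have h1 := Subgroup.card_eq_card_quotient_mul_card_subgroup d.ker
  rw [Nat.card_congr (QuotientGroup.quotientKerEquivOfSurjective d hsurj).toEquiv, Nat.card_units,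
    Nat.card_eq_fintype_card (α := F)] at h1
  have h2 : Nat.card (Matrix.SpecialLinearGroup (Fin n) F) = Nat.card d.ker := by
    apply Nat.card_congr
    refine Equiv.ofBijective (fun g => (⟨Matrix.SpecialLinearGroup.toGL g, Units.ext (by exact g.2)⟩ : d.ker)) ⟨?_, ?_⟩
    · intro g g' h
      exact Matrix.SpecialLinearGroup.toGL_injective (congrArg Subtype.val h)
    · rintro ⟨g, hg⟩
      refine ⟨⟨g.1, congrArg Units.val hg⟩, ?_⟩
      apply Subtype.ext
      apply Units.ext
      rfl
  rw [h2, ← h0, h1, mul_comm]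

lemma card_PSL : Nat.card (ProjectiveSpecialLinearGroup (Fin n) F) *
    Nat.card (Subgroup.center (Matrix.SpecialLinearGroup (Fin n) F)) = Nat.card (Matrix.SpecialLinearGroup (Fin n) F) :=
  (Subgroup.card_eq_card_quotient_mul_card_subgroup _).symm

lemma PSL_lower (hn : 1 ≤ n) : (Fintype.card F) ^ (n^2) ≤
    4 * (Nat.card (ProjectiveSpecialLinearGroup (Fin n) F) * n * Fintype.card F) := by
  have h1 := cGL_ge (Fintype.card F) n Fintype.one_lt_card
  rw [← card_SL hn, ← card_PSL] at h1
  refine h1.trans ?_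
  gcongr
  · exact center_card hn
  · omega

lemma PSL_upper (hn : 1 ≤ n) : Nat.card (ProjectiveSpecialLinearGroup (Fin n) F) ≤ (Fintype.card F) ^ (n^2) := by
  refine le_trans ?_ (cGL_le _ n)
  rw [← card_SL hn, ← card_PSL, mul_assoc]
  apply Nat.le_mul_of_pos_right
  have : 1 < Fintype.card F := Fintype.one_lt_card
  exact Nat.mul_pos Nat.card_pos (by omega)

lemma sylow_bound {p : ℕ} (hp : p.Prime) (hpq : ¬ p ∣ Fintype.card F) (hn : 1 ≤ n)
    (P : Sylow p (ProjectiveSpecialLinearGroup (Fin n) F)) :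
    (Nat.card (P : Subgroup (ProjectiveSpecialLinearGroup (Fin n) F)) : ℝ)^2 ≤
      4 * Aq (Fintype.card F) ^ n * (Fintype.card F : ℝ)^(2*n-2) := by
  have : Fact p.Prime := ⟨hp⟩
  have hq : 2 ≤ Fintype.card F := Fintype.one_lt_card
  have hS : Nat.card (Matrix.SpecialLinearGroup (Fin n) F) ≠ 0 := Nat.card_pos.ne'
  have h1 := N1 p (Fintype.card F) n hp hpq hq hn (p ^ padicValNat p (Nat.card (Matrix.SpecialLinearGroup (Fin n) F))) (by
    rw [← pow_add, ← padicValNat.mul hS (by omega), card_SL hn, ← vGL p _ n hp hpq hq]; rfl)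
  refine le_trans ?_ h1
  have h2 : Nat.card (P : Subgroup (ProjectiveSpecialLinearGroup (Fin n) F)) ≤ p ^ padicValNat p (Nat.card (Matrix.SpecialLinearGroup (Fin n) F)) := by
    rw [Sylow.card_eq_multiplicity, Nat.factorization_def _ hp]
    apply Nat.pow_le_pow_right hp.pos
    rw [← card_PSL, padicValNat.mul Nat.card_pos.ne' Nat.card_pos.ne']
    omega
  gcongr

lemma Aq_le (q : ℕ) : Aq q ≤ 4 := by unfold Aq; split_ifs <;> norm_num
lemma Aq_pos (q : ℕ) : 0 < Aq q := by unfold Aq; split_ifs <;> norm_num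
lemma Aq_sq (q : ℕ) (hq : 2 ≤ q) : Aq q ≤ 9/16 * (q:ℝ)^2 := by
  unfold Aq
  split_ifs with h
  · subst h; norm_num
  · have : (3:ℝ) ≤ q := by exact_mod_cast (show 3 ≤ q by omega)
    nlinarith

lemma T1 (q n : ℕ) (hq : 2 ≤ q) (hn : 3 ≤ n) :
    ((((n+1)*(q+1))^2 * (n * q^(n^2+2-2*n)) : ℕ) : ℝ) * (4 * n * q * q) ≤ 4096 * (n:ℝ)^4 * (9/16)^n * (q:ℝ)^(n^2) := by
  have hqr : (2:ℝ) ≤ q := by exact_mod_cast hq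
  have hnr : (3:ℝ) ≤ n := by exact_mod_cast hn
  obtain ⟨m, rfl⟩ : ∃ m, n = m + 3 := ⟨n-3, by omega⟩
  have e1 : (q:ℝ)^((m+3)^2) = (q:ℝ)^((m+3)^2+2-2*(m+3)) * ((q:ℝ)^2)^m * (q:ℝ)^4 := by
    rw [← pow_mul, ← pow_add, ← pow_add]; congr 1
    have : 2*(m+3) ≤ (m+3)^2 + 2 := by nlinarith
    omega
  rw [e1]
  push_cast
  set N : ℝ := (m:ℝ) + 3 with hN
  have hN3 : 3 ≤ N := by push_cast at hnr; exact hnr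
  set X := (q:ℝ)^((m+3)^2+2-2*(m+3))
  have hX : 0 < X := by positivity
  have h1 : (N+1)^2 ≤ 4*N^2 := by nlinarith
  have h2 : ((q:ℝ)+1)^2 ≤ 4*(q:ℝ)^2 := by nlinarith
  have h3 : (1:ℝ) ≤ (9/16)^m * ((q:ℝ)^2)^m := by
    rw [← mul_pow]; apply one_le_pow₀; nlinarith
  calc ((N+1)*((q:ℝ)+1))^2 * (N * X) * (4*N*q*q) = (N+1)^2 * ((q:ℝ)+1)^2 * (4 * N^2 * (q:ℝ)^2 * X) := by ring
    _ ≤ (4*N^2) * (4*(q:ℝ)^2) * (4 * N^2 * (q:ℝ)^2 * X) := by gcongr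
    _ = 64 * N^4 * (q:ℝ)^4 * X * 1 := by ring
    _ ≤ 64 * N^4 * (q:ℝ)^4 * X * ((9/16)^m * ((q:ℝ)^2)^m) := by gcongr
    _ = 64 * (N^4 * (q:ℝ)^4 * X * ((9/16)^m * ((q:ℝ)^2)^m)) := by ring
    _ ≤ (4096 * (9/16)^3) * (N^4 * (q:ℝ)^4 * X * ((9/16)^m * ((q:ℝ)^2)^m)) := by
        gcongr; norm_num
    _ = _ := by ring

lemma T2aux (q n : ℕ) (hq : 2 ≤ q) (hn : 3 ≤ n) :
    Aq q ^ n * (q:ℝ)^(2*n) * (q:ℝ)^(min (n^2-2*n) (n^2+10-4*n)) ≤ 32768 * (9/16)^n * (q:ℝ)^(n^2) := by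
  have hqr : (2:ℝ) ≤ q := by exact_mod_cast hq
  have hq1 : (1:ℝ) ≤ q := by linarith
  have hA := Aq_le q
  have hA0 := Aq_pos q
  by_cases h5 : n ≤ 5
  · have h1 : (q:ℝ)^(2*n) * (q:ℝ)^(min (n^2-2*n) (n^2+10-4*n)) ≤ (q:ℝ)^(n^2) := by
      rw [← pow_add]
      apply pow_le_pow_right₀ hq1
      have : 2*n ≤ n^2 := by nlinarith
      omega
    have h2 : Aq q ^ n ≤ 32768 * (9/16)^n := by
      calc Aq q ^ n ≤ 4^n := by gcongr
        _ ≤ _ := by interval_cases n <;> norm_num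
    rw [mul_assoc]
    gcongr
  · obtain ⟨m, rfl⟩ : ∃ m, n = m + 5 := ⟨n-5, by omega⟩
    have h1 : (q:ℝ)^(2*(m+5)) * (q:ℝ)^(min ((m+5)^2-2*(m+5)) ((m+5)^2+10-4*(m+5))) * ((q:ℝ)^2)^m ≤ (q:ℝ)^((m+5)^2) := by
      rw [← pow_mul, ← pow_add, ← pow_add]
      apply pow_le_pow_right₀ hq1
      have : 4*(m+5) ≤ (m+5)^2 := by nlinarith
      omega
    have h2 : Aq q ^ (m+5) ≤ 32768 * (9/16)^(m+5) * ((q:ℝ)^2)^m := by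
      calc Aq q ^ (m+5) = Aq q ^ m * Aq q ^ 5 := by ring
        _ ≤ (9/16 * (q:ℝ)^2)^m * 4^5 := by gcongr; exact Aq_sq q hq
        _ ≤ (9/16 * (q:ℝ)^2)^m * (32768 * (9/16)^5) := by gcongr; norm_num
        _ = _ := by rw [mul_pow]; ring
    calc _ ≤ (32768 * (9/16)^(m+5) * ((q:ℝ)^2)^m) * (q:ℝ)^(2*(m+5)) * (q:ℝ)^(min ((m+5)^2-2*(m+5)) ((m+5)^2+10-4*(m+5))) := by gcongr
      _ = 32768 * (9/16)^(m+5) * ((q:ℝ)^(2*(m+5)) * (q:ℝ)^(min ((m+5)^2-2*(m+5)) ((m+5)^2+10-4*(m+5))) * ((q:ℝ)^2)^m) := by ring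
      _ ≤ _ := by gcongr

lemma Q_bound {p : ℕ} (hp : p.Prime) (hpq : ¬ p ∣ Fintype.card F) (hn : 3 ≤ n)
    (P : Sylow p (ProjectiveSpecialLinearGroup (Fin n) F)) :
    (Nat.card {x : ProjectiveSpecialLinearGroup (Fin n) F |
          (P : Subgroup (ProjectiveSpecialLinearGroup (Fin n) F)) ⊓
            Subgroup.map (MulAut.conj x⁻¹).toMonoidHom
              (P : Subgroup (ProjectiveSpecialLinearGroup (Fin n) F)) ≠ ⊥} : ℝ)
        / (Nat.card (ProjectiveSpecialLinearGroup (Fin n) F) : ℝ) ≤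
      1000000 * ((n:ℝ)^4 * (9/16)^n) / Fintype.card F := by
  have hq : 2 ≤ Fintype.card F := Fintype.one_lt_card
  have hpF : (p : F) ≠ 0 := by
    intro h
    obtain ⟨r, hr⟩ := CharP.exists F
    have h1 : r ∣ p := (CharP.cast_eq_zero_iff F r p).1 h
    have h2 : r ∣ Fintype.card F := (CharP.cast_eq_zero_iff F r _).1 (FiniteField.cast_card_eq_zero F)
    rcases (Nat.dvd_prime hp).1 h1 with h3 | h3
    · subst h3; exact CharP.char_ne_one F 1 rfl
    · subst h3; exact hpq h2
  have hb := bad_count hp hpF hn (P : Subgroup (ProjectiveSpecialLinearGroup (Fin n) F)) P.isPGroup'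
  have hs := sylow_bound hp hpq (by omega) P
  have hl := PSL_lower (F := F) (n := n) (by omega)
  have hG0 : 0 < Nat.card (ProjectiveSpecialLinearGroup (Fin n) F) := Nat.card_pos
  generalize Nat.card {x : ProjectiveSpecialLinearGroup (Fin n) F |
          (P : Subgroup (ProjectiveSpecialLinearGroup (Fin n) F)) ⊓
            Subgroup.map (MulAut.conj x⁻¹).toMonoidHom
              (P : Subgroup (ProjectiveSpecialLinearGroup (Fin n) F)) ≠ ⊥} = b at *
  generalize Nat.card (P : Subgroup (ProjectiveSpecialLinearGroup (Fin n) F)) = c at *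
  generalize Nat.card (ProjectiveSpecialLinearGroup (Fin n) F) = G at *
  generalize Fintype.card F = q at *
  have hqr : (2:ℝ) ≤ q := by exact_mod_cast hq
  have hq0 : (0:ℝ) < q := by linarith
  have hnr : (3:ℝ) ≤ n := by exact_mod_cast hn
  have hn0 : (0:ℝ) < n := by linarith
  have hGr : (0:ℝ) < G := by exact_mod_cast hG0
  have t1 := T1 q n hq hn
  have t2 := T2aux q n hq hn
  have hA0 := Aq_pos q
  set D := min (n^2-2*n) (n^2+10-4*n)
  have hbr : (b:ℝ) ≤ ((((n+1)*(q+1))^2 * (n * q^(n^2+2-2*n)) : ℕ) : ℝ) + (c:ℝ)^2 * (n * (q:ℝ)^D) := by exact_mod_cast hb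
  have hlr : (q:ℝ)^(n^2) ≤ 4 * (G * n * q) := by exact_mod_cast hl
  have t3 : (c:ℝ)^2 * (n * (q:ℝ)^D) * (4 * n * q * q) ≤ 524288 * (n:ℝ)^4 * (9/16)^n * (q:ℝ)^(n^2) := by
    have e : (q:ℝ)^(2*n) = (q:ℝ)^(2*n-2) * q^2 := by rw [← pow_add]; congr 1; omega
    have h4 : (n:ℝ)^2 ≤ (n:ℝ)^4 := pow_le_pow_right₀ (by linarith) (by norm_num)
    calc (c:ℝ)^2 * (n * (q:ℝ)^D) * (4 * n * q * q) ≤ (4 * Aq q ^ n * (q:ℝ)^(2*n-2)) * (n * (q:ℝ)^D) * (4 * n * q * q) := by gcongr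
      _ = 16 * (n:ℝ)^2 * (Aq q ^ n * (q:ℝ)^(2*n) * (q:ℝ)^D) := by rw [e]; ring
      _ ≤ 16 * (n:ℝ)^4 * (32768 * (9/16)^n * (q:ℝ)^(n^2)) := by gcongr
      _ = _ := by ring
  set K : ℝ := (n:ℝ)^4 * (9/16)^n with hK
  have hK0 : 0 < K := by positivity
  have hY : 0 < (q:ℝ)^(n^2) := by positivity
  have h5 : (b:ℝ) * (4 * n * q * q) ≤ 1000000 * K * (q:ℝ)^(n^2) := by
    calc (b:ℝ) * (4 * n * q * q) ≤ (((((n+1)*(q+1))^2 * (n * q^(n^2+2-2*n)) : ℕ) : ℝ) + (c:ℝ)^2 * (n * (q:ℝ)^D)) * (4 * n * q * q) := by gcongr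
      _ ≤ 4096 * (n:ℝ)^4 * (9/16)^n * (q:ℝ)^(n^2) + 524288 * (n:ℝ)^4 * (9/16)^n * (q:ℝ)^(n^2) := by rw [add_mul]; linarith
      _ = 528384 * (K * (q:ℝ)^(n^2)) := by rw [hK]; ring
      _ ≤ 1000000 * (K * (q:ℝ)^(n^2)) := by gcongr; norm_num
      _ = _ := by ring
  have h6 : (b:ℝ) * (4 * n * q * q) ≤ 1000000 * K * (4 * (G * n * q)) := h5.trans (by gcongr)
  rw [div_le_div_iff₀ hGr hq0]
  have h7 : (4 * n * q : ℝ) * (b * q) ≤ (4 * n * q) * (1000000 * K * G) := by linarith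
  exact le_of_mul_le_mul_left h7 (by positivity)

lemma omega_bound (G q n : ℕ) (hG : G ≠ 0) (hG2 : G ≤ q^(n^2)) (hq : 2 ≤ q) (hn : 1 ≤ n) :
    G.primeFactors.card ≤ n^2 * (Nat.log 2 q + 1) := by
  have h1 : 2 ^ G.primeFactors.card ≤ G := by
    calc 2 ^ G.primeFactors.card ≤ ∏ p ∈ G.primeFactors, p := by
          apply Finset.pow_card_le_prod
          intro p hp
          exact (Nat.prime_of_mem_primeFactors hp).two_le
      _ ≤ G := Nat.le_of_dvd (Nat.pos_of_ne_zero hG) (Nat.prod_primeFactors_dvd G)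
  have h2 : q < 2 ^ (Nat.log 2 q + 1) := Nat.lt_pow_succ_log_self (by norm_num) q
  have h3 : 2 ^ G.primeFactors.card ≤ 2 ^ ((Nat.log 2 q + 1) * n^2) := by
    rw [pow_mul]
    exact (h1.trans hG2).trans (Nat.pow_le_pow_left h2.le _)
  have := (Nat.pow_le_pow_iff_right (by norm_num : 1 < 2)).1 h3
  linarith
end fin


/-- Asymptotics for `β(G)` (Theorem 5.1(iii) for linear groups, `n ≥ 3`): for every
`ε > 0` there is `N` such that whenever `G = PSLₙ(q)` with `n ≥ 3`, `q = r^f` a power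
of a prime `r`, and `|G| ≥ N`, the sum of `Q_p(G)` over the prime divisors `p ≠ r`
of `|G|` is less than `ε`. -/
theorem stmt17 : ∀ ε : ℝ, 0 < ε → ∃ N : ℕ,
    ∀ (r f n q : ℕ), r.Prime → 0 < f → q = r ^ f → 3 ≤ n →
    ∀ (F : Type) [Field F] [Fintype F], Fintype.card F = q →
    ∀ H : (p : ℕ) → Sylow p (ProjectiveSpecialLinearGroup (Fin n) F),
    N ≤ Nat.card (ProjectiveSpecialLinearGroup (Fin n) F) →
    ∑ p ∈ (Nat.card (ProjectiveSpecialLinearGroup (Fin n) F)).primeFactors.filter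
        (fun p => p ≠ r),
      (Nat.card {x : ProjectiveSpecialLinearGroup (Fin n) F |
          (H p : Subgroup (ProjectiveSpecialLinearGroup (Fin n) F)) ⊓
            Subgroup.map (MulAut.conj x⁻¹).toMonoidHom
              (H p : Subgroup (ProjectiveSpecialLinearGroup (Fin n) F)) ≠ ⊥} : ℝ)
        / (Nat.card (ProjectiveSpecialLinearGroup (Fin n) F) : ℝ)
      < ε := by
  intro ε hε
  have ta : Filter.Tendsto (fun n : ℕ => (n:ℝ)^6 * (9/16:ℝ)^n) Filter.atTop (nhds 0) :=
    tendsto_pow_const_mul_const_pow_of_abs_lt_one 6 (by rw [abs_of_pos] <;> norm_num)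
  have tb1 : Filter.Tendsto (fun n : ℕ => (n:ℝ)^1 * (1/2:ℝ)^n) Filter.atTop (nhds 0) :=
    tendsto_pow_const_mul_const_pow_of_abs_lt_one 1 (by rw [abs_of_pos] <;> norm_num)
  have tb2 : Filter.Tendsto (fun n : ℕ => (1/2:ℝ)^n) Filter.atTop (nhds 0) :=
    tendsto_pow_atTop_nhds_zero_of_lt_one (by norm_num) (by norm_num)
  have tb : Filter.Tendsto (fun n : ℕ => (n:ℝ)^1 * (1/2:ℝ)^n + (1/2:ℝ)^n) Filter.atTop (nhds 0) := by
    simpa using tb1.add tb2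
  obtain ⟨A, hA⟩ := ta.bddAbove_range
  have hA' : ∀ n : ℕ, (n:ℝ)^6 * (9/16:ℝ)^n ≤ A := fun n => hA ⟨n, rfl⟩
  have hA0 : 0 < A := lt_of_lt_of_le (by norm_num) (hA' 1)
  have hε1 : 0 < ε / 1000000 := by positivity
  have hε2 : 0 < ε / (1000000 * A) := by positivity
  obtain ⟨n0, hn0⟩ := Filter.eventually_atTop.1 (ta.eventually (gt_mem_nhds hε1))
  obtain ⟨k0, hk0⟩ := Filter.eventually_atTop.1 (tb.eventually (gt_mem_nhds hε2))
  refine ⟨(2^k0) ^ (n0^2) + 1, ?_⟩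
  intro r f n q hr hf hqr hn F _ _ hF H hN
  subst hF
  have hq : 2 ≤ Fintype.card F := Fintype.one_lt_card
  have hup := PSL_upper (F := F) (n := n) (by omega)
  have hsum : ∀ p ∈ (Nat.card (ProjectiveSpecialLinearGroup (Fin n) F)).primeFactors.filter (fun p => p ≠ r),
      (Nat.card {x : ProjectiveSpecialLinearGroup (Fin n) F |
          (H p : Subgroup (ProjectiveSpecialLinearGroup (Fin n) F)) ⊓
            Subgroup.map (MulAut.conj x⁻¹).toMonoidHom
              (H p : Subgroup (ProjectiveSpecialLinearGroup (Fin n) F)) ≠ ⊥} : ℝ)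
        / (Nat.card (ProjectiveSpecialLinearGroup (Fin n) F) : ℝ) ≤
      1000000 * ((n:ℝ)^4 * (9/16)^n) / Fintype.card F := by
    intro p hp
    rw [Finset.mem_filter] at hp
    have hpp := Nat.prime_of_mem_primeFactors hp.1
    apply Q_bound hpp _ hn
    intro hd
    rw [hqr] at hd
    exact hp.2 ((Nat.prime_dvd_prime_iff_eq hpp hr).1 (hpp.dvd_of_dvd_pow hd))
  refine lt_of_le_of_lt (Finset.sum_le_card_nsmul _ _ _ hsum) ?_
  have hw := omega_bound _ _ n (Nat.card_pos (α := ProjectiveSpecialLinearGroup (Fin n) F)).ne' hup hq (by omega)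
  have hw2 : (((Nat.card (ProjectiveSpecialLinearGroup (Fin n) F)).primeFactors.filter (fun p => p ≠ r)).card : ℝ) ≤
      (n:ℝ)^2 * (Nat.log 2 (Fintype.card F) + 1) := by
    exact_mod_cast (Finset.card_filter_le _ _).trans hw
  rw [nsmul_eq_mul]
  have hlog : 2 ^ Nat.log 2 (Fintype.card F) ≤ Fintype.card F := Nat.pow_log_le_self 2 (by omega)
  have hklog : ∀ k, 2^k ≤ Fintype.card F → k ≤ Nat.log 2 (Fintype.card F) := fun k hk => Nat.le_log_of_pow_le (by norm_num) hk
  generalize Nat.card (ProjectiveSpecialLinearGroup (Fin n) F) = G at *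
  generalize (G.primeFactors.filter (fun p => p ≠ r)).card = ω at *
  clear hsum H
  generalize Fintype.card F = q at *
  generalize hk : Nat.log 2 q = k at *
  have hq0 : (0:ℝ) < q := by exact_mod_cast (show 0 < q by omega)
  have hlogr : (2:ℝ)^k ≤ q := by exact_mod_cast hlog
  set a : ℝ := (n:ℝ)^6 * (9/16:ℝ)^n with ha
  have ha0 : 0 ≤ a := by positivity
  have hbq : ((k:ℝ) + 1) / q ≤ (k:ℝ)^1 * (1/2:ℝ)^k + (1/2:ℝ)^k := by
    calc ((k:ℝ)+1)/q ≤ ((k:ℝ)+1)/2^k := by gcongr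
      _ = _ := by rw [one_div, inv_pow, div_eq_mul_inv]; ring
  have hbq0 : 0 ≤ ((k:ℝ) + 1) / q := by positivity
  have hb1 : ((k:ℝ) + 1) / q ≤ 1 := by
    rw [div_le_one hq0]
    have : k + 1 ≤ 2^k := Nat.lt_two_pow_self
    have : ((k:ℝ)+1) ≤ 2^k := by exact_mod_cast this
    linarith
  have htot : (ω:ℝ) * (1000000 * ((n:ℝ)^4 * (9/16)^n) / q) ≤ 1000000 * a * (((k:ℝ)+1)/q) := by
    calc (ω:ℝ) * (1000000 * ((n:ℝ)^4 * (9/16)^n) / q) ≤ ((n:ℝ)^2 * (k+1)) * (1000000 * ((n:ℝ)^4 * (9/16)^n) / q) := by gcongr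
      _ = _ := by rw [ha]; ring
  refine lt_of_le_of_lt htot ?_
  by_cases h1 : n0 ≤ n
  · have h2 : a < ε / 1000000 := hn0 n h1
    rw [lt_div_iff₀ (by norm_num)] at h2
    calc 1000000 * a * (((k:ℝ)+1)/q) ≤ 1000000 * a * 1 := by gcongr
      _ < ε := by linarith
  by_cases h2 : 2^k0 ≤ q
  · have h3 := lt_of_le_of_lt hbq (hk0 k (hklog k0 h2))
    rw [lt_div_iff₀ (by positivity)] at h3
    calc 1000000 * a * (((k:ℝ)+1)/q) ≤ 1000000 * A * (((k:ℝ)+1)/q) := by gcongr; exact hA' n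
      _ < ε := by linarith
  · exfalso
    have h3 : q^(n^2) ≤ (2^k0)^(n0^2) := by
      calc q^(n^2) ≤ (2^k0)^(n^2) := Nat.pow_le_pow_left (by omega) _
        _ ≤ (2^k0)^(n0^2) := Nat.pow_le_pow_right (by positivity) (Nat.pow_le_pow_left (by omega) _)
    omega
end
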